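/- arXiv:1506.03741 — 4 statements merged into one kernel-verified Lean document; each statement's English description precedes it below -/
import Mathlib

section
/- There exists an absolute constant C > 0 such that for all η with 0 < η ≤ 1 and all x ∈ ℝ (away from the removable singularities, where K_η is understood via its continuous extension), |K_η″(x)| ≤ C·min{1, η^{−3}|x|^{−3}}. -/
open Real MeasureTheory

noncomputable def auxJ (k : ℕ) (x : ℝ) : ℝ :=
  ∫ t in (0:ℝ)..1, t ^ k * Real.cos (t * x + k * (π / 2))

lemma auxJ_bound (k : ℕ) (x : ℝ) : |auxJ k x| ≤ 1 := by
  have h := intervalIntegral.norm_integral_le_of_norm_le_const (a := (0:ℝ)) (b := 1) (C := 1)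
    (f := fun t : ℝ => t ^ k * Real.cos (t * x + k * (π / 2))) (by
      intro t ht
      rw [Set.uIoc_of_le zero_le_one] at ht
      rw [Real.norm_eq_abs, abs_mul, abs_pow, abs_of_pos ht.1]
      exact mul_le_one₀ (pow_le_one₀ ht.1.le ht.2) (abs_nonneg _) (Real.abs_cos_le_one _))
  simpa [auxJ] using h

lemma auxJ_deriv (k : ℕ) (x : ℝ) : HasDerivAt (auxJ k) (auxJ (k + 1) x) x := by
  have h := intervalIntegral.hasDerivAt_integral_of_dominated_loc_of_deriv_le
    (μ := volume) (a := (0:ℝ)) (b := 1) (x₀ := x) (s := Set.univ) (bound := fun _ => 1)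
    (F := fun x t : ℝ => t ^ k * Real.cos (t * x + k * (π / 2)))
    (F' := fun x t : ℝ => t ^ (k+1) * Real.cos (t * x + (k + 1 : ℕ) * (π / 2)))
    Filter.univ_mem
    (Filter.Eventually.of_forall fun y => (by fun_prop : Continuous _).aestronglyMeasurable)
    ((by fun_prop : Continuous _).intervalIntegrable _ _)
    ((by fun_prop : Continuous _).aestronglyMeasurable)
    (Filter.Eventually.of_forall (by
      intro t ht y _
      rw [Set.uIoc_of_le zero_le_one] at ht
      rw [Real.norm_eq_abs, abs_mul, abs_pow, abs_of_pos ht.1]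
      exact mul_le_one₀ (pow_le_one₀ ht.1.le ht.2) (abs_nonneg _) (Real.abs_cos_le_one _)))
    (by simp)
    (Filter.Eventually.of_forall (by
      intro t ht y _
      have h1 : HasDerivAt (fun y : ℝ => t * y + k * (π / 2)) t y := by
        simpa using ((hasDerivAt_id y).const_mul t).add_const (k * (π / 2))
      have h2 := (h1.cos).const_mul (t ^ k)
      refine h2.congr_deriv ?_
      have : t * y + ((k + 1 : ℕ) : ℝ) * (π / 2) = (t * y + k * (π / 2)) + π / 2 := by
        push_cast; ring
      rw [this, Real.cos_add_pi_div_two]; ring))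
  exact h.2

lemma auxJ_zero (x : ℝ) : x * auxJ 0 x = Real.sin x := by
  have h := intervalIntegral.mul_integral_comp_mul_right (a := (0:ℝ)) (b := 1) (f := Real.cos) x
  simpa [auxJ] using h

lemma aux_add3 {a b c A B C : ℝ} (h1 : |a| ≤ A) (h2 : |b| ≤ B) (h3 : |c| ≤ C) :
    |a + b + c| ≤ A + B + C :=
  (abs_add_three a b c).trans (by linarith)

lemma aux_mul {a b A B : ℝ} (h1 : |a| ≤ A) (h2 : |b| ≤ B) : |a * b| ≤ A * B := by
  rw [abs_mul]
  exact mul_le_mul h1 h2 (abs_nonneg _) ((abs_nonneg _).trans h1)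

/-- existence of a good smooth model -/
lemma aux_model (η : ℝ) (h0 : 0 < η) (h1 : η ≤ 1) : ∃ F F1 F2 : ℝ → ℝ,
    (∀ x, HasDerivAt F (F1 x) x) ∧ (∀ x, HasDerivAt F1 (F2 x) x) ∧
    (∀ x, |F2 x| ≤ 1140) ∧
    (∀ x, (2 * π * x * (1 - 4 * η ^ 2 * x ^ 2)) * F x =
      Real.sin (2 * π * x) + Real.sin (2 * π * (1 + η) * x)) := by
  have hpi := Real.pi_gt_three
  have hpi2 := Real.pi_lt_d2
  set a := π * (2 + η) with ha
  set b := π * η with hb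
  set c := (2 + η) * π / 4 with hc
  have hA : ∀ k x, HasDerivAt (fun x => auxJ k (a * x)) (a * auxJ (k+1) (a * x)) x := by
    intro k x
    have := (auxJ_deriv k (a * x)).comp x ((hasDerivAt_id x).const_mul a)
    refine this.congr_deriv ?_
    simp [mul_comm]
  have hP : ∀ k x, HasDerivAt (fun x => auxJ k (π / 2 + b * x))
      (b * auxJ (k+1) (π / 2 + b * x)) x := by
    intro k x
    have := (auxJ_deriv k (π / 2 + b * x)).comp x
      (((hasDerivAt_id x).const_mul b).const_add (π / 2))
    refine this.congr_deriv ?_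
    simp [mul_comm]
  have hM : ∀ k x, HasDerivAt (fun x => auxJ k (π / 2 - b * x))
      (-b * auxJ (k+1) (π / 2 - b * x)) x := by
    intro k x
    have := (auxJ_deriv k (π / 2 - b * x)).comp x
      (((hasDerivAt_id x).const_mul b).const_sub (π / 2))
    refine this.congr_deriv ?_
    simp [mul_comm]
  refine ⟨fun x => c * (auxJ 0 (a * x) * (auxJ 0 (π / 2 + b * x) + auxJ 0 (π / 2 - b * x))),
    fun x => c * (a * auxJ 1 (a * x) * (auxJ 0 (π / 2 + b * x) + auxJ 0 (π / 2 - b * x))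
      + auxJ 0 (a * x) * (b * auxJ 1 (π / 2 + b * x) + -b * auxJ 1 (π / 2 - b * x))),
    fun x => c * (a * (a * auxJ 2 (a * x)) * (auxJ 0 (π / 2 + b * x) + auxJ 0 (π / 2 - b * x))
      + 2 * ((a * auxJ 1 (a * x)) * (b * auxJ 1 (π / 2 + b * x) + -b * auxJ 1 (π / 2 - b * x)))
      + auxJ 0 (a * x) * (b * (b * auxJ 2 (π / 2 + b * x)) +
         -b * (-b * auxJ 2 (π / 2 - b * x)))),
    ?_, ?_, ?_, ?_⟩
  · intro x
    exact ((hA 0 x).mul ((hP 0 x).add (hM 0 x))).const_mul c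
  · intro x
    have := ((((hA 1 x).const_mul a).mul ((hP 0 x).add (hM 0 x))).add
      ((hA 0 x).mul (((hP 1 x).const_mul b).add ((hM 1 x).const_mul (-b))))).const_mul c
    refine this.congr_deriv ?_
    simp only [Pi.add_apply]
    ring
  · intro x
    have hc' : |c| ≤ 3 := by
      rw [abs_le]; constructor <;> nlinarith
    have ha' : |a| ≤ 10 := by
      rw [abs_le]; constructor <;> nlinarith
    have hb' : |b| ≤ 3.15 := by
      rw [abs_le]; constructor <;> nlinarith
    have hbn : |-b| ≤ 3.15 := by rwa [abs_neg]
    have add2 : ∀ {a b A B : ℝ}, |a| ≤ A → |b| ≤ B → |a + b| ≤ A + B :=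
      fun h1 h2 => (abs_add_le _ _).trans (add_le_add h1 h2)
    have J := auxJ_bound
    refine (aux_mul hc' (aux_add3
      (aux_mul (aux_mul ha' (aux_mul ha' (J _ _))) (add2 (J _ _) (J _ _)))
      (aux_mul (abs_two).le (aux_mul (aux_mul ha' (J _ _))
        (add2 (aux_mul hb' (J _ _)) (aux_mul hbn (J _ _)))))
      (aux_mul (J _ _) (add2 (aux_mul hb' (aux_mul hb' (J _ _)))
        (aux_mul hbn (aux_mul hbn (J _ _))))))).trans ?_
    norm_num
  · intro x
    have e1 := auxJ_zero (a * x)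
    have e2 := auxJ_zero (π / 2 + b * x)
    have e3 := auxJ_zero (π / 2 - b * x)
    have c2 : Real.sin (π / 2 + b * x) = Real.cos (b * x) := by
      rw [add_comm, Real.sin_add_pi_div_two]
    rw [c2] at e2
    rw [Real.sin_pi_div_two_sub] at e3
    have s1 : Real.sin (2 * π * x) = Real.sin (a * x - b * x) := by
      congr 1; rw [ha, hb]; ring
    have s2 : Real.sin (2 * π * (1 + η) * x) = Real.sin (a * x + b * x) := by
      congr 1; rw [ha, hb]; ring
    rw [s1, s2, Real.sin_add, Real.sin_sub]
    have : Real.sin (a * x) * Real.cos (b * x) - Real.cos (a * x) * Real.sin (b * x) +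
      (Real.sin (a * x) * Real.cos (b * x) + Real.cos (a * x) * Real.sin (b * x)) =
      2 * (Real.sin (a * x) * Real.cos (b * x)) := by ring
    rw [this]
    beta_reduce
    generalize auxJ 0 (π / 2 + b * x) = u at *
    generalize auxJ 0 (π / 2 - b * x) = v at *
    rw [← e1]
    generalize auxJ 0 (a * x) = w at *
    have hu : π * (1 + 2 * η * x) * u = 2 * Real.cos (b * x) := by
      rw [← e2, hb]; ring
    have hv : π * (1 - 2 * η * x) * v = 2 * Real.cos (b * x) := by
      rw [← e3, hb]; ring
    rw [ha, hc]
    linear_combination (2 + η) / 2 * π * x * w * (1 - 2 * η * x) * hu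
      + (2 + η) / 2 * π * x * w * (1 + 2 * η * x) * hv

set_option maxHeartbeats 1000000 in
lemma aux_decay (η : ℝ) (h0 : 0 < η) (h1 : η ≤ 1) (F F1 F2 : ℝ → ℝ)
    (hF : ∀ x, HasDerivAt F (F1 x) x) (hF1 : ∀ x, HasDerivAt F1 (F2 x) x)
    (hN : ∀ x, (2 * π * x * (1 - 4 * η ^ 2 * x ^ 2)) * F x =
      Real.sin (2 * π * x) + Real.sin (2 * π * (1 + η) * x))
    (x : ℝ) (hx : 1 ≤ η * |x|) : |F2 x| ≤ 1140 * (1 / (η ^ 3 * |x| ^ 3)) := by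
  have hpi := Real.pi_gt_three
  have hpi4 := Real.pi_lt_d2
  have dP : ∀ x, HasDerivAt (fun x : ℝ => 2 * π * x * (1 - 4 * η ^ 2 * x ^ 2))
      (2 * π * (1 - 12 * η ^ 2 * x ^ 2)) x := by
    intro x
    have := ((hasDerivAt_id x).const_mul (2 * π)).mul
      (((hasDerivAt_pow 2 x).const_mul (4 * η ^ 2)).const_sub 1)
    refine this.congr_deriv ?_
    simp; ring
  have dP1 : ∀ x, HasDerivAt (fun x : ℝ => 2 * π * (1 - 12 * η ^ 2 * x ^ 2))
      (-(48 * π * η ^ 2 * x)) x := by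
    intro x
    have := ((((hasDerivAt_pow 2 x).const_mul (12 * η ^ 2)).const_sub 1)).const_mul (2 * π)
    refine this.congr_deriv ?_
    simp; ring
  have dl : ∀ m x : ℝ, HasDerivAt (fun x : ℝ => m * x) m x := by
    intro m x; simpa using (hasDerivAt_id x).const_mul m
  have N1 : ∀ x, 2 * π * (1 - 12 * η ^ 2 * x ^ 2) * F x
      + 2 * π * x * (1 - 4 * η ^ 2 * x ^ 2) * F1 x =
      Real.cos (2 * π * x) * (2 * π) + Real.cos (2 * π * (1 + η) * x) * (2 * π * (1 + η)) := by
    intro x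
    have l := (dP x).mul (hF x)
    have r := ((dl (2 * π) x).sin).add ((dl (2 * π * (1 + η)) x).sin)
    refine l.unique ?_
    exact r.congr_of_eventuallyEq (Filter.Eventually.of_forall fun y => hN y)
  have N2 : ∀ x, (-(48 * π * η ^ 2 * x) * F x + 2 * π * (1 - 12 * η ^ 2 * x ^ 2) * F1 x)
      + (2 * π * (1 - 12 * η ^ 2 * x ^ 2) * F1 x
      + 2 * π * x * (1 - 4 * η ^ 2 * x ^ 2) * F2 x) =
      (-Real.sin (2 * π * x) * (2 * π)) * (2 * π)
       + (-Real.sin (2 * π * (1 + η) * x) * (2 * π * (1 + η))) * (2 * π * (1 + η)) := by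
    intro x
    have l := ((dP1 x).mul (hF x)).add ((dP x).mul (hF1 x))
    have r := (((dl (2 * π) x).cos).mul_const (2 * π)).add
      (((dl (2 * π * (1 + η)) x).cos).mul_const (2 * π * (1 + η)))
    refine l.unique ?_
    exact r.congr_of_eventuallyEq (Filter.Eventually.of_forall fun y => N1 y)
  have n0 := hN x
  have n1 := N1 x
  have n2 := N2 x
  have hxp : 0 < |x| := by
    by_contra h
    nlinarith [abs_nonneg x]
  have hx1 : 1 ≤ |x| := by nlinarith
  set w2 := η ^ 2 * x ^ 2 with hw2
  have hw2' : w2 = (η * |x|) ^ 2 := by rw [mul_pow, sq_abs]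
  have hw : 1 ≤ w2 := by rw [hw2']; nlinarith
  set T := |x| * w2 with hT
  have hTp : 0 < T := by positivity
  have hT1 : w2 ≤ T := by rw [hT]; nlinarith
  set P := 2 * π * x * (1 - 4 * η ^ 2 * x ^ 2) with hPd
  set P1 := 2 * π * (1 - 12 * η ^ 2 * x ^ 2) with hP1d
  have hP : 18 * T ≤ |P| := by
    have : P = -(2 * π * (4 * w2 - 1)) * x := by rw [hPd, hw2]; ring
    rw [this, abs_mul, abs_neg, abs_of_pos (by nlinarith), hT]
    have : 18 * w2 ≤ 2 * π * (4 * w2 - 1) := by nlinarith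
    nlinarith
  have hP1 : |P1| ≤ 104 * w2 := by
    have : P1 = 2 * π * (1 - 12 * w2) := by rw [hP1d, hw2]; ring
    rw [this, abs_le]; constructor <;> nlinarith
  have hP2 : |-(48 * π * η ^ 2 * x)| ≤ 192 * w2 := by
    rw [abs_neg, abs_mul, abs_of_pos (by positivity), hw2']
    have : π * (η ^ 2 * |x|) ≤ 4 * (η ^ 2 * |x|) := by
      apply mul_le_mul_of_nonneg_right (by linarith) (by positivity)
    have : η ^ 2 * |x| ≤ η ^ 2 * |x| ^ 2 := by
      apply mul_le_mul_of_nonneg_left _ (by positivity)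
      nlinarith
    have e : (η * |x|) ^ 2 = η ^ 2 * |x| ^ 2 := by ring
    rw [e]
    linarith
  have key : ∀ v M : ℝ, |P * v| ≤ 18 * M → |v| * T ≤ M := by
    intro v M h
    rw [abs_mul] at h
    nlinarith [mul_le_mul_of_nonneg_right hP (abs_nonneg v)]
  have small : ∀ q v A B : ℝ, 0 ≤ A → |q| ≤ A * w2 → |v| * T ≤ B → |q * v| ≤ A * B := by
    intro q v A B hA hq hv
    rw [abs_mul]
    calc |q| * |v| ≤ (A * w2) * |v| := mul_le_mul_of_nonneg_right hq (abs_nonneg _)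
      _ = A * (w2 * |v|) := by ring
      _ ≤ A * B := by
        apply mul_le_mul_of_nonneg_left _ hA
        nlinarith [mul_le_mul_of_nonneg_right hT1 (abs_nonneg v)]
  have add2 : ∀ {a b A B : ℝ}, |a| ≤ A → |b| ≤ B → |a + b| ≤ A + B :=
    fun h1 h2 => (abs_add_le _ _).trans (add_le_add h1 h2)
  have hm1 : |2 * π| ≤ 7 := by rw [abs_of_pos (by positivity)]; linarith
  have hm2 : |2 * π * (1 + η)| ≤ 14 := by rw [abs_of_pos (by positivity)]; nlinarith
  have ns : ∀ y, |-Real.sin y| ≤ 1 := fun y => by rw [abs_neg]; exact Real.abs_sin_le_one y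
  have b0 : |F x| * T ≤ 1 := by
    apply key
    rw [n0]
    exact (add2 (Real.abs_sin_le_one _) (Real.abs_sin_le_one _)).trans (by norm_num)
  have b1 : |F1 x| * T ≤ 8 := by
    apply key
    have e : P * F1 x = (Real.cos (2 * π * x) * (2 * π) +
      Real.cos (2 * π * (1 + η) * x) * (2 * π * (1 + η))) + -(P1 * F x) := by
      linear_combination n1
    rw [e]
    refine (add2 (add2 (aux_mul (Real.abs_cos_le_one _) hm1)
      (aux_mul (Real.abs_cos_le_one _) hm2))
      ((abs_neg _).le.trans (small _ _ 104 1 (by norm_num) hP1 b0))).trans (by norm_num)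
  have b2 : |F2 x| * T ≤ 1140 := by
    apply key
    have e : P * F2 x = ((-Real.sin (2 * π * x) * (2 * π)) * (2 * π)
       + (-Real.sin (2 * π * (1 + η) * x) * (2 * π * (1 + η))) * (2 * π * (1 + η)))
       + (-(-(48 * π * η ^ 2 * x) * F x) + -(P1 * F1 x) + -(P1 * F1 x)) := by
      linear_combination n2
    rw [e]
    have q := (abs_neg _).le.trans (small _ _ 104 8 (by norm_num) hP1 b1)
    refine (add2 (add2 (aux_mul (aux_mul (ns _) hm1) hm1)
      (aux_mul (aux_mul (ns _) hm2) hm2))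
      (aux_add3 ((abs_neg _).le.trans (small _ _ 192 1 (by norm_num) hP2 b0)) q q)).trans
      (by norm_num)
  rw [mul_one_div, le_div_iff₀ (by positivity)]
  have : η ^ 3 * |x| ^ 3 ≤ T := by
    have : T = η ^ 2 * |x| ^ 3 := by rw [hT, hw2']; ring
    rw [this]
    apply mul_le_mul_of_nonneg_right _ (by positivity)
    nlinarith [sq_nonneg η]
  exact (mul_le_mul_of_nonneg_left this (abs_nonneg _)).trans b2

/-- **Second-derivative bound for the kernel `K_η`.** There is an absolute constant `C > 0`
such that for `0 < η ≤ 1`, the continuous extension `K` of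
`x ↦ (sin(2πx) + sin(2π(1+η)x)) / (2πx(1 - 4η²x²))` satisfies
`|K″(x)| ≤ C · min{1, η⁻³|x|⁻³}` away from the removable singularities. -/
theorem K_eta_second_deriv_bound :
    ∃ C : ℝ, 0 < C ∧ ∀ η : ℝ, 0 < η → η ≤ 1 → ∀ K : ℝ → ℝ, Continuous K →
      (∀ x : ℝ, x ≠ 0 → x ≠ 1 / (2 * η) → x ≠ -(1 / (2 * η)) →
        K x = (Real.sin (2 * π * x) + Real.sin (2 * π * (1 + η) * x)) /
          (2 * π * x * (1 - 4 * η ^ 2 * x ^ 2))) →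
      ∀ x : ℝ, x ≠ 0 → x ≠ 1 / (2 * η) → x ≠ -(1 / (2 * η)) →
        |deriv (deriv K) x| ≤ C * min 1 (1 / (η ^ 3 * |x| ^ 3)) := by
  refine ⟨1140, by norm_num, ?_⟩
  intro η h0 h1 K _ hK x hx0 hx1 hx2
  obtain ⟨F, F1, F2, hF, hF1, hb, hN⟩ := aux_model η h0 h1
  have hKF : ∀ y : ℝ, y ≠ 0 → y ≠ 1 / (2 * η) → y ≠ -(1 / (2 * η)) → K y = F y := by
    intro y y0 y1 y2
    rw [hK y y0 y1 y2, ← hN y]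
    refine mul_div_cancel_left₀ _ ?_
    have e : 1 - 4 * η ^ 2 * y ^ 2 = -(4 * η ^ 2) * ((y - 1 / (2 * η)) * (y - -(1 / (2 * η)))) := by
      field_simp; ring
    rw [e]
    have := sub_ne_zero.2 y1
    have := sub_ne_zero.2 y2
    have := Real.pi_ne_zero
    have := h0.ne'
    refine mul_ne_zero (by positivity) (mul_ne_zero (neg_ne_zero.2 (by positivity))
      (mul_ne_zero (by assumption) (by assumption)))
  have hev : K =ᶠ[nhds x] F := by
    filter_upwards [isOpen_ne.mem_nhds hx0, isOpen_ne.mem_nhds hx1, isOpen_ne.mem_nhds hx2]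
      with y y0 y1 y2 using hKF y y0 y1 y2
  have hd : deriv (deriv K) x = F2 x := by
    rw [hev.deriv.deriv_eq]
    have : deriv F = F1 := funext fun y => (hF y).deriv
    rw [this, (hF1 x).deriv]
  rw [hd]
  rcases le_total 1 (η * |x|) with h | h
  · rw [mul_min_of_nonneg _ _ (by norm_num)]
    exact le_min (by simpa using hb x) (aux_decay η h0 h1 F F1 F2 hF hF1 hN x h)
  · rw [min_eq_left]
    · simpa using hb x
    · have : 0 < |x| := abs_pos.2 hx0
      rw [← mul_pow, le_div_iff₀ (by positivity), one_mul]
      exact pow_le_one₀ (by positivity) h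
end

section
/- For every η > 0 and every real t ≠ 0, the Fourier transform K̂_η(t) = ∫_{−∞}^{∞} K_η(x) e^{−2πitx} dx satisfies K̂_η(t) = ∫_{0}^{∞} K_η″(x)·(sin(πtx)/(πt))² dx. -/
open Real MeasureTheory Complex

theorem aux_analytic
    (η : ℝ) (hη : 0 < η) (K : ℝ → ℝ) (hK : Continuous K)
    (hKeq : ∀ x : ℝ, x ≠ 0 → x ≠ 1 / (2 * η) → x ≠ -(1 / (2 * η)) →
      K x = (Real.sin (2 * π * x) + Real.sin (2 * π * (1 + η) * x)) /
        (2 * π * x * (1 - 4 * η ^ 2 * x ^ 2))) (x : ℝ) : AnalyticAt ℝ K x := by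
  refine MeromorphicAt.analyticAt ?_ hK.continuousAt
  have h1 : MeromorphicAt (fun x : ℝ => (Real.sin (2 * π * x) + Real.sin (2 * π * (1 + η) * x)) /
        (2 * π * x * (1 - 4 * η ^ 2 * x ^ 2))) x := by
    refine MeromorphicAt.fun_div ?_ ?_
    · apply AnalyticAt.meromorphicAt
      fun_prop
    · apply AnalyticAt.meromorphicAt
      fun_prop
  refine h1.congr ?_
  have key : ∀ c : ℝ, ∀ᶠ y in nhdsWithin x {x}ᶜ, y ≠ c := by
    intro c
    by_cases h : c = x
    · subst h
      exact self_mem_nhdsWithin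
    · exact nhdsWithin_le_nhds (isOpen_ne.mem_nhds (Ne.symm h))
  filter_upwards [key 0, key (1 / (2 * η)), key (-(1 / (2 * η)))] with y h1 h2 h3
  exact (hKeq y h1 h2 h3).symm

theorem aux_dense (η : ℝ) :
    Dense ({0, 1 / (2 * η), -(1 / (2 * η))}ᶜ : Set ℝ) := by
  apply Set.Countable.dense_compl ℝ
  exact (Set.toFinite _).countable

theorem aux_even
    (η : ℝ) (K : ℝ → ℝ) (hK : Continuous K)
    (hKeq : ∀ x : ℝ, x ≠ 0 → x ≠ 1 / (2 * η) → x ≠ -(1 / (2 * η)) →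
      K x = (Real.sin (2 * π * x) + Real.sin (2 * π * (1 + η) * x)) /
        (2 * π * x * (1 - 4 * η ^ 2 * x ^ 2))) (x : ℝ) : K (-x) = K x := by
  have : (fun x => K (-x)) = K := by
    refine Continuous.ext_on (aux_dense η) (by fun_prop) hK ?_
    intro y hy
    simp only [Set.mem_compl_iff, Set.mem_insert_iff, Set.mem_singleton_iff, not_or] at hy
    obtain ⟨h1, h2, h3⟩ := hy
    have e1 := hKeq y h1 h2 h3
    have e2 := hKeq (-y) (by simpa using h1) (fun h => h3 (by linarith)) (fun h => h2 (by linarith))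
    simp only
    rw [e1, e2]
    simp only [mul_neg, Real.sin_neg, neg_sq]
    rw [← neg_add, ← neg_div_neg_eq, neg_neg]
    congr 1
    ring
  exact congrFun this x

theorem aux_mul_s8
    (η : ℝ) (hη : 0 < η) (K : ℝ → ℝ) (hK : Continuous K)
    (hKeq : ∀ x : ℝ, x ≠ 0 → x ≠ 1 / (2 * η) → x ≠ -(1 / (2 * η)) →
      K x = (Real.sin (2 * π * x) + Real.sin (2 * π * (1 + η) * x)) /
        (2 * π * x * (1 - 4 * η ^ 2 * x ^ 2))) :
    (fun x => (2 * π * x * (1 - 4 * η ^ 2 * x ^ 2)) * K x) =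
      fun x => Real.sin (2 * π * x) + Real.sin (2 * π * (1 + η) * x) := by
  refine Continuous.ext_on (aux_dense η) (by fun_prop) (by fun_prop) ?_
  intro y hy
  simp only [Set.mem_compl_iff, Set.mem_insert_iff, Set.mem_singleton_iff, not_or] at hy
  obtain ⟨h1, h2, h3⟩ := hy
  have e1 := hKeq y h1 h2 h3
  simp only
  rw [e1, mul_div_cancel₀]
  have a1 : 1 - 2 * η * y ≠ 0 := by
    intro h; apply h2; field_simp; linarith
  have a2 : 1 + 2 * η * y ≠ 0 := by
    intro h; apply h3; field_simp; linarith
  have : 1 - 4 * η ^ 2 * y ^ 2 = (1 - 2 * η * y) * (1 + 2 * η * y) := by ring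
  rw [this]
  have := Real.pi_pos.ne'
  positivity

/-- All of `p K`, `p K'`, `p K''` are bounded. -/
theorem aux_decay_s8
    (η : ℝ) (hη : 0 < η) (K K' K'' : ℝ → ℝ) 
    (h1 : ∀ x, HasDerivAt K (K' x) x) (h2 : ∀ x, HasDerivAt K' (K'' x) x)
    (hm : (fun x => (2 * π * x * (1 - 4 * η ^ 2 * x ^ 2)) * K x) =
      fun x => Real.sin (2 * π * x) + Real.sin (2 * π * (1 + η) * x)) :
    (K =O[Filter.atTop] fun x : ℝ => x ^ (-2 : ℝ)) ∧
    (K' =O[Filter.atTop] fun x : ℝ => x ^ (-2 : ℝ)) ∧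
    (K'' =O[Filter.atTop] fun x : ℝ => x ^ (-2 : ℝ)) := by
  set a := 4 * η ^ 2 with ha
  have ha0 : 0 < a := by positivity
  set α := 2 * π with hα
  set β := 2 * π * (1 + η) with hβ
  have hα0 : 0 < α := by positivity
  have hβ0 : 0 < β := by positivity
  have dp : ∀ x : ℝ, HasDerivAt (fun x : ℝ => α * x * (1 - a * x ^ 2)) (α * (1 - 3 * a * x ^ 2)) x := by
    intro x
    have := (((hasDerivAt_id x).const_mul α).mul (((hasDerivAt_pow 2 x).const_mul a).const_sub 1))
    refine this.congr_deriv ?_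
    simp; ring
  have dp' : ∀ x : ℝ, HasDerivAt (fun x : ℝ => α * (1 - 3 * a * x ^ 2)) (- (6 * α * a * x)) x := by
    intro x
    have := ((((hasDerivAt_pow 2 x).const_mul (3 * a)).const_sub 1)).const_mul α
    refine this.congr_deriv ?_
    simp; ring
  have ds : ∀ c x : ℝ, HasDerivAt (fun x : ℝ => Real.sin (c * x)) (c * Real.cos (c * x)) x := by
    intro c x
    have := ((hasDerivAt_id x).const_mul c).sin
    refine this.congr_deriv ?_
    simp; ring
  have dc : ∀ c x : ℝ, HasDerivAt (fun x : ℝ => c * Real.cos (c * x)) (-(c ^ 2 * Real.sin (c * x))) x := by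
    intro c x
    have := (((hasDerivAt_id x).const_mul c).cos).const_mul c
    refine this.congr_deriv ?_
    simp; ring
  have E0 : ∀ x, α * x * (1 - a * x ^ 2) * K x = Real.sin (α * x) + Real.sin (β * x) :=
    fun x => congrFun hm x
  have E1 : ∀ x, α * (1 - 3 * a * x ^ 2) * K x + α * x * (1 - a * x ^ 2) * K' x
      = α * Real.cos (α * x) + β * Real.cos (β * x) := by
    intro x
    have A := (dp x).mul (h1 x)
    have B := (ds α x).add (ds β x)
    have hm' : ((fun x : ℝ => α * x * (1 - a * x ^ 2)) * K) =
       ((fun x => Real.sin (α * x)) + fun x => Real.sin (β * x)) := hm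
    rw [hm'] at A
    exact A.unique B
  have E2 : ∀ x, (- (6 * α * a * x)) * K x + α * (1 - 3 * a * x ^ 2) * K' x
       + (α * (1 - 3 * a * x ^ 2) * K' x + α * x * (1 - a * x ^ 2) * K'' x)
      = -(α ^ 2 * Real.sin (α * x)) + -(β ^ 2 * Real.sin (β * x)) := by
    intro x
    have A := ((dp' x).mul (h1 x)).add ((dp x).mul (h2 x))
    have B := (dc α x).add (dc β x)
    have hm' : ((fun x : ℝ => α * (1 - 3 * a * x ^ 2)) * K + (fun x : ℝ => α * x * (1 - a * x ^ 2)) * K') =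
       ((fun x => α * Real.cos (α * x)) + fun x => β * Real.cos (β * x)) := funext E1
    rw [hm'] at A
    exact A.unique B
  have S : ∀ c x : ℝ, |Real.sin (c * x)| ≤ 1 := fun c x => Real.abs_sin_le_one _
  have C : ∀ c x : ℝ, |Real.cos (c * x)| ≤ 1 := fun c x => Real.abs_cos_le_one _
  -- facts on p
  have hX : ∀ᶠ x : ℝ in Filter.atTop, 1 ≤ x ∧ 2 ≤ a * x ^ 2 := by
    filter_upwards [Filter.eventually_ge_atTop 1, Filter.eventually_ge_atTop (2 / a)] with x hx1 hx2
    refine ⟨hx1, ?_⟩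
    have : 2 ≤ a * x := by rwa [div_le_iff₀' ha0] at hx2
    nlinarith
  have hp : ∀ x : ℝ, 1 ≤ x → 2 ≤ a * x ^ 2 →
     (α * a / 2) * x ^ 2 ≤ |α * x * (1 - a * x ^ 2)| ∧
      |α * (1 - 3 * a * x ^ 2)| ≤ 6 * |α * x * (1 - a * x ^ 2)| ∧
      |(- (6 * α * a * x))| ≤ 12 * |α * x * (1 - a * x ^ 2)| := by
    intro x hx hx2
    have q : |α * x * (1 - a * x ^ 2)| = α * (x * (a * x ^ 2 - 1)) := by
      rw [abs_of_nonpos]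
      · ring
      · apply mul_nonpos_of_nonneg_of_nonpos (by positivity) (by linarith)
    have q0 : a * x ^ 2 / 2 ≤ x * (a * x ^ 2 - 1) := by nlinarith
    refine ⟨?_, ?_, ?_⟩
    · rw [q]; nlinarith
    · rw [q, abs_mul, abs_of_pos hα0, abs_of_nonpos (by nlinarith)]
      nlinarith
    · rw [q, abs_neg, abs_of_nonneg (by positivity)]
      have : a * x ≤ a * x ^ 2 := by nlinarith
      nlinarith
  obtain ⟨B0, hB0⟩ : ∃ B0, ∀ x : ℝ, 1 ≤ x → 2 ≤ a * x ^ 2 → |α * x * (1 - a * x ^ 2)| * |K x| ≤ B0 := by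
    refine ⟨2, fun x _ _ => ?_⟩
    rw [← abs_mul, E0]
    refine (abs_add_le _ _).trans ?_
    linarith [S α x, S β x]
  obtain ⟨B1, hB1⟩ : ∃ B1, ∀ x : ℝ, 1 ≤ x → 2 ≤ a * x ^ 2 → |α * x * (1 - a * x ^ 2)| * |K' x| ≤ B1 := by
    refine ⟨α + β + 6 * B0, fun x hx hx2 => ?_⟩
    obtain ⟨_, p1, _⟩ := hp x hx hx2
    have b0 := hB0 x hx hx2
    rw [← abs_mul, show α * x * (1 - a * x ^ 2) * K' x =
      α * Real.cos (α * x) + β * Real.cos (β * x) - α * (1 - 3 * a * x ^ 2) * K x by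
        linarith [E1 x]]
    refine (abs_sub _ _).trans ?_
    have := abs_add_le (α * Real.cos (α * x)) (β * Real.cos (β * x))
    rw [abs_mul α, abs_mul β, abs_of_pos hα0, abs_of_pos hβ0] at this
    have i1 := mul_le_mul_of_nonneg_left (C α x) hα0.le
    have i2 := mul_le_mul_of_nonneg_left (C β x) hβ0.le
    have i3 := mul_le_mul_of_nonneg_right p1 (abs_nonneg (K x))
    rw [← abs_mul] at i3
    linarith
  obtain ⟨B2, hB2⟩ : ∃ B2, ∀ x : ℝ, 1 ≤ x → 2 ≤ a * x ^ 2 → |α * x * (1 - a * x ^ 2)| * |K'' x| ≤ B2 := by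
    refine ⟨α ^ 2 + β ^ 2 + 12 * B0 + 12 * B1, fun x hx hx2 => ?_⟩
    obtain ⟨_, p1, p2⟩ := hp x hx hx2
    have b0 := hB0 x hx hx2
    have b1 := hB1 x hx hx2
    rw [← abs_mul, show α * x * (1 - a * x ^ 2) * K'' x =
      -(α ^ 2 * Real.sin (α * x)) + -(β ^ 2 * Real.sin (β * x)) -
        ((- (6 * α * a * x)) * K x + 2 * (α * (1 - 3 * a * x ^ 2) * K' x)) by
        linarith [E2 x]]
    refine (abs_sub _ _).trans ?_
    have := abs_add_le (-(α ^ 2 * Real.sin (α * x))) (-(β ^ 2 * Real.sin (β * x)))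
    rw [abs_neg, abs_neg, abs_mul, abs_mul, abs_of_pos (pow_pos hα0 2), abs_of_pos (pow_pos hβ0 2)] at this
    have t2 := abs_add_le ((- (6 * α * a * x)) * K x) (2 * (α * (1 - 3 * a * x ^ 2) * K' x))
    rw [abs_mul (2:ℝ), abs_two] at t2
    have i1 := mul_le_mul_of_nonneg_left (S α x) (pow_pos hα0 2).le
    have i2 := mul_le_mul_of_nonneg_left (S β x) (pow_pos hβ0 2).le
    have i3 := mul_le_mul_of_nonneg_right p1 (abs_nonneg (K' x))
    have i4 := mul_le_mul_of_nonneg_right p2 (abs_nonneg (K x))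
    rw [← abs_mul] at i3 i4
    linarith
  have fin : ∀ (F : ℝ → ℝ) (B : ℝ), (∀ x : ℝ, 1 ≤ x → 2 ≤ a * x ^ 2 → |α * x * (1 - a * x ^ 2)| * |F x| ≤ B) →
      F =O[Filter.atTop] fun x : ℝ => x ^ (-2 : ℝ) := by
    intro F B h
    refine Asymptotics.IsBigO.of_bound (B / (α * a / 2)) ?_
    filter_upwards [hX] with x hx
    have b := h x hx.1 hx.2
    have p0 := (hp x hx.1 hx.2).1
    have x0 : 0 < x := by linarith [hx.1]
    have r : x ^ (-2 : ℝ) = (x ^ 2)⁻¹ := by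
      rw [Real.rpow_neg x0.le]; norm_num
    rw [r, Real.norm_eq_abs, Real.norm_eq_abs, abs_of_pos (a := (x ^ 2)⁻¹) (by positivity), ← div_eq_mul_inv, div_div,
      le_div_iff₀ (by positivity)]
    have := mul_le_mul_of_nonneg_right p0 (abs_nonneg (F x))
    linarith
  exact ⟨fin _ _ hB0, fin _ _ hB1, fin _ _ hB2⟩

theorem aux_tail : IntegrableAtFilter (fun x : ℝ => x ^ (-2 : ℝ)) Filter.atTop volume :=
  ⟨Set.Ioi 1, Filter.Ioi_mem_atTop 1, integrableOn_Ioi_rpow_of_lt (by norm_num) one_pos⟩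

theorem aux_bigO_mul {F w : ℝ → ℝ} {C : ℝ} (hF : F =O[Filter.atTop] fun x : ℝ => x ^ (-2 : ℝ))
    (hw : ∀ x, |w x| ≤ C) : (fun x => F x * w x) =O[Filter.atTop] fun x : ℝ => x ^ (-2 : ℝ) := by
  have : w =O[Filter.atTop] fun _ : ℝ => (1 : ℝ) :=
    Asymptotics.IsBigO.of_bound C (Filter.Eventually.of_forall fun x => by simpa using hw x)
  simpa using hF.mul this

theorem aux_int {F w : ℝ → ℝ} {C : ℝ} (hF : F =O[Filter.atTop] fun x : ℝ => x ^ (-2 : ℝ))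
    (hw : ∀ x, |w x| ≤ C) (cF : Continuous F) (cw : Continuous w) :
    IntegrableOn (fun x => F x * w x) (Set.Ioi 0) := by
  have : IntegrableOn (fun x => F x * w x) (Set.Ici 0) :=
    ((cF.mul cw).locallyIntegrable.locallyIntegrableOn _).integrableOn_of_isBigO_atTop
      (aux_bigO_mul hF hw) aux_tail
  exact this.mono_set Set.Ioi_subset_Ici_self

theorem aux_lim {F w : ℝ → ℝ} {C : ℝ} (hF : F =O[Filter.atTop] fun x : ℝ => x ^ (-2 : ℝ))
    (hw : ∀ x, |w x| ≤ C) : Filter.Tendsto (fun x => F x * w x) Filter.atTop (nhds 0) :=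
  (aux_bigO_mul hF hw).trans_tendsto (tendsto_rpow_neg_atTop (by norm_num))

theorem aux_full {F : ℝ → ℝ} (hF : F =O[Filter.atTop] fun x : ℝ => x ^ (-2 : ℝ))
    (cF : Continuous F) (ev : ∀ x, |F (-x)| = |F x|) : Integrable F := by
  refine cF.locallyIntegrable.integrable_of_isBigO_atTop_of_norm_isNegInvariant ?_ hF aux_tail
  exact Filter.Eventually.of_forall fun x => by simp [ev x]

theorem fourier_transform_K_eta_eq_integral_second_deriv
    (η : ℝ) (hη : 0 < η) (K : ℝ → ℝ) (hK : Continuous K)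
    (hKeq : ∀ x : ℝ, x ≠ 0 → x ≠ 1 / (2 * η) → x ≠ -(1 / (2 * η)) →
      K x = (Real.sin (2 * π * x) + Real.sin (2 * π * (1 + η) * x)) /
        (2 * π * x * (1 - 4 * η ^ 2 * x ^ 2)))
    (t : ℝ) (ht : t ≠ 0) :
    (∫ x : ℝ, (K x : ℂ) * Complex.exp (-(2 * (π : ℂ)) * Complex.I * (t : ℂ) * (x : ℂ)))
      = (((∫ x in Set.Ioi (0:ℝ),
            deriv (deriv K) x * (Real.sin (π * t * x) / (π * t)) ^ 2) : ℝ) : ℂ) := by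
  have an := aux_analytic η hη K hK hKeq
  have ev := aux_even η K hK hKeq
  have h1 : ∀ x, HasDerivAt K (deriv K x) x := fun x => (an x).differentiableAt.hasDerivAt
  have h2 : ∀ x, HasDerivAt (deriv K) (deriv (deriv K) x) x :=
    fun x => (an x).deriv.differentiableAt.hasDerivAt
  have cK'' : Continuous (deriv (deriv K)) :=
    continuous_iff_continuousAt.2 fun x => (an x).deriv.deriv.continuousAt
  obtain ⟨O0, O1, O2⟩ := aux_decay_s8 η hη K _ _ h1 h2 (aux_mul_s8 η hη K hK hKeq)
  have hπ : π * t ≠ 0 := mul_ne_zero Real.pi_pos.ne' ht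
  -- weights
  have w0 : ∀ x, |(Real.sin (π * t * x) / (π * t)) ^ 2| ≤ (1 / |π * t|) ^ 2 := by
    intro x
    rw [abs_pow, abs_div]
    gcongr
    exact Real.abs_sin_le_one _
  have w1 : ∀ x, |2 * Real.sin (π * t * x) * Real.cos (π * t * x) / (π * t)| ≤ 1 / |π * t| := by
    intro x
    rw [← Real.sin_two_mul, abs_div]
    gcongr
    exact Real.abs_sin_le_one _
  have w2 : ∀ x, |2 * Real.cos (2 * (π * t * x))| ≤ 2 := by
    intro x
    rw [abs_mul, abs_two]
    linarith [Real.abs_cos_le_one (2 * (π * t * x))]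
  have dsin : ∀ x : ℝ, HasDerivAt (fun x : ℝ => Real.sin (π * t * x)) (Real.cos (π * t * x) * (π * t)) x := by
    intro x
    simpa using ((hasDerivAt_id x).const_mul (π * t)).sin
  have dcos : ∀ x : ℝ, HasDerivAt (fun x : ℝ => Real.cos (π * t * x)) (-Real.sin (π * t * x) * (π * t)) x := by
    intro x
    simpa using ((hasDerivAt_id x).const_mul (π * t)).cos
  have dw0 : ∀ x : ℝ, HasDerivAt (fun x : ℝ => (Real.sin (π * t * x) / (π * t)) ^ 2)
      (2 * Real.sin (π * t * x) * Real.cos (π * t * x) / (π * t)) x := by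
    intro x
    refine (((dsin x).div_const (π * t)).pow 2).congr_deriv ?_
    simp only [Nat.cast_ofNat, Nat.add_one_sub_one, pow_one]
    field_simp
  have dw1 : ∀ x : ℝ, HasDerivAt
      (fun x : ℝ => 2 * Real.sin (π * t * x) * Real.cos (π * t * x) / (π * t))
      (2 * Real.cos (2 * (π * t * x))) x := by
    intro x
    refine ((((dsin x).const_mul 2).mul (dcos x)).div_const (π * t)).congr_deriv ?_
    rw [Real.cos_two_mul']
    field_simp
    ring
  have I2 := aux_int O2 w0 cK'' (by fun_prop)
  have I0 := aux_int O0 w2 hK (by fun_prop)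
  have key := integral_Ioi_of_hasDerivAt_of_tendsto' (a := 0)
    (f := fun x => deriv K x * (Real.sin (π * t * x) / (π * t)) ^ 2 -
      K x * (2 * Real.sin (π * t * x) * Real.cos (π * t * x) / (π * t)))
    (f' := fun x => deriv (deriv K) x * (Real.sin (π * t * x) / (π * t)) ^ 2 -
      K x * (2 * Real.cos (2 * (π * t * x))))
    (fun x _ => (((h2 x).mul (dw0 x)).sub ((h1 x).mul (dw1 x))).congr_deriv (by ring))
    (I2.sub I0) ((aux_lim O1 w0).sub (aux_lim O0 w1))
  rw [integral_sub I2 I0] at key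
  simp only [mul_zero, Real.sin_zero, zero_div, zero_mul, sub_zero, ne_eq, OfNat.ofNat_ne_zero,
    not_false_eq_true, zero_pow] at key
  rw [sub_eq_zero] at key
  rw [key]
  -- left side
  have w3 : ∀ x, |Real.cos (2 * (π * t * x))| ≤ 1 := fun x => Real.abs_cos_le_one _
  have w4 : ∀ x, |Real.sin (2 * (π * t * x))| ≤ 1 := fun x => Real.abs_sin_le_one _
  have J1 : Integrable (fun x => K x * Real.cos (2 * (π * t * x))) :=
    aux_full (aux_bigO_mul O0 w3) (by fun_prop) (fun x => by simp [ev x])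
  have J2 : Integrable (fun x => K x * Real.sin (2 * (π * t * x))) :=
    aux_full (aux_bigO_mul O0 w4) (by fun_prop) (fun x => by simp [ev x])
  have Z : ∫ x, K x * Real.sin (2 * (π * t * x)) = 0 := by
    have := integral_neg_eq_self (fun x => K x * Real.sin (2 * (π * t * x))) volume
    simp only [ev, mul_neg, Real.sin_neg, integral_neg] at this
    linarith
  have Y : ∫ x, K x * Real.cos (2 * (π * t * x)) =
      ∫ x in Set.Ioi (0:ℝ), K x * (2 * Real.cos (2 * (π * t * x))) := by
    have := integral_comp_abs (f := fun x => K x * Real.cos (2 * (π * t * x)))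
    rw [← integral_const_mul] at this
    calc _ = _ := ?_
      _ = _ := this
      _ = _ := by congr 1; ext x; ring
    congr 1; ext x
    rcases abs_choice x with h | h <;> simp [h, ev]
  have X : ∀ x : ℝ, (K x : ℂ) * Complex.exp (-(2 * (π : ℂ)) * Complex.I * (t : ℂ) * (x : ℂ)) =
      ((K x * Real.cos (2 * (π * t * x)) : ℝ) : ℂ) -
        Complex.I * ((K x * Real.sin (2 * (π * t * x)) : ℝ) : ℂ) := by
    intro x
    rw [show -(2 * (π : ℂ)) * Complex.I * (t : ℂ) * (x : ℂ) =
      (-((2 * (π * t * x) : ℝ) : ℂ)) * Complex.I by push_cast; ring, Complex.exp_mul_I]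
    rw [Complex.cos_neg, Complex.sin_neg]
    push_cast
    ring
  simp_rw [X]
  rw [integral_sub J1.ofReal (J2.ofReal.const_mul _), integral_const_mul]
  have R : ∀ f : ℝ → ℝ, ∫ x, ((f x : ℝ) : ℂ) = ((∫ x, f x : ℝ) : ℂ) := fun f => integral_ofReal
  have R1 := R (fun x => K x * Real.cos (2 * (π * t * x)))
  have R2 := R (fun x => K x * Real.sin (2 * (π * t * x)))
  rw [Y] at R1
  rw [Z] at R2
  refine (congrArg₂ (fun a b => a - Complex.I * b) R1 R2).trans ?_
  simp
end

section
/- Let a_p ≥ 0 be a nonnegative real number attached to each prime p, and suppose there is a constant C such that |Σ_{p ≤ x} a_p/p − log log x| ≤ C for all x ≥ 3. Then there is a constant C′, depending only on C, such that for all σ with 0 < σ ≤ 1/2, the series Σ_p a_p/p^{1+σ} converges and |Σ_p a_p/p^{1+σ} + log σ| ≤ C′. -/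
open Real

noncomputable def PP (u : ℝ) : Finset ℕ := Finset.filter Nat.Prime (Finset.Iic ⌊Real.exp u⌋₊)

lemma mem_PP (u : ℝ) (p : ℕ) : p ∈ PP u ↔ p.Prime ∧ Real.log p ≤ u := by
  unfold PP
  simp only [Finset.mem_filter, Finset.mem_Iic]
  rw [Nat.le_floor_iff (Real.exp_pos u).le]
  constructor
  · rintro ⟨h, hp⟩
    exact ⟨hp, (Real.log_le_iff_le_exp (by exact_mod_cast hp.pos)).2 h⟩
  · rintro ⟨hp, h⟩
    exact ⟨(Real.log_le_iff_le_exp (by exact_mod_cast hp.pos)).1 h, hp⟩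

lemma PP_step (b w : ℕ → ℝ) (hb : ∀ p : ℕ, p.Prime → 0 ≤ b p) (u v c : ℝ) (huv : u ≤ v)
    (hw : ∀ p : ℕ, p.Prime → u < Real.log p → Real.log p ≤ v → w p ≤ c) :
    ∑ p ∈ PP v, b p * w p ≤ ∑ p ∈ PP u, b p * w p +
      c * (∑ p ∈ PP v, b p - ∑ p ∈ PP u, b p) := by
  have hsub : PP u ⊆ PP v := by
    intro p hp
    rw [mem_PP] at *
    exact ⟨hp.1, hp.2.trans huv⟩
  rw [← Finset.sum_sdiff hsub, ← Finset.sum_sdiff (f := b) hsub]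
  have : ∑ p ∈ PP v \ PP u, b p * w p ≤ c * ∑ p ∈ PP v \ PP u, b p := by
    rw [Finset.mul_sum]
    apply Finset.sum_le_sum
    intro p hp
    rw [Finset.mem_sdiff, mem_PP, mem_PP] at hp
    obtain ⟨⟨h1, h2⟩, h3⟩ := hp
    have h4 : u < Real.log p := by
      by_contra h
      exact h3 ⟨h1, not_lt.1 h⟩
    rw [mul_comm c]
    exact mul_le_mul_of_nonneg_left (hw p h1 h4 h2) (hb p h1)
  linarith

lemma block (b : ℕ → ℝ) (C : ℝ)
    (hB : ∀ u : ℝ, Real.log 3 ≤ u → |∑ p ∈ PP u, b p - Real.log u| ≤ C) (u v : ℝ)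
    (hu : Real.log 3 ≤ u) (hv : v = 2 * u) :
    ∑ p ∈ PP v, b p - ∑ p ∈ PP u, b p ≤ Real.log 2 + 2 * C := by
  have h3 : 0 < Real.log 3 := Real.log_pos (by norm_num)
  have h1 := abs_le.1 (hB u hu)
  have h2 := abs_le.1 (hB v (by linarith))
  have : Real.log v = Real.log 2 + Real.log u := by
    rw [hv, Real.log_mul (by norm_num) (by linarith)]
  linarith [h1.1, h2.2]

lemma cheb (b : ℕ → ℝ) (hb : ∀ p : ℕ, p.Prime → 0 ≤ b p) (C K : ℝ)
    (hB : ∀ u : ℝ, Real.log 3 ≤ u → |∑ p ∈ PP u, b p - Real.log u| ≤ C)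
    (hK1 : 2 * (Real.log 2 + 2 * C) ≤ K) (hK2 : Real.log (2 * Real.log 3) + C ≤ K) (n : ℕ) :
    ∀ u : ℝ, Real.log 3 ≤ u → u ≤ 2 ^ (n + 1) * Real.log 3 →
      ∑ p ∈ PP u, b p * Real.log p ≤ K * u := by
  have h3 : 0 < Real.log 3 := Real.log_pos (by norm_num)
  have base : ∀ u : ℝ, Real.log 3 ≤ u → u ≤ 2 * Real.log 3 →
      ∑ p ∈ PP u, b p * Real.log p ≤ K * u := by
    intro u hu hu2
    have h1 := (abs_le.1 (hB u hu)).2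
    have h2 : Real.log u ≤ Real.log (2 * Real.log 3) := Real.log_le_log (by linarith) hu2
    calc ∑ p ∈ PP u, b p * Real.log p ≤ ∑ p ∈ PP u, b p * u := by
          apply Finset.sum_le_sum
          intro p hp
          rw [mem_PP] at hp
          exact mul_le_mul_of_nonneg_left hp.2 (hb p hp.1)
      _ = (∑ p ∈ PP u, b p) * u := by rw [Finset.sum_mul]
      _ ≤ K * u := mul_le_mul_of_nonneg_right (by linarith) (by linarith)
  induction n with
  | zero => simpa using base
  | succ n ih =>
    intro u hu hu2
    by_cases h : u ≤ 2 * Real.log 3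
    · exact base u hu h
    · have i1 := ih (u / 2) (by linarith) (by rw [pow_succ] at hu2; linarith)
      have i2 := PP_step b (fun p => Real.log p) hb (u / 2) u u (by linarith)
        (fun p _ _ h => h)
      have i3 := block b C hB (u / 2) u (by linarith) (by ring)
      have i4 := mul_le_mul_of_nonneg_left i3 (show 0 ≤ u by linarith)
      have i5 := mul_le_mul_of_nonneg_left hK1 (show 0 ≤ u by linarith)
      linarith

lemma upper (b : ℕ → ℝ) (hb : ∀ p : ℕ, p.Prime → 0 ≤ b p) (C : ℝ) (hC : 0 ≤ C)
    (hB : ∀ u : ℝ, Real.log 3 ≤ u → |∑ p ∈ PP u, b p - Real.log u| ≤ C)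
    (σ : ℝ) (hσ : 0 < σ) (hs : Real.log 3 ≤ 1 / σ) (n : ℕ) :
    ∑ p ∈ PP (2 ^ n * (1 / σ)), b p * Real.exp (-(σ * Real.log p)) ≤
      ∑ p ∈ PP (1 / σ), b p + (Real.log 2 + 2 * C) * (2 - 2 * (1 / 2) ^ n) := by
  have hM : 0 ≤ Real.log 2 + 2 * C := by
    have := Real.log_pos (show (1 : ℝ) < 2 by norm_num)
    linarith
  have hσ' : 0 < 1 / σ := by positivity
  induction n with
  | zero =>
    simp only [pow_zero, one_mul]
    have : ∑ p ∈ PP (1 / σ), b p * Real.exp (-(σ * Real.log p)) ≤ ∑ p ∈ PP (1 / σ), b p := by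
      apply Finset.sum_le_sum
      intro p hp
      rw [mem_PP] at hp
      apply mul_le_of_le_one_right (hb p hp.1)
      rw [Real.exp_le_one_iff]
      have := Real.log_natCast_nonneg p
      nlinarith
    linarith
  | succ n ih =>
    have h1 : (1 : ℝ) ≤ 2 ^ n := one_le_pow₀ (by norm_num)
    have hle : 1 / σ ≤ 2 ^ n * (1 / σ) := by nlinarith
    have i2 := PP_step b (fun p => Real.exp (-(σ * Real.log p))) hb (2 ^ n * (1 / σ))
      (2 ^ (n + 1) * (1 / σ)) ((1 / 2) ^ n) (by rw [pow_succ]; linarith) (by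
        intro p hp hl _
        have h5 : (2 : ℝ) ^ n ≤ σ * Real.log p := by
          have := mul_le_mul_of_nonneg_left hl.le hσ.le
          have e : σ * (2 ^ n * (1 / σ)) = 2 ^ n := by field_simp
          linarith
        have h6 : (2 : ℝ) ^ n ≤ Real.exp (σ * Real.log p) := by
          have := Real.add_one_le_exp (σ * Real.log p)
          linarith
        rw [Real.exp_neg, one_div, inv_pow]
        exact inv_anti₀ (by positivity) h6)
    have i3 := block b C hB (2 ^ n * (1 / σ)) (2 ^ (n + 1) * (1 / σ)) (hs.trans hle)
      (by ring)
    have i4 := mul_le_mul_of_nonneg_left i3 (show (0 : ℝ) ≤ (1 / 2) ^ n by positivity)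
    have e : (Real.log 2 + 2 * C) * (2 - 2 * (1 / 2) ^ (n + 1)) =
      (Real.log 2 + 2 * C) * (2 - 2 * (1 / 2) ^ n) + (1 / 2) ^ n * (Real.log 2 + 2 * C) := by
      rw [pow_succ]; ring
    linarith

/-- **From a Mertens-type estimate to a logarithmic pole.** If
`∑_{p ≤ x} a_p/p = log log x + O(1)`, then uniformly for `0 < σ ≤ 1/2`,
`∑_p a_p/p^{1+σ} = -log σ + O(1)`. -/
theorem mertens_to_log_pole (C : ℝ) :
    ∃ C' : ℝ, ∀ a : ℕ → ℝ, (∀ p : ℕ, p.Prime → 0 ≤ a p) →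
      (∀ x : ℝ, 3 ≤ x →
        |(∑ p ∈ Finset.filter Nat.Prime (Finset.Iic ⌊x⌋₊), a p / (p : ℝ)) -
            Real.log (Real.log x)| ≤ C) →
      ∀ σ : ℝ, 0 < σ → σ ≤ 1 / 2 →
        Summable (fun p : Nat.Primes => a p / ((p : ℕ) : ℝ) ^ (1 + σ)) ∧
        |(∑' p : Nat.Primes, a p / ((p : ℕ) : ℝ) ^ (1 + σ)) + Real.log σ| ≤ C' := by
  set K : ℝ := 2 * (Real.log 2 + 2 * C) + |Real.log (2 * Real.log 3) + C| with hK
  refine ⟨C + 2 * (Real.log 2 + 2 * C) + K, ?_⟩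
  intro a ha h σ hσ hσ2
  have hC : 0 ≤ C := (abs_nonneg _).trans (h 3 le_rfl)
  have hl2 := Real.log_pos (show (1 : ℝ) < 2 by norm_num)
  have hl3 := Real.log_pos (show (1 : ℝ) < 3 by norm_num)
  have hK1 : 2 * (Real.log 2 + 2 * C) ≤ K := by
    have := abs_nonneg (Real.log (2 * Real.log 3) + C)
    linarith
  have hK2 : Real.log (2 * Real.log 3) + C ≤ K := by
    have := le_abs_self (Real.log (2 * Real.log 3) + C)
    linarith
  have hs : Real.log 3 ≤ 1 / σ := by
    have h1 : Real.log 3 ≤ 2 := by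
      have := Real.log_le_sub_one_of_pos (show (0 : ℝ) < 3 by norm_num)
      linarith
    have h2 : 2 ≤ 1 / σ := by
      rw [le_div_iff₀ hσ]; linarith
    linarith
  set b : ℕ → ℝ := fun p => a p / (p : ℝ) with hbdef
  have hb : ∀ p : ℕ, p.Prime → 0 ≤ b p := fun p hp => div_nonneg (ha p hp) (Nat.cast_nonneg p)
  have hB : ∀ u : ℝ, Real.log 3 ≤ u → |∑ p ∈ PP u, b p - Real.log u| ≤ C := by
    intro u hu
    have := h (Real.exp u) ((Real.log_le_iff_le_exp (by norm_num)).1 hu)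
    rw [Real.log_exp] at this
    exact this
  set g : ℕ → ℝ := fun p => b p * Real.exp (-(σ * Real.log p)) with hg
  have hg0 : ∀ p : ℕ, p.Prime → 0 ≤ g p := fun p hp => mul_nonneg (hb p hp) (Real.exp_pos _).le
  have hfg : (fun p : Nat.Primes => a p / ((p : ℕ) : ℝ) ^ (1 + σ)) =
      fun p : Nat.Primes => g p := by
    funext p
    have hp : (0 : ℝ) < ((p : ℕ) : ℝ) := by exact_mod_cast p.2.pos
    simp only [hg, hbdef]
    rw [Real.rpow_add hp, Real.rpow_one, Real.rpow_def_of_pos hp, Real.exp_neg, mul_comm σ]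
    field_simp
  rw [hfg]
  have hlogB := abs_le.1 (hB (1 / σ) hs)
  have hlog : Real.log (1 / σ) = - Real.log σ := by rw [one_div, Real.log_inv]
  rw [hlog] at hlogB
  have hfin : ∀ s : Finset Nat.Primes, ∑ p ∈ s, g p ≤
      -Real.log σ + C + 2 * (Real.log 2 + 2 * C) := by
    intro s
    let t : Finset ℕ := s.map ⟨fun p : Nat.Primes => (p : ℕ), Subtype.val_injective⟩
    have ht : ∑ p ∈ s, g p = ∑ p ∈ t, g p := by
      rw [Finset.sum_map]; rfl
    obtain ⟨n, hn⟩ := pow_unbounded_of_one_lt (σ * Real.log (t.sup id : ℕ))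
      (show (1 : ℝ) < 2 by norm_num)
    have hsub : t ⊆ PP (2 ^ n * (1 / σ)) := by
      intro p hp
      have hpp : p.Prime := by
        simp only [t, Finset.mem_map] at hp
        obtain ⟨q, _, rfl⟩ := hp
        exact q.2
      rw [mem_PP]
      refine ⟨hpp, ?_⟩
      have h1 : p ≤ t.sup id := Finset.le_sup (f := id) hp
      have h2 : Real.log p ≤ Real.log (t.sup id : ℕ) :=
        Real.log_le_log (by exact_mod_cast hpp.pos) (by exact_mod_cast h1)
      rw [mul_one_div, le_div_iff₀ hσ]
      nlinarith
    have h1 : ∑ p ∈ t, g p ≤ ∑ p ∈ PP (2 ^ n * (1 / σ)), g p :=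
      Finset.sum_le_sum_of_subset_of_nonneg hsub
        (fun p hp _ => hg0 p ((mem_PP _ _).1 hp).1)
    have h2 := upper b hb C hC hB σ hσ hs n
    have h3 : (Real.log 2 + 2 * C) * (2 - 2 * (1 / 2) ^ n) ≤ (Real.log 2 + 2 * C) * 2 := by
      apply mul_le_mul_of_nonneg_left _ (by linarith)
      have : (0 : ℝ) ≤ (1 / 2) ^ n := by positivity
      linarith
    rw [ht]
    have h4 := h1.trans h2
    linarith [hlogB.2]
  have hsum : Summable (fun p : Nat.Primes => g p) :=
    summable_of_sum_le (fun p => hg0 p p.2) hfin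
  refine ⟨hsum, ?_⟩
  have hup : ∑' p : Nat.Primes, g p ≤ -Real.log σ + C + 2 * (Real.log 2 + 2 * C) :=
    Real.tsum_le_of_sum_le (fun p => hg0 p p.2) hfin
  have hlow : -Real.log σ - C - K ≤ ∑' p : Nat.Primes, g p := by
    have h1 := hsum.sum_le_tsum (show Finset Nat.Primes from Finset.subtype Nat.Prime (PP (1 / σ)))
      (fun p _ => hg0 p p.2)
    have h2 : ∑ p ∈ Finset.subtype Nat.Prime (PP (1 / σ)), g p = ∑ p ∈ PP (1 / σ), g p :=
      Finset.sum_subtype_of_mem g (fun p hp => ((mem_PP _ _).1 hp).1)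
    obtain ⟨n, hn⟩ := pow_unbounded_of_one_lt ((1 / σ) / Real.log 3)
      (show (1 : ℝ) < 2 by norm_num)
    have h3 := cheb b hb C K hB hK1 hK2 n (1 / σ) hs (by
      rw [div_lt_iff₀ hl3] at hn
      have : 0 < (2 : ℝ) ^ n * Real.log 3 := by positivity
      rw [pow_succ]
      linarith)
    have h4 : ∑ p ∈ PP (1 / σ), b p - σ * ∑ p ∈ PP (1 / σ), b p * Real.log p ≤
        ∑ p ∈ PP (1 / σ), g p := by
      rw [Finset.mul_sum, ← Finset.sum_sub_distrib]
      apply Finset.sum_le_sum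
      intro p hp
      have h5 := mul_le_mul_of_nonneg_left (Real.add_one_le_exp (-(σ * Real.log p)))
        (hb p ((mem_PP _ _).1 hp).1)
      simp only [hg]
      linarith
    have h6 := mul_le_mul_of_nonneg_left h3 hσ.le
    have h7 : σ * (K * (1 / σ)) = K := by field_simp
    have h8 : ∑ p ∈ PP (1 / σ), g p ≤ ∑' p : Nat.Primes, g p := h2 ▸ h1
    linarith [hlogB.1]
  have hK0 : 0 ≤ K := by linarith
  rw [abs_le]
  constructor <;> linarith
end

section
/- Assume the Riemann Hypothesis and let 0 < B₁ < B₂ ≤ B₃ < 1 and c > 0. Suppose there are constants D and X₀ such that |V(X, δ) − (1/2)·δ·X²·(log(1/δ) + 1 − γ₀ − log 2π)| ≤ D·δ^{1+c}·X² for all X ≥ X₀ and all δ with X^{−B₃} ≤ δ ≤ X^{−B₁}. Then for every ε > 0 there exist constants C > 0 and X₁ such that for all X ≥ X₁ and all h with X^{1−B₃} ≤ h ≤ X^{1−B₂}: |Ṽ(X, h) − h·X·(log(X/h) − γ₀ − log 2π)| ≤ C·(h·X^{1+ε}·(h/X)^{c/3} + h·X^{1+ε}·(h·X^{−(1−B₁)})^{1/(3(1−B₁))}).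 -/
open Real MeasureTheory

/-- The Chebyshev function `ψ(x) = ∑_{n ≤ x} Λ(n)`. -/
noncomputable def chebyshevPsi (x : ℝ) : ℝ :=
  ∑ n ∈ Finset.range (⌊x⌋₊ + 1), ArithmeticFunction.vonMangoldt n

/-- The variance `V(X,δ) = ∫_1^X (ψ(x+δx) - ψ(x) - δx)² dx`. -/
noncomputable def zetaVarDelta (X δ : ℝ) : ℝ :=
  ∫ x in (1:ℝ)..X, (chebyshevPsi (x + δ * x) - chebyshevPsi x - δ * x) ^ 2

/-- The variance `Ṽ(X,h) = ∫_1^X (ψ(x+h) - ψ(x) - h)² dx`. -/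
noncomputable def zetaVarH (X h : ℝ) : ℝ :=
  ∫ x in (1:ℝ)..X, (chebyshevPsi (x + h) - chebyshevPsi x - h) ^ 2


noncomputable def C1Phi (s : ℂ) : ℂ :=
  ∫ t in Set.Ioi (1:ℝ), ((Int.fract t : ℝ) : ℂ) * (t : ℂ) ^ (-(s + 1))

lemma C1_intOn_cpow {s : ℂ} (hs : 0 < s.re) :
    IntegrableOn (fun t : ℝ => (t : ℂ) ^ (-(s + 1))) (Set.Ioi (1:ℝ)) :=
  integrableOn_Ioi_cpow_of_lt (by simp; linarith) one_pos

lemma C1_intOn_fract {s : ℂ} (hs : 0 < s.re) :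
    IntegrableOn (fun t : ℝ => ((Int.fract t : ℝ) : ℂ) * (t : ℂ) ^ (-(s + 1))) (Set.Ioi (1:ℝ)) := by
  refine (C1_intOn_cpow hs).bdd_mul (c := 1) ?_ ?_
  · exact (Complex.measurable_ofReal.comp measurable_fract).aestronglyMeasurable
  · refine Filter.Eventually.of_forall fun t => ?_
    rw [Complex.norm_real, Real.norm_eq_abs, abs_of_nonneg (Int.fract_nonneg t)]
    exact (Int.fract_lt_one t).le

lemma C1_Phi_bound {s : ℂ} (hs : 0 < s.re) : ‖C1Phi s‖ ≤ 1 / s.re := by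
  have h1 : ∫ t in Set.Ioi (1:ℝ), t ^ (-(s.re + 1)) = 1 / s.re := by
    rw [integral_Ioi_rpow_of_lt (by linarith) one_pos]
    simp
  rw [← h1]
  refine norm_integral_le_of_norm_le (integrableOn_Ioi_rpow_of_lt (by linarith) one_pos) ?_
  filter_upwards [ae_restrict_mem measurableSet_Ioi] with t ht
  have ht0 : (0:ℝ) < t := lt_trans one_pos ht
  rw [norm_mul, Complex.norm_real, Real.norm_eq_abs, abs_of_nonneg (Int.fract_nonneg t),
    Complex.norm_cpow_eq_rpow_re_of_pos ht0]
  simp only [Complex.neg_re, Complex.add_re, Complex.one_re]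
  exact mul_le_of_le_one_left (by positivity) (Int.fract_lt_one t).le

lemma C1_Phi_diff {s : ℂ} (hs : 0 < s.re) : DifferentiableAt ℂ C1Phi s := by
  set f : ℝ → ℂ := (Set.Ioi (1:ℝ)).indicator (fun t => ((Int.fract t : ℝ) : ℂ)) with hf
  have hfb : ∀ t, ‖f t‖ ≤ 1 := by
    intro t
    refine (norm_indicator_le_norm_self _ _).trans ?_
    rw [Complex.norm_real, Real.norm_eq_abs, abs_of_nonneg (Int.fract_nonneg t)]
    exact (Int.fract_lt_one t).le
  have hfm : AEStronglyMeasurable f volume :=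
    ((Complex.measurable_ofReal.comp measurable_fract).indicator measurableSet_Ioi).aestronglyMeasurable
  have hd : DifferentiableAt ℂ (mellin f) (-s) := by
    refine mellin_differentiableAt_of_isBigO_rpow (a := 0) (b := -s.re - 1) ?_ ?_ ?_ ?_ ?_
    · refine LocallyIntegrable.locallyIntegrableOn ?_ _
      refine (locallyIntegrable_const (1:ℝ)).mono hfm ?_
      exact Filter.Eventually.of_forall (by simpa using hfb)
    · simp only [neg_zero, Real.rpow_zero]
      exact Asymptotics.isBigO_of_le _ (by simpa using hfb)
    · simpa using hs
    · refine Asymptotics.IsBigO.of_bound 1 ?_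
      have : Set.Iio (1:ℝ) ∈ nhdsWithin (0:ℝ) (Set.Ioi 0) :=
        mem_nhdsWithin_of_mem_nhds (Iio_mem_nhds one_pos)
      filter_upwards [this] with t ht
      have : f t = 0 := Set.indicator_of_notMem (by simpa using (le_of_lt ht)) _
      rw [this]; simp
    · simp
  have he : C1Phi = fun s => mellin f (-s) := by
    ext s
    unfold C1Phi mellin
    rw [← integral_indicator measurableSet_Ioi, ← integral_indicator measurableSet_Ioi]
    congr 1
    ext t
    by_cases h1 : (1:ℝ) < t
    · have h0 : (0:ℝ) < t := by linarith
      simp only [hf, Set.indicator, Set.mem_Ioi, h1, h0, if_true, smul_eq_mul]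
      rw [mul_comm]; congr 2; ring
    · simp [hf, Set.indicator, h1]
  rw [he]
  exact DifferentiableAt.comp (g := mellin f) (f := fun s : ℂ => -s) s hd differentiable_neg.differentiableAt

lemma C1_zeta1_gt {s : ℂ} (hs : 1 < s.re) :
    riemannZeta₁ s = s - s * (s - 1) * C1Phi s := by
  have hs1 : s ≠ 1 := by rintro rfl; simp at hs
  have hs0 : s - 1 ≠ 0 := sub_ne_zero.mpr hs1
  have h1 : riemannZeta s = s * ∫ t in Set.Ioi (1 : ℝ), ((⌊t⌋₊ : ℝ):ℂ) * t ^ (-(s + 1)) := by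
    rw [← LSeries_one_eq_riemannZeta hs]
    have := LSeries_eq_mul_integral_of_nonneg (fun _ => 1) (r := 1) zero_le_one hs
      (by simpa using Asymptotics.isBigO_refl _ _) (fun _ => zero_le_one)
    rw [show (1 : ℕ → ℂ) = fun n => (((fun _ => 1 : ℕ → ℝ) n : ℝ) : ℂ) by ext; simp, this]
    simp
  have h2 : ∫ t in Set.Ioi (1 : ℝ), ((⌊t⌋₊ : ℝ):ℂ) * (t:ℂ) ^ (-(s + 1))
      = (∫ t in Set.Ioi (1 : ℝ), (t:ℂ) ^ (-s)) - C1Phi s := by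
    unfold C1Phi
    rw [← integral_sub (integrableOn_Ioi_cpow_of_lt (by simpa using hs) one_pos)
      (C1_intOn_fract (by linarith))]
    refine setIntegral_congr_fun measurableSet_Ioi fun t ht => ?_
    have ht0 : (0:ℝ) < t := lt_trans one_pos ht
    have : ((⌊t⌋₊ : ℝ)) = t - Int.fract t := by
      rw [natCast_floor_eq_intCast_floor ht0.le, Int.self_sub_fract]
    have h3 : (t:ℂ) ^ (-s) = t * (t:ℂ) ^ (-(s+1)) := by
      rw [show -s = 1 + -(s+1) by ring, Complex.cpow_add _ _ (by exact_mod_cast ht0.ne'), Complex.cpow_one]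
    simp only [this, h3]; push_cast; ring
  rw [h2, integral_Ioi_cpow_of_lt (by simpa using hs) one_pos] at h1
  have h3 := riemannZeta_eq_inv_sub_mul hs1
  have h4 : riemannZeta₁ s = (s-1) * riemannZeta s := by rw [h3]; field_simp
  rw [h4, h1]
  have h5 : -s + 1 ≠ 0 := by intro h; apply hs0; linear_combination -h
  simp only [Complex.ofReal_one, Complex.one_cpow]
  field_simp
  ring

lemma C1_zeta1_formula {s : ℂ} (hs : 0 < s.re) :
    riemannZeta₁ s = s - s * (s - 1) * C1Phi s := by
  have hU : IsOpen {s : ℂ | 0 < s.re} := isOpen_lt continuous_const Complex.continuous_re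
  have hc : IsPreconnected {s : ℂ | 0 < s.re} := (convex_halfSpace_re_gt 0).isPreconnected
  have h1 : AnalyticOnNhd ℂ riemannZeta₁ {s : ℂ | 0 < s.re} :=
    differentiable_riemannZeta₁.differentiableOn.analyticOnNhd hU
  have h2 : AnalyticOnNhd ℂ (fun s => s - s * (s - 1) * C1Phi s) {s : ℂ | 0 < s.re} := by
    refine DifferentiableOn.analyticOnNhd (fun z hz => ?_) hU
    have := C1_Phi_diff hz
    exact DifferentiableAt.differentiableWithinAt (by fun_prop)
  refine h1.eqOn_of_preconnected_of_eventuallyEq h2 hc (z₀ := 2) (by simp) ?_ hs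
  have : {s : ℂ | 1 < s.re} ∈ nhds (2:ℂ) :=
    (isOpen_lt continuous_const Complex.continuous_re).mem_nhds (by simp)
  filter_upwards [this] with z hz using C1_zeta1_gt hz

lemma C1_zeta1_bound {s : ℂ} (hs : 1/2 ≤ s.re) : ‖riemannZeta₁ s‖ ≤ 3 * (1 + ‖s‖) ^ 2 := by
  have h0 : 0 < s.re := by linarith
  rw [C1_zeta1_formula h0]
  have h1 := C1_Phi_bound h0
  have h2 : 1 / s.re ≤ 2 := by rw [div_le_iff₀ h0]; linarith
  have h3 : ‖s - 1‖ ≤ ‖s‖ + 1 := by simpa using norm_sub_le s 1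
  calc ‖s - s * (s - 1) * C1Phi s‖ ≤ ‖s‖ + ‖s‖ * ‖s - 1‖ * ‖C1Phi s‖ := by
        refine (norm_sub_le _ _).trans ?_; rw [norm_mul, norm_mul]
    _ ≤ ‖s‖ + ‖s‖ * (‖s‖ + 1) * 2 := by gcongr; linarith
    _ ≤ _ := by nlinarith [norm_nonneg s]

lemma C1_zeta1_lower : ∃ K : ℝ, 0 < K ∧ ∀ t : ℝ, 1 ≤ K * ‖riemannZeta₁ (2 + t * Complex.I)‖ := by
  set K : ℝ := ∑' n : ℕ, ‖LSeries.term (fun _ => 1) 2 n‖ with hK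
  have hsum : Summable (fun n => ‖LSeries.term (fun _ => 1) 2 n‖) := by
    have : LSeriesSummable (fun _ => 1) 2 := LSeriesSummable_one_iff.mpr (by simp)
    exact this.norm
  have key : ∀ t : ℝ, 1 ≤ K * ‖riemannZeta₁ (2 + t * Complex.I)‖ := by
    intro t
    set s : ℂ := 2 + t * Complex.I with hs
    have hre : s.re = 2 := by simp [hs]
    have h1 : 1 < s.re := by rw [hre]; norm_num
    have hs1 : s ≠ 1 := by intro h; rw [h] at hre; norm_num at hre
    have hm := ArithmeticFunction.LSeries_zeta_mul_Lseries_moebius h1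
    rw [ArithmeticFunction.LSeries_zeta_eq_riemannZeta h1, riemannZeta_eq_inv_sub_mul hs1] at hm
    have hmu : ‖LSeries (fun n => ((ArithmeticFunction.moebius n : ℤ) : ℂ)) s‖ ≤ K := by
      refine tsum_of_norm_bounded hsum.hasSum fun n => ?_
      rcases eq_or_ne n 0 with rfl | hn
      · simp
      · rw [LSeries.norm_term_eq, LSeries.norm_term_eq]
        simp only [hn, if_false, hre, Complex.re_ofNat, norm_one]
        gcongr
        have := ArithmeticFunction.abs_moebius_le_one (n := n)
        rw [Complex.norm_intCast]
        exact_mod_cast this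
    have hn : ‖(s-1)⁻¹‖ ≤ 1 := by
      rw [norm_inv]
      apply inv_le_one_of_one_le₀
      have := Complex.abs_re_le_norm (s-1)
      simp only [Complex.sub_re, hre, Complex.one_re] at this
      norm_num at this; linarith
    have := congrArg norm hm
    rw [norm_mul, norm_mul, norm_one] at this
    calc 1 = ‖(s - 1)⁻¹‖ * ‖riemannZeta₁ s‖ * ‖LSeries (fun n => ((ArithmeticFunction.moebius n : ℤ) : ℂ)) s‖ := this.symm
      _ ≤ 1 * ‖riemannZeta₁ s‖ * K := by gcongr
      _ = _ := by ring
  refine ⟨K, ?_, key⟩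
  by_contra hK0
  have := key 0
  nlinarith [norm_nonneg (riemannZeta₁ (2 + ((0:ℝ):ℂ) * Complex.I))]


lemma C1_zeta1_ne_zero (hRH : RiemannHypothesis) {s : ℂ} (hs : 1/2 < s.re) :
    riemannZeta₁ s ≠ 0 := by
  intro h
  rcases eq_or_ne s 1 with rfl | hs1
  · simp at h
  have h2 : riemannZeta s = 0 := by rw [riemannZeta_eq_inv_sub_mul hs1, h, mul_zero]
  have := hRH s h2 (by
    rintro ⟨n, hn⟩
    rw [hn] at hs
    have : ((-2 : ℂ) * ((n:ℂ) + 1)).re = -2 * (n + 1) := by simp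
    rw [this] at hs
    have : (0:ℝ) ≤ n := n.cast_nonneg
    linarith) hs1
  linarith

lemma C1_logDeriv_bound (hRH : RiemannHypothesis) {a ε : ℝ} (ha : 0 < a) (ha1 : a < 1) (hε : 0 < ε) :
    ∃ C : ℝ, 0 < C ∧ ∀ s : ℂ, 1/2 + a ≤ s.re → s.re ≤ 2 →
      ‖deriv riemannZeta₁ s / riemannZeta₁ s‖ ≤ C * (1 + ‖s‖) ^ ε := by
  obtain ⟨K, hK, hKl⟩ := C1_zeta1_lower
  -- log bound
  have hlog : ∃ C₁ : ℝ, 0 < C₁ ∧ ∀ y : ℝ, 1 ≤ y →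
      Real.log (2 + K * (3 * (5 * y) ^ 2)) ≤ C₁ * y ^ ε := by
    refine ⟨(2 + K * 75) + 2 / ε, by positivity, fun y hy => ?_⟩
    have hy0 : 0 < y := by linarith
    have h1 : 2 + K * (3 * (5 * y) ^ 2) ≤ (2 + K * 75) * y ^ 2 := by nlinarith
    have h2 : Real.log (2 + K * (3 * (5 * y) ^ 2)) ≤ Real.log (2 + K * 75) + 2 * Real.log y := by
      refine (Real.log_le_log (by positivity) h1).trans ?_
      rw [Real.log_mul (by positivity) (by positivity), Real.log_pow]; norm_num
    have h3 : Real.log y ≤ y ^ ε / ε := Real.log_le_rpow_div hy0.le hε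
    have h4 : Real.log (2 + K * 75) ≤ 2 + K * 75 := Real.log_le_self (by positivity)
    have h5 : 1 ≤ y ^ ε := Real.one_le_rpow hy hε.le
    calc _ ≤ (2 + K * 75) * 1 + 2 * (y ^ ε / ε) := by linarith
      _ ≤ (2 + K * 75) * y ^ ε + 2 * (y ^ ε / ε) := by gcongr
      _ = _ := by ring
  obtain ⟨C₁, hC₁, hC₁l⟩ := hlog
  refine ⟨(2 * C₁ * (3/2) / (a/2)) / (a/2), by positivity, fun s hs hs2 => ?_⟩
  set c : ℂ := 2 + s.im * Complex.I with hc
  set z : ℂ := ((s.re - 2 : ℝ) : ℂ) with hz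
  have hsz : s = c + z := by
    apply Complex.ext <;> simp [hc, hz]
  have hcn : ‖c‖ ≤ ‖s‖ + 2 := by
    have : c = 2 + s.im * Complex.I := hc
    rw [this]
    refine (norm_add_le _ _).trans ?_
    rw [norm_mul, Complex.norm_I, Complex.norm_real, mul_one]
    have := Complex.abs_im_le_norm s
    simp; linarith
  have hre : ∀ w ∈ Metric.ball (0:ℂ) (3/2), 1/2 < (c + w).re := by
    intro w hw
    have h1 := Complex.abs_re_le_norm w
    rw [mem_ball_zero_iff] at hw
    have h2 := (abs_lt.mp (lt_of_le_of_lt h1 hw)).1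
    simp [hc]; linarith
  set f : ℂ → ℂ := fun w => deriv riemannZeta₁ (c + w) / riemannZeta₁ (c + w) with hf
  have hdd : Differentiable ℂ (deriv riemannZeta₁) := by
    have := (differentiable_riemannZeta₁.contDiff (n := 2)).differentiable_deriv_two
    exact this
  have hfd : DifferentiableOn ℂ f (Metric.ball 0 (3/2)) := by
    intro w hw
    refine DifferentiableAt.differentiableWithinAt ?_
    refine DifferentiableAt.div ?_ ?_ (C1_zeta1_ne_zero hRH (hre w hw))
    · exact (hdd _).comp w (by fun_prop)
    · exact (differentiable_riemannZeta₁ _).comp w (by fun_prop)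
  obtain ⟨L, hL0, hL⟩ := (hfd.isExactOn_ball).with_val_at 0 0
  have hE : ∀ w ∈ Metric.ball (0:ℂ) (3/2),
      riemannZeta₁ (c + w) * Complex.exp (-L w) = riemannZeta₁ c := by
    intro w hw
    have hder : ∀ w ∈ Metric.ball (0:ℂ) (3/2),
        HasDerivAt (fun w => riemannZeta₁ (c + w) * Complex.exp (-L w)) 0 w := by
      intro w hw
      have h1 : HasDerivAt (fun w => riemannZeta₁ (c + w)) (deriv riemannZeta₁ (c + w)) w := by
        have := (differentiable_riemannZeta₁ (c+w)).hasDerivAt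
        exact this.comp_const_add c w
      have h2 := (hL w hw).neg.cexp
      have h3 := h1.mul h2
      convert! h3 using 1
      have := C1_zeta1_ne_zero hRH (hre w hw)
      simp only [hf]
      field_simp
      ring
    have := (convex_ball (0:ℂ) (3/2)).is_const_of_fderivWithin_eq_zero (𝕜 := ℂ)
      (f := fun w => riemannZeta₁ (c + w) * Complex.exp (-L w))
      (fun w hw => (hder w hw).differentiableAt.differentiableWithinAt)
      (fun w hw => by
        rw [fderivWithin_of_isOpen Metric.isOpen_ball hw]
        ext; simp [(hder w hw).deriv])
      hw (Metric.mem_ball_self (by norm_num))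
    simpa [hL0] using this
  set M : ℝ := Real.log (2 + K * (3 * (5 * (1 + ‖s‖)) ^ 2)) with hM
  have hMpos : 0 < M := Real.log_pos (by have : 0 ≤ K * (3 * (5 * (1 + ‖s‖)) ^ 2) := by positivity
                                         linarith)
  have hMle : M ≤ C₁ * (1 + ‖s‖) ^ ε := hC₁l _ (by linarith [norm_nonneg s])
  have hLd : DifferentiableOn ℂ L (Metric.ball 0 (3/2)) :=
    fun w hw => (hL w hw).differentiableAt.differentiableWithinAt
  have hmaps : Set.MapsTo L (Metric.ball 0 (3/2)) {z | z.re ≤ M} := by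
    intro w hw
    have h1 := congrArg norm (hE w hw)
    rw [norm_mul, Complex.norm_exp, Complex.neg_re] at h1
    have h2 := hKl s.im
    have h3 := C1_zeta1_bound (hre w hw).le
    have hw' : ‖w‖ < 3/2 := by simpa using hw
    have h4 : ‖c + w‖ ≤ ‖s‖ + 4 - 1/2 := by
      refine (norm_add_le _ _).trans ?_; linarith
    have h5 : ‖riemannZeta₁ (c + w)‖ ≤ 3 * (5 * (1 + ‖s‖)) ^ 2 := by
      refine h3.trans ?_
      gcongr
      linarith [norm_nonneg s]
    have h6 : 1 ≤ K * (3 * (5 * (1 + ‖s‖)) ^ 2) * Real.exp (-(L w).re) := by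
      calc 1 ≤ K * ‖riemannZeta₁ c‖ := h2
        _ = K * ‖riemannZeta₁ (c + w)‖ * Real.exp (-(L w).re) := by rw [← h1]; ring
        _ ≤ _ := by gcongr
    have h7 : Real.exp (L w).re ≤ 2 + K * (3 * (5 * (1 + ‖s‖)) ^ 2) := by
      rw [Real.exp_neg, ← div_eq_mul_inv, le_div_iff₀ (Real.exp_pos _)] at h6
      linarith
    show (L w).re ≤ M
    rw [hM, Real.le_log_iff_exp_le (by positivity)]
    exact h7
  have hBC : ∀ w, ‖w‖ ≤ 3/2 - a/2 → ‖L w‖ ≤ 2 * M * (3/2) / (a/2) := by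
    intro w hw
    have h1 := Complex.borelCaratheodory_zero hMpos hLd hmaps (by norm_num) (z := w)
      (by simp; linarith) hL0
    refine h1.trans ?_
    gcongr <;> linarith
  have hzn : ‖z‖ ≤ 3/2 - a := by
    rw [hz, Complex.norm_real, Real.norm_eq_abs, abs_le]; constructor <;> linarith
  have hsub : Metric.closedBall z (a/2) ⊆ Metric.ball 0 (3/2) := by
    intro w hw
    rw [Metric.mem_closedBall, dist_eq_norm] at hw
    have : ‖w‖ ≤ ‖w - z‖ + ‖z‖ := by simpa using norm_add_le (w - z) z
    simp; linarith
  have hCau := Complex.norm_deriv_le_of_forall_mem_sphere_norm_le (c := z) (R := a/2) (f := L)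
    (C := 2 * M * (3/2) / (a/2)) (by positivity) ((hLd.mono hsub).diffContOnCl_ball (subset_refl _)) (by
      intro w hw
      rw [mem_sphere_iff_norm] at hw
      have : ‖w‖ ≤ ‖w - z‖ + ‖z‖ := by simpa using norm_add_le (w - z) z
      exact hBC w (by linarith))
  rw [(hL z (hsub (Metric.mem_closedBall_self (by positivity)))).deriv] at hCau
  have : f z = deriv riemannZeta₁ s / riemannZeta₁ s := by simp only [hf]; rw [← hsz]
  rw [← this]
  refine hCau.trans ?_
  have e : 2 * C₁ * (3/2) / (a/2) / (a/2) * (1 + ‖s‖) ^ ε = 2 * (C₁ * (1 + ‖s‖) ^ ε) * (3/2) / (a/2) / (a/2) := by ring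
  rw [e]
  gcongr


open scoped FourierTransform SchwartzMap in
lemma C1_plancherel (g : ℝ → ℂ) (h1 : Integrable g) (h2 : MemLp g 2) :
    ∫⁻ u, ‖𝓕⁻ g u‖ₑ ^ 2 ≤ ∫⁻ u, ‖g u‖ₑ ^ 2 := by
  set gl : Lp (α := ℝ) ℂ 2 volume := h2.toLp g with hgl
  set G : Lp (α := ℝ) ℂ 2 volume := 𝓕 gl with hG
  have hcont : Continuous (𝓕 g) :=
    VectorFourier.fourierIntegral_continuous Real.continuous_fourierChar (L := (innerₗ ℝ : ℝ →ₗ[ℝ] ℝ →ₗ[ℝ] ℝ)) continuous_inner h1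
  have hae : ∀ᵐ x, G x = 𝓕 g x := by
    refine ae_eq_of_integral_contDiff_smul_eq ?_ hcont.locallyIntegrable ?_
    · exact (Lp.memLp G).locallyIntegrable (by norm_num)
    · intro φ hφ hφc
      have hc1 : HasCompactSupport (fun x => (φ x : ℂ)) := hφc.comp_left (g := fun r : ℝ => (r:ℂ)) (by simp)
      have hc2 : ContDiff ℝ (⊤ : ℕ∞) (fun x => (φ x : ℂ)) := Complex.ofRealCLM.contDiff.comp hφ
      set Φ : 𝓢(ℝ, ℂ) := hc1.toSchwartzMap hc2 with hΦ
      have hΦx : ∀ x, Φ x = (φ x : ℂ) := fun x => rfl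
      have e1 : ∫ x, φ x • G x = ∫ x, Φ x • G x := by
        congr 1
      have e2 : ∫ x, φ x • 𝓕 g x = ∫ x, Φ x • 𝓕 g x := by
        congr 1
      rw [e1, e2]
      have e3 := Lp.toTemperedDistribution_apply (μ := volume) G Φ
      rw [← e3, hG, ← Lp.fourier_toTemperedDistribution_eq, TemperedDistribution.fourier_apply,
        Lp.toTemperedDistribution_apply]
      have e4 : ∫ x, (𝓕 Φ) x • gl x = ∫ x, (𝓕 (Φ : ℝ → ℂ)) x • g x := by
        refine integral_congr_ae ?_
        filter_upwards [h2.coeFn_toLp] with x hx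
        rw [hgl, hx, SchwartzMap.fourier_coe]
      rw [e4]
      have := VectorFourier.integral_fourierIntegral_smul_eq_flip (μ := volume) (ν := volume)
        (L := (innerₗ ℝ : ℝ →ₗ[ℝ] ℝ →ₗ[ℝ] ℝ)) Real.continuous_fourierChar (f := (Φ : ℝ → ℂ)) (g := g)
        continuous_inner Φ.integrable h1
      rw [flip_innerₗ] at this
      exact this
  have hn : ∫⁻ u, ‖𝓕 g u‖ₑ ^ 2 = ∫⁻ u, ‖g u‖ₑ ^ 2 := by
    have e1 : ‖G‖ = ‖gl‖ := Lp.norm_fourier_eq gl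
    have e2 : eLpNorm G 2 volume = eLpNorm gl 2 volume := by
      rw [Lp.norm_def, Lp.norm_def] at e1
      exact (ENNReal.toReal_eq_toReal_iff' (Lp.eLpNorm_ne_top G) (Lp.eLpNorm_ne_top gl)).mp e1
    rw [eLpNorm_congr_ae hae, eLpNorm_congr_ae h2.coeFn_toLp] at e2
    rw [eLpNorm_eq_lintegral_rpow_enorm_toReal (by norm_num) (by norm_num),
      eLpNorm_eq_lintegral_rpow_enorm_toReal (by norm_num) (by norm_num)] at e2
    have := congrArg (fun x => x ^ (2:ℝ)) e2
    simp only [← ENNReal.rpow_mul] at this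
    norm_num at this
    exact this
  rw [← hn]
  have : ∀ u, 𝓕⁻ g u = 𝓕 g (-u) := fun u => Real.fourierInv_eq_fourier_neg g u
  simp_rw [this]
  have := lintegral_neg_eq_self (fun u : ℝ => ‖𝓕 g u‖ₑ ^ 2) (μ := volume)
  exact this.le


lemma C1_integrable_vert {K : ℂ → ℂ} {σ : ℝ} {C : ℝ}
    (hK : Continuous fun y : ℝ => K (σ + y * Complex.I))
    (hb : ∀ y : ℝ, ‖K (σ + y * Complex.I)‖ ≤ C * (1 + |y|) ^ (-(3/2) : ℝ)) :
    Integrable (fun y : ℝ => K (σ + y * Complex.I)) := by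
  have h1 : Integrable (fun y : ℝ => C * (1 + ‖y‖) ^ (-(3/2) : ℝ)) :=
    (integrable_one_add_norm (by norm_num)).const_mul C
  exact h1.mono' hK.aestronglyMeasurable (Filter.Eventually.of_forall hb)

lemma C1_shift {K : ℂ → ℂ} {σ₁ σ₂ C : ℝ} (h12 : σ₁ ≤ σ₂)
    (hd : ∀ s : ℂ, σ₁ ≤ s.re → s.re ≤ σ₂ → DifferentiableAt ℂ K s)
    (hb : ∀ s : ℂ, σ₁ ≤ s.re → s.re ≤ σ₂ → ‖K s‖ ≤ C * (1 + |s.im|) ^ (-(3/2) : ℝ)) :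
    ∫ y : ℝ, K (σ₁ + y * Complex.I) = ∫ y : ℝ, K (σ₂ + y * Complex.I) := by
  have hcont : ∀ σ : ℝ, σ₁ ≤ σ → σ ≤ σ₂ → Continuous fun y : ℝ => K (σ + y * Complex.I) := by
    intro σ h1 h2
    refine continuous_iff_continuousAt.mpr fun y => ?_
    have := (hd (σ + y * Complex.I) (by simpa using h1) (by simpa using h2)).continuousAt
    exact ContinuousAt.comp (f := fun y : ℝ => (σ + y * Complex.I : ℂ)) this (by fun_prop)
  have hbd : ∀ σ : ℝ, σ₁ ≤ σ → σ ≤ σ₂ → ∀ y : ℝ,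
      ‖K (σ + y * Complex.I)‖ ≤ C * (1 + |y|) ^ (-(3/2) : ℝ) := by
    intro σ h1 h2 y
    simpa using hb (σ + y * Complex.I) (by simpa using h1) (by simpa using h2)
  have hint1 := C1_integrable_vert (hcont σ₁ le_rfl h12) (hbd σ₁ le_rfl h12)
  have hint2 := C1_integrable_vert (hcont σ₂ h12 le_rfl) (hbd σ₂ h12 le_rfl)
  have ht : Filter.Tendsto (fun T : ℝ => T) Filter.atTop Filter.atTop := Filter.tendsto_id
  have hT1 := intervalIntegral_tendsto_integral hint1 Filter.tendsto_neg_atTop_atBot ht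
  have hT2 := intervalIntegral_tendsto_integral hint2 Filter.tendsto_neg_atTop_atBot ht
  have hdiff : Filter.Tendsto (fun T : ℝ => (∫ y in (-T)..T, K (σ₂ + y * Complex.I)) -
      ∫ y in (-T)..T, K (σ₁ + y * Complex.I)) Filter.atTop (nhds 0) := by
    have hlim : Filter.Tendsto (fun T : ℝ => 2 * (C * (1 + T) ^ (-(3/2) : ℝ) * (σ₂ - σ₁)))
        Filter.atTop (nhds 0) := by
      have h0 : Filter.Tendsto (fun T : ℝ => (1 + T) ^ (-(3/2) : ℝ)) Filter.atTop (nhds 0) :=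
        (tendsto_rpow_neg_atTop (by norm_num : (0:ℝ) < 3/2)).comp
          (Filter.tendsto_atTop_add_const_left _ 1 Filter.tendsto_id)
      have := ((h0.const_mul C).mul_const (σ₂ - σ₁)).const_mul 2
      simpa using this
    refine squeeze_zero_norm' ?_ hlim
    filter_upwards [Filter.eventually_ge_atTop 0] with T hT
    have hrect := Complex.integral_boundary_rect_eq_zero_of_differentiableOn K
      (σ₁ + (-T : ℝ) * Complex.I) (σ₂ + (T : ℝ) * Complex.I) (by
        intro s hs
        rw [Complex.mem_reProdIm] at hs
        have := hs.1
        simp only [Complex.add_re, Complex.ofReal_re, Complex.mul_re, Complex.I_re, mul_zero,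
          Complex.ofReal_im, Complex.I_im, mul_one, sub_self, add_zero, Set.uIcc_of_le h12] at this
        exact (hd s this.1 this.2).differentiableWithinAt)
    simp only [Complex.add_re, Complex.ofReal_re, Complex.mul_re, Complex.I_re, mul_zero,
          Complex.ofReal_im, Complex.I_im, mul_one, sub_self, add_zero, Complex.add_im,
          Complex.mul_im, zero_add, smul_eq_mul] at hrect
    have hh : ∀ τ : ℝ, |τ| = T → ‖∫ x in σ₁..σ₂, K (x + τ * Complex.I)‖ ≤
        C * (1 + T) ^ (-(3/2) : ℝ) * (σ₂ - σ₁) := by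
      intro τ hτ
      have := intervalIntegral.norm_integral_le_of_norm_le_const (a := σ₁) (b := σ₂)
        (f := fun x : ℝ => K (x + τ * Complex.I)) (C := C * (1 + T) ^ (-(3/2) : ℝ)) (by
          intro x hx
          rw [Set.uIoc_of_le h12] at hx
          rw [← hτ]
          exact hbd x hx.1.le hx.2 τ)
      rwa [abs_of_nonneg (by linarith)] at this
    have h1 := hh (-T) (by rw [abs_neg, abs_of_nonneg hT])
    have h2 := hh T (abs_of_nonneg hT)
    set A := ∫ x in σ₁..σ₂, K (x + (-T : ℝ) * Complex.I)
    set B := ∫ x in σ₁..σ₂, K (x + (T : ℝ) * Complex.I)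
    set P := ∫ y in (-T)..T, K (σ₂ + y * Complex.I)
    set Q := ∫ y in (-T)..T, K (σ₁ + y * Complex.I)
    have e : P - Q = Complex.I * (A - B) := by
      have : Complex.I * (A - B + Complex.I * P - Complex.I * Q) = 0 := by rw [hrect, mul_zero]
      linear_combination -this + (P - Q) * Complex.I_mul_I
    rw [e, norm_mul, Complex.norm_I, one_mul]
    exact (norm_sub_le _ _).trans (by linarith)
  have := tendsto_nhds_unique (hT2.sub hT1) hdiff
  exact (sub_eq_zero.mp this).symm


lemma C1_psi_eq (x : ℝ) : chebyshevPsi x = Chebyshev.psi x := by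
  rw [Chebyshev.psi_eq_sum_Icc, chebyshevPsi]
  congr 1; ext n; simp

lemma C1_psi_mono : Monotone chebyshevPsi := by
  have : chebyshevPsi = Chebyshev.psi := funext C1_psi_eq
  rw [this]; exact Chebyshev.psi_mono

lemma C1_psi_nonneg (x : ℝ) : 0 ≤ chebyshevPsi x :=
  Finset.sum_nonneg fun _ _ => ArithmeticFunction.vonMangoldt_nonneg

lemma C1_psi_le {x : ℝ} (hx : 0 ≤ x) : chebyshevPsi x ≤ 6 * x := by
  rw [C1_psi_eq]
  refine (Chebyshev.psi_le_const_mul_self hx).trans ?_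
  have : Real.log 4 ≤ 2 := by
    rw [show (4:ℝ) = 2 ^ 2 by norm_num, Real.log_pow]
    have := Real.log_two_lt_d9
    push_cast; linarith
  nlinarith

/-- the remainder -/
noncomputable def C1R (x : ℝ) : ℝ := chebyshevPsi x - x

lemma C1R_meas : Measurable C1R := C1_psi_mono.measurable.sub measurable_id

lemma C1R_abs {x : ℝ} (hx : 0 ≤ x) : |C1R x| ≤ 6 * x := by
  have h1 := C1_psi_le hx
  have h2 := C1_psi_nonneg x
  rw [C1R, abs_le]; constructor <;> linarith

noncomputable def C1r (u : ℝ) : ℝ := Set.indicator (Set.Ioi 0) (fun u => C1R (Real.exp u)) u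

lemma C1r_meas : Measurable C1r :=
  (C1R_meas.comp Real.measurable_exp).indicator measurableSet_Ioi

lemma C1r_abs (u : ℝ) : |C1r u| ≤ Set.indicator (Set.Ioi 0) (fun u => 6 * Real.exp u) u := by
  unfold C1r
  by_cases h : u ∈ Set.Ioi (0:ℝ)
  · simp only [Set.indicator_of_mem h]; exact C1R_abs (Real.exp_pos u).le
  · simp [Set.indicator_of_notMem h]

noncomputable def C1F (s : ℂ) : ℂ := -(deriv riemannZeta₁ s / riemannZeta₁ s + 1) / s

lemma C1_transform_x {s : ℂ} (hs : 1 < s.re) :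
    IntegrableOn (fun t : ℝ => (C1R t : ℂ) * (t : ℂ) ^ (-(s + 1))) (Set.Ioi 1) ∧
    ∫ t in Set.Ioi (1:ℝ), (C1R t : ℂ) * (t : ℂ) ^ (-(s + 1)) = C1F s := by
  have hs0 : s ≠ 0 := by rintro rfl; simp at hs; linarith
  have hs1 : s - 1 ≠ 0 := by
    intro h; have : s = 1 := by linear_combination h
    rw [this] at hs; simp at hs
  have e1 : ∀ t ∈ Set.Ioi (1:ℝ), (t : ℂ) * (t : ℂ) ^ (-(s + 1)) = (t:ℂ) ^ (-s) := by
    intro t ht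
    have ht0 : (t:ℂ) ≠ 0 := by
      simp only [ne_eq, Complex.ofReal_eq_zero]; simp at ht; linarith
    rw [show -s = 1 + -(s+1) by ring, Complex.cpow_add _ _ ht0, Complex.cpow_one]
  have i1 : IntegrableOn (fun t : ℝ => (t : ℂ) * (t : ℂ) ^ (-(s + 1))) (Set.Ioi 1) := by
    refine (integrableOn_Ioi_cpow_of_lt (a := -s) (by simpa using hs) zero_lt_one).congr_fun
      (fun t ht => (e1 t ht).symm) measurableSet_Ioi
  have v1 : ∫ t in Set.Ioi (1:ℝ), (t : ℂ) * (t : ℂ) ^ (-(s + 1)) = 1 / (s - 1) := by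
    rw [setIntegral_congr_fun measurableSet_Ioi e1,
      integral_Ioi_cpow_of_lt (a := -s) (by simpa using hs) zero_lt_one]
    simp only [Complex.ofReal_one, Complex.one_cpow]
    rw [show -s + 1 = -(s-1) by ring, div_neg, neg_div, neg_neg]
  have i2 : IntegrableOn (fun t : ℝ => (chebyshevPsi t : ℂ) * (t : ℂ) ^ (-(s + 1))) (Set.Ioi 1) := by
    refine Integrable.mono' (g := fun t : ℝ => 6 * ‖(t : ℂ) * (t : ℂ) ^ (-(s + 1))‖)
      (i1.norm.const_mul 6) ?_ ?_
    · refine ((Complex.measurable_ofReal.comp C1_psi_mono.measurable).mul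
        ?_).aestronglyMeasurable
      exact (Complex.measurable_ofReal).pow_const _
    · refine (ae_restrict_iff' measurableSet_Ioi).2 (Filter.Eventually.of_forall fun t ht => ?_)
      have ht0 : (0:ℝ) ≤ t := by simp at ht; linarith
      rw [norm_mul, norm_mul, Complex.norm_real, Complex.norm_real, Real.norm_eq_abs,
        Real.norm_eq_abs, abs_of_nonneg (C1_psi_nonneg t), abs_of_nonneg ht0]
      have := C1_psi_le ht0
      have h0 := norm_nonneg ((t:ℂ) ^ (-(s+1)))
      nlinarith
  have v2 : ∫ t in Set.Ioi (1:ℝ), (chebyshevPsi t : ℂ) * (t : ℂ) ^ (-(s + 1))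
      = -deriv riemannZeta s / riemannZeta s / s := by
    have key := LSeries_eq_mul_integral_of_nonneg (fun n => ArithmeticFunction.vonMangoldt n)
      (r := 1) zero_le_one (s := s) hs ?_ (fun n => ArithmeticFunction.vonMangoldt_nonneg)
    · rw [ArithmeticFunction.LSeries_vonMangoldt_eq_deriv_riemannZeta_div hs] at key
      rw [key, mul_div_cancel_left₀ _ hs0]
      refine setIntegral_congr_fun measurableSet_Ioi fun t ht => ?_
      congr 1
      rw [C1_psi_eq, Chebyshev.psi, ← Finset.Icc_add_one_left_eq_Ioc]
      push_cast; rfl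
    · refine Asymptotics.IsBigO.of_bound 6 (Filter.Eventually.of_forall fun n => ?_)
      have h1 := C1_psi_le (Nat.cast_nonneg n)
      rw [C1_psi_eq, Chebyshev.psi, ← Finset.Icc_add_one_left_eq_Ioc, Nat.floor_natCast] at h1
      rw [Real.norm_of_nonneg (Finset.sum_nonneg fun _ _ => ArithmeticFunction.vonMangoldt_nonneg),
        Real.rpow_one, Real.norm_of_nonneg (Nat.cast_nonneg n)]
      simpa using h1
  have hz : riemannZeta s ≠ 0 := riemannZeta_ne_zero_of_one_lt_re hs
  have hsne : s ≠ 1 := by intro h; exact hs1 (by rw [h]; ring)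
  have rel : riemannZeta s = (s - 1)⁻¹ * riemannZeta₁ s := by
    grind [riemannZeta₁, riemannZeta₀]
  have hz1 : riemannZeta₁ s ≠ 0 := by
    intro h; rw [h, mul_zero] at rel; exact hz rel
  have rel' : deriv riemannZeta s = - ((s - 1)⁻¹) ^ 2 * (riemannZeta₁ s) + (s - 1)⁻¹ * deriv riemannZeta₁ s := by
    have hE : riemannZeta =ᶠ[nhds s] fun s => (s-1)⁻¹ * riemannZeta₁ s := by
      filter_upwards [isOpen_ne.mem_nhds hsne] with z hz
      have : z ≠ 1 := hz
      have : z - 1 ≠ 0 := sub_ne_zero.2 this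
      grind [riemannZeta₁, riemannZeta₀]
    rw [hE.deriv_eq]
    have h1 : HasDerivAt (fun s : ℂ => (s-1)⁻¹) (-1 / (s-1)^2) s :=
      ((hasDerivAt_id s).sub_const 1).inv hs1
    rw [(HasDerivAt.fun_mul h1 (differentiable_riemannZeta₁ s).hasDerivAt).deriv]
    field_simp
  constructor
  · refine (i2.sub i1).congr_fun (fun t _ => ?_) measurableSet_Ioi
    simp only [C1R, Pi.sub_apply]; push_cast; ring
  · have : ∀ t : ℝ, (C1R t : ℂ) * (t : ℂ) ^ (-(s + 1)) =
      (chebyshevPsi t : ℂ) * (t : ℂ) ^ (-(s + 1)) - (t : ℂ) * (t : ℂ) ^ (-(s + 1)) := by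
      intro t; simp only [C1R]; push_cast; ring
    simp_rw [this]
    rw [integral_sub i2 i1, v1, v2, rel, rel', C1F]
    field_simp
    ring

lemma C1_transform_r {s : ℂ} (hs : 1 < s.re) :
    Integrable (fun u : ℝ => (C1r u : ℂ) * Complex.exp (-s * u)) ∧
    ∫ u : ℝ, (C1r u : ℂ) * Complex.exp (-s * u) = C1F s := by
  obtain ⟨h1, h2⟩ := C1_transform_x hs
  have e : ∀ u : ℝ, Real.exp u • ((C1R (Real.exp u) : ℂ) * ((Real.exp u : ℝ) : ℂ) ^ (-(s + 1)))
      = (C1R (Real.exp u) : ℂ) * Complex.exp (-s * u) := by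
    intro u
    have h0 : ((Real.exp u : ℝ) : ℂ) ≠ 0 := by exact_mod_cast (Real.exp_pos u).ne'
    rw [Complex.real_smul, Complex.cpow_def_of_ne_zero h0, ← Complex.ofReal_log (Real.exp_pos u).le,
      Real.log_exp, Complex.ofReal_exp, mul_left_comm, ← Complex.exp_add]
    congr 2; ring
  have e2 : (fun u : ℝ => (C1r u : ℂ) * Complex.exp (-s * u)) =
      Set.indicator (Set.Ioi 0) (fun u : ℝ => (C1R (Real.exp u) : ℂ) * Complex.exp (-s * u)) := by
    ext u
    unfold C1r
    by_cases h : u ∈ Set.Ioi (0:ℝ)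
    · simp only [Set.indicator_of_mem h]
    · simp [Set.indicator_of_notMem h]
  have hI := integrableOn_comp_exp_Ioi (fun t : ℝ => (C1R t : ℂ) * (t : ℂ) ^ (-(s + 1))) 0
  have hJ := integral_comp_exp_Ioi (fun t : ℝ => (C1R t : ℂ) * (t : ℂ) ^ (-(s + 1))) 0
  simp only [e, Real.exp_zero] at hI hJ
  rw [e2]
  constructor
  · rw [integrable_indicator_iff measurableSet_Ioi]
    exact hI.2 h1
  · rw [integral_indicator measurableSet_Ioi, hJ, h2]


lemma C1F_bound (hRH : RiemannHypothesis) {a ε : ℝ} (ha : 0 < a) (ha1 : a < 1) (hε : 0 < ε) :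
    ∃ C, 0 < C ∧ ∀ s : ℂ, 1/2 + a ≤ s.re → s.re ≤ 2 → ‖C1F s‖ ≤ C * (1 + ‖s‖) ^ (ε - 1) := by
  obtain ⟨C, hC, hb⟩ := C1_logDeriv_bound hRH ha ha1 hε
  refine ⟨3 * (C + 1), by positivity, fun s h1 h2 => ?_⟩
  have hn : 1/2 ≤ ‖s‖ := by
    have := Complex.re_le_norm s; linarith
  have h3 := hb s h1 h2
  have h4 : (1:ℝ) ≤ (1 + ‖s‖) ^ ε := Real.one_le_rpow (by linarith) hε.le
  rw [C1F, norm_div, norm_neg, div_le_iff₀ (by linarith), Real.rpow_sub (by linarith), Real.rpow_one]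
  have h5 : ‖deriv riemannZeta₁ s / riemannZeta₁ s + 1‖ ≤ (C + 1) * (1 + ‖s‖) ^ ε := by
    refine (norm_add_le _ _).trans ?_
    rw [norm_one]; nlinarith
  refine h5.trans ?_
  have h6 : (1:ℝ) ≤ 3 * (‖s‖ / (1 + ‖s‖)) := by
    rw [← mul_div_assoc, le_div_iff₀ (by linarith)]; linarith
  have : 3 * (C + 1) * ((1 + ‖s‖) ^ ε / (1 + ‖s‖)) * ‖s‖ =
    ((C + 1) * (1 + ‖s‖) ^ ε) * (3 * (‖s‖ / (1 + ‖s‖))) := by ring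
  rw [this]
  exact le_mul_of_one_le_right (by positivity) h6

lemma C1F_diff (hRH : RiemannHypothesis) {s : ℂ} (hs : 1/2 < s.re) : DifferentiableAt ℂ C1F s := by
  unfold C1F
  have h0 : s ≠ 0 := by rintro rfl; simp at hs; linarith
  have hz := C1_zeta1_ne_zero hRH hs
  have hd : Differentiable ℂ (deriv riemannZeta₁) := differentiable_riemannZeta₁.deriv
  have := differentiable_riemannZeta₁ s
  have := hd s
  fun_prop (disch := assumption)

noncomputable def C1p (u : ℝ) : ℝ := ∫ t in (0:ℝ)..u, C1r t

lemma C1r_ii (a b : ℝ) : IntervalIntegrable C1r volume a b := by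
  have h : IntervalIntegrable (fun u => 6 * Real.exp u) volume a b :=
    (by fun_prop : Continuous fun u => 6 * Real.exp u).intervalIntegrable _ _
  refine h.mono_fun' C1r_meas.aestronglyMeasurable (Filter.Eventually.of_forall fun u => ?_)
  show |C1r u| ≤ 6 * Real.exp u
  refine (C1r_abs u).trans ?_
  exact Set.indicator_le_self' (fun _ _ => by positivity) u

lemma C1p_cont : Continuous C1p := intervalIntegral.continuous_primitive C1r_ii 0

lemma C1p_eq (u : ℝ) : C1p u = ∫ t in Set.Iio u, C1r t := by
  have hz : ∀ t, t ≤ 0 → C1r t = 0 := fun t ht => by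
    simp [C1r, Set.indicator_of_notMem, ht]
  rcases le_or_gt 0 u with h | h
  · rw [C1p, intervalIntegral.integral_of_le h, ← integral_Iic_eq_integral_Iio,
      ← Set.Iic_union_Ioc_eq_Iic h, setIntegral_union, setIntegral_eq_zero_of_forall_eq_zero (t := Set.Iic 0), zero_add]
    · exact fun t ht => hz t ht
    · exact Set.Iic_disjoint_Ioc le_rfl
    · exact measurableSet_Ioc
    · exact integrableOn_zero.congr_fun (fun t ht => (hz t ht).symm) measurableSet_Iic
    · exact ((C1r_ii 0 u).1)
  · rw [C1p, intervalIntegral.integral_of_ge h.le,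
      setIntegral_eq_zero_of_forall_eq_zero, setIntegral_eq_zero_of_forall_eq_zero, neg_zero]
    · exact fun t ht => hz t (le_of_lt (lt_trans ht h))
    · exact fun t ht => hz t ht.2

lemma C1_transform_p {s : ℂ} (hs : 1 < s.re) :
    Integrable (fun u : ℝ => (C1p u : ℂ) * Complex.exp (-s * u)) ∧
    ∫ u : ℝ, (C1p u : ℂ) * Complex.exp (-s * u) = C1F s / s := by
  obtain ⟨i1, v1⟩ := C1_transform_r hs
  have hs0 : s ≠ 0 := by rintro rfl; simp at hs; linarith
  set g : ℝ → ℂ := Set.indicator (Set.Ioi 0) (fun u : ℝ => Complex.exp (-s * u)) with hg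
  have hre : (-s).re < 0 := by simp; linarith
  have i2 : Integrable g := by
    rw [hg, integrable_indicator_iff measurableSet_Ioi]
    exact integrableOn_exp_mul_complex_Ioi hre 0
  have v2 : ∫ u, g u = 1 / s := by
    rw [hg, integral_indicator measurableSet_Ioi, integral_exp_mul_complex_Ioi hre]
    simp
  have hconv : ∀ u : ℝ, convolution (fun u : ℝ => (C1r u : ℂ) * Complex.exp (-s * u)) g
      (ContinuousLinearMap.mul ℂ ℂ) volume u = (C1p u : ℂ) * Complex.exp (-s * u) := by
    intro u
    rw [convolution_def, C1p_eq, ← integral_indicator measurableSet_Iio, ← integral_complex_ofReal,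
      ← integral_mul_const]
    refine integral_congr_ae (Filter.Eventually.of_forall fun t => ?_)
    simp only [ContinuousLinearMap.mul_apply', hg]
    by_cases h : t < u
    · rw [Set.indicator_of_mem (show t ∈ Set.Iio u from h),
        Set.indicator_of_mem (show u - t ∈ Set.Ioi (0:ℝ) by simpa using h), mul_assoc, ← Complex.exp_add]
      congr 2; push_cast; ring
    · rw [Set.indicator_of_notMem (show t ∉ Set.Iio u from h),
        Set.indicator_of_notMem (show u - t ∉ Set.Ioi (0:ℝ) by simpa using h)]
      simp
  constructor
  · refine (Integrable.integrable_convolution (ContinuousLinearMap.mul ℂ ℂ) i1 i2).congr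
      (Filter.Eventually.of_forall hconv)
  · simp_rw [← hconv]
    rw [integral_convolution (ContinuousLinearMap.mul ℂ ℂ) i1 i2, v1, v2]
    simp [div_eq_mul_inv]

lemma C1_sq_bound (hRH : RiemannHypothesis) {a : ℝ} (ha : 0 < a) (ha1 : a < 1) :
    ∃ C, 0 < C ∧ ∀ s : ℂ, 1/2 + a ≤ s.re → s.re ≤ 2 → ‖C1F s / s‖ ≤ C * (1 + |s.im|) ^ (-(3/2):ℝ) := by
  obtain ⟨C, hC, hb⟩ := C1F_bound hRH ha ha1 (ε := 1/2) (by norm_num)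
  refine ⟨3 * C, by positivity, fun s h1 h2 => ?_⟩
  have hn : 1/2 ≤ ‖s‖ := by
    have := Complex.re_le_norm s; linarith
  have hi := Complex.abs_im_le_norm s
  have h6 : 1 + ‖s‖ ≤ 3 * ‖s‖ := by linarith
  have h7 : (1 + ‖s‖) ^ (-(3/2):ℝ) ≤ (1 + |s.im|) ^ (-(3/2):ℝ) :=
    Real.rpow_le_rpow_of_nonpos (by positivity) (by linarith) (by norm_num)
  have h8 : (1 + ‖s‖) ^ (1/2 - 1 : ℝ) = (1 + ‖s‖) ^ (-(3/2):ℝ) * (1 + ‖s‖) := by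
    rw [← Real.rpow_add_one (by positivity)]; norm_num
  rw [norm_div, div_le_iff₀ (by linarith)]
  calc ‖C1F s‖ ≤ C * ((1 + ‖s‖) ^ (-(3/2):ℝ) * (1 + ‖s‖)) := by rw [← h8]; exact hb s h1 h2
    _ ≤ C * ((1 + |s.im|) ^ (-(3/2):ℝ) * (3 * ‖s‖)) := by gcongr
    _ = _ := by ring

open scoped FourierTransform in
lemma C1_p_inv (hRH : RiemannHypothesis) {a : ℝ} (ha : 0 < a) (ha1 : a < 1) (u : ℝ) :
    (C1p u : ℂ) = (1 / (2 * π) : ℝ) * ∫ y : ℝ, C1F ((1/2 + a : ℝ) + y * Complex.I) / ((1/2 + a : ℝ) + y * Complex.I) *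
      Complex.exp (((1/2 + a : ℝ) + y * Complex.I) * u) := by
  obtain ⟨C, hC, hb⟩ := C1_sq_bound hRH ha ha1
  have hdiff : ∀ s : ℂ, 1/2 < s.re → DifferentiableAt ℂ (fun s => C1F s / s) s := by
    intro s hs
    have h0 : s ≠ 0 := by rintro rfl; simp at hs; linarith
    exact (C1F_diff hRH hs).div differentiableAt_id h0
  have hcont2 : Continuous fun y : ℝ => (fun s => C1F s / s) (((2:ℝ):ℂ) + y * Complex.I) := by
    rw [continuous_iff_continuousAt]
    intro y
    refine ContinuousAt.comp (g := fun s => C1F s / s) (f := fun y : ℝ => ((2:ℝ):ℂ) + y * Complex.I) (hdiff _ (by simp; norm_num)).continuousAt ?_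
    fun_prop
  have hint2 : Integrable fun y : ℝ => C1F (((2:ℝ):ℂ) + y * Complex.I) / (((2:ℝ):ℂ) + y * Complex.I) := by
    refine C1_integrable_vert (K := fun s => C1F s / s) (σ := 2) (C := C) hcont2 fun y => ?_
    have := hb (((2:ℝ):ℂ) + y * Complex.I) (by simp; linarith) (by simp)
    simpa using this
  have hshift := C1_shift (K := fun s => C1F s / s * Complex.exp (s * u)) (σ₁ := 1/2 + a) (σ₂ := 2)
    (C := C * Real.exp (2 * |u|)) (by linarith)
    (fun s h1 _ => (hdiff s (by linarith)).mul (by fun_prop)) (fun s h1 h2 => by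
      rw [norm_mul, Complex.norm_exp, mul_right_comm]
      have h3 := hb s h1 h2
      refine mul_le_mul h3 ?_ (by positivity) (by positivity)
      rw [Real.exp_le_exp]
      simp only [Complex.mul_re, Complex.ofReal_re, Complex.ofReal_im, mul_zero, sub_zero]
      calc s.re * u ≤ |s.re * u| := le_abs_self _
        _ = s.re * |u| := by rw [abs_mul, abs_of_nonneg (by linarith)]
        _ ≤ _ := by gcongr)
  rw [hshift]
  have hF : ∀ t : ℝ, 𝓕 (fun u : ℝ => (C1p u : ℂ) * Complex.exp (-(2:ℂ) * u)) t =
      C1F (((2:ℝ):ℂ) + ((2 * π * t : ℝ) : ℂ) * Complex.I) / (((2:ℝ):ℂ) + ((2 * π * t : ℝ):ℂ) * Complex.I) := by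
    intro t
    rw [Real.fourier_real_eq_integral_exp_smul,
      ← (C1_transform_p (s := ((2:ℝ):ℂ) + ((2 * π * t : ℝ) : ℂ) * Complex.I) (by simp)).2]
    refine integral_congr_ae (Filter.Eventually.of_forall fun v => ?_)
    simp only [smul_eq_mul]
    rw [mul_left_comm, ← Complex.exp_add]
    congr 2; push_cast; ring
  have hpi : (2 * π : ℝ) ≠ 0 := by positivity
  have hinv := Continuous.fourierInv_fourier_eq (f := fun u : ℝ => (C1p u : ℂ) * Complex.exp (-(2:ℂ) * u))
    (by have := C1p_cont; fun_prop) (C1_transform_p (s := 2) (by simp)).1 (by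
      rw [funext hF]
      exact hint2.comp_mul_left' hpi)
  have h2 := congrFun hinv u
  rw [Real.fourierInv_eq'] at h2
  have h3 : (C1p u : ℂ) = (∫ v : ℝ, Complex.exp (↑(2 * π * inner ℝ v u) * Complex.I) •
     (𝓕 (fun u : ℝ => (C1p u : ℂ) * Complex.exp (-(2:ℂ) * u))) v) * Complex.exp (2 * u) := by
    rw [h2, mul_assoc, ← Complex.exp_add]
    simp
  rw [h3, ← integral_mul_const]
  have h4 := Measure.integral_comp_mul_left (fun y : ℝ => C1F (((2:ℝ):ℂ) + y * Complex.I) / (((2:ℝ):ℂ) + y * Complex.I) *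
      Complex.exp ((((2:ℝ):ℂ) + y * Complex.I) * u)) (2 * π)
  rw [abs_of_nonneg (by positivity), Complex.real_smul] at h4
  rw [one_div]
  refine Eq.trans ?_ h4
  refine integral_congr_ae (Filter.Eventually.of_forall fun v => ?_)
  simp only [hF, smul_eq_mul]
  rw [mul_comm (Complex.exp _), mul_assoc, ← Complex.exp_add]
  congr 2
  simp; ring


lemma C1_exp_sub_one {z : ℂ} (hz : 0 ≤ z.re) : ‖Complex.exp z - 1‖ ≤ Real.exp z.re * ‖z‖ := by
  have hconv : Convex ℝ {w : ℂ | w.re ≤ z.re} := convex_halfSpace_re_le _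
  have := hconv.norm_image_sub_le_of_norm_deriv_le (f := Complex.exp) (C := Real.exp z.re)
    (fun x _ => Complex.differentiableAt_exp) (fun x hx => by
      rw [Complex.deriv_exp, Complex.norm_exp]; exact Real.exp_le_exp.2 hx)
    (x := 0) (y := z) (by simpa using hz) (by simp)
  simpa using this

lemma C1_exp_sub_one_pow {s : ℂ} {κ ε : ℝ} (hs : 0 ≤ s.re) (hκ : 0 < κ) (hε : 0 < ε) (hε1 : ε < 1) :
    ‖Complex.exp (κ * s) - 1‖ ^ 2 ≤ 4 * Real.exp (2 * κ * s.re) * (κ * ‖s‖) ^ (1 - ε) := by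
  have hre : ((κ:ℂ) * s).re = κ * s.re := by simp
  have h0 : 0 ≤ κ * s.re := by positivity
  have e1 := C1_exp_sub_one (z := κ * s) (by rw [hre]; exact h0)
  rw [hre, norm_mul, Complex.norm_real, Real.norm_of_nonneg hκ.le] at e1
  have e2 : ‖Complex.exp (κ * s) - 1‖ ≤ 2 * Real.exp (κ * s.re) := by
    refine (norm_sub_le _ _).trans ?_
    rw [Complex.norm_exp, hre, norm_one]
    have := Real.one_le_exp h0
    linarith
  have e3 : Real.exp (2 * κ * s.re) = Real.exp (κ * s.re) ^ 2 := by
    rw [← Real.exp_nat_mul]; congr 1; push_cast; ring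
  rw [e3]
  set E := Real.exp (κ * s.re)
  have hE : 0 < E := Real.exp_pos _
  set x := κ * ‖s‖
  have hx : 0 ≤ x := by positivity
  have hn := norm_nonneg (Complex.exp (κ * s) - 1)
  rcases le_or_gt 1 x with h | h
  · have : 1 ≤ x ^ (1 - ε) := Real.one_le_rpow h (by linarith)
    calc _ ≤ (2 * E) ^ 2 := by gcongr
      _ = 4 * E ^ 2 * 1 := by ring
      _ ≤ _ := by gcongr
  · have : x ^ 2 ≤ x ^ (1 - ε) := by
      rcases hx.eq_or_lt with h' | h'
      · rw [← h']; rw [Real.zero_rpow (by linarith)]; norm_num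
      · rw [← Real.rpow_natCast]
        exact Real.rpow_le_rpow_of_exponent_ge h' h.le (by push_cast; linarith)
    calc _ ≤ (E * x) ^ 2 := by gcongr
      _ = E ^ 2 * x ^ 2 := by ring
      _ ≤ (4 * E ^ 2) * x ^ (1 - ε) := by gcongr; nlinarith [sq_nonneg E]

open scoped FourierTransform in
lemma C1_secdiff (hRH : RiemannHypothesis) {ε : ℝ} (hε : 0 < ε) (hε1 : ε < 1) :
    ∃ C : ℝ, 0 < C ∧ ∀ κ lam : ℝ, 0 < κ → 0 < lam → lam ≤ 1 →
      ∫⁻ u : ℝ, ENNReal.ofReal (((C1p (u + κ + lam) - C1p (u + κ) - C1p (u + lam) + C1p u) / lam) ^ 2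
        * Real.exp (-(1 + ε) * u)) ≤ ENNReal.ofReal (C * κ ^ (1 - ε) * Real.exp ((1 + ε) * κ)) := by
  have ha : 0 < ε / 2 := by positivity
  have ha1 : ε / 2 < 1 := by linarith
  obtain ⟨C₁, hC₁, hb₁⟩ := C1_sq_bound hRH ha ha1
  obtain ⟨C₂, hC₂, hb₂⟩ := C1F_bound hRH ha ha1 (ε := ε / 4) (by positivity)
  set σ : ℝ := 1/2 + ε / 2 with hσ
  have hIb : Integrable fun t : ℝ => (1 + ‖t‖) ^ (-(1 + ε / 2)) :=
    integrable_one_add_norm (by simp; linarith)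
  have hIpos : 0 ≤ ∫ t : ℝ, (1 + ‖t‖) ^ (-(1 + ε / 2)) := integral_nonneg fun t => by positivity
  set M := ∫ t : ℝ, (1 + ‖t‖) ^ (-(1 + ε / 2)) with hM
  refine ⟨4 * C₂ ^ 2 * Real.exp (1 + ε) * (M + 1), by positivity, fun κ lam hκ hlam hlam1 => ?_⟩
  let S : ℝ → ℂ := fun t => (σ : ℂ) + ((2 * π * t : ℝ) : ℂ) * Complex.I
  have hSre : ∀ t, (S t).re = σ := fun t => by simp [S]
  have hSim : ∀ t, (S t).im = 2 * π * t := fun t => by simp [S]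
  have hSc : Continuous S := by fun_prop
  have hS0 : ∀ t, S t ≠ 0 := fun t h => by
    have := hSre t; rw [h] at this; simp at this; linarith
  have hFc : Continuous fun t => C1F (S t) := by
    rw [continuous_iff_continuousAt]
    intro t
    exact ContinuousAt.comp (g := C1F) (C1F_diff hRH (by rw [hSre]; linarith)).continuousAt hSc.continuousAt
  have hσle : σ ≤ 2 := by linarith
  have hGb : ∀ t, ‖C1F (S t) / S t‖ ≤ C₁ * (1 + ‖t‖) ^ (-(3/2):ℝ) := fun t => by
    refine (hb₁ (S t) (by rw [hSre]) (by rw [hSre]; exact hσle)).trans ?_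
    rw [hSim]
    gcongr C₁ * ?_
    refine Real.rpow_le_rpow_of_nonpos (by positivity) ?_ (by norm_num)
    rw [abs_mul, abs_of_nonneg (by positivity : 0 ≤ 2 * π), Real.norm_eq_abs]
    have := Real.pi_gt_three
    nlinarith [abs_nonneg t]
  have hGi : Integrable fun t => C1F (S t) / S t := by
    refine Integrable.mono' ((integrable_one_add_norm (E := ℝ) (μ := volume) (r := 3/2) (by simp; norm_num)).const_mul C₁)
      (hFc.div hSc hS0).aestronglyMeasurable (Filter.Eventually.of_forall hGb)
  have hpe : ∀ u : ℝ, (C1p u : ℂ) = ∫ t : ℝ, C1F (S t) / S t * Complex.exp (S t * u) := by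
    intro u
    have h4 := Measure.integral_comp_mul_left (fun y : ℝ => C1F ((σ:ℂ) + y * Complex.I) / ((σ:ℂ) + y * Complex.I) *
      Complex.exp (((σ:ℂ) + y * Complex.I) * u)) (2 * π)
    rw [abs_of_nonneg (by positivity), Complex.real_smul, ← one_div] at h4
    rw [C1_p_inv hRH ha ha1 u]
    exact h4.symm
  have hei : ∀ u : ℝ, Integrable fun t : ℝ => C1F (S t) / S t * Complex.exp (S t * u) := by
    intro u
    refine hGi.mul_bdd (c := Real.exp (σ * u)) (by fun_prop) (Filter.Eventually.of_forall fun t => ?_)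
    rw [Complex.norm_exp]; simp [hSre]
  let g : ℝ → ℂ := fun t => C1F (S t) / S t * (Complex.exp (κ * S t) - 1) * (Complex.exp (lam * S t) - 1) / lam
  have hgc : Continuous g := by
    have := hFc.div hSc hS0
    fun_prop
  have hlc : (lam : ℂ) ≠ 0 := by exact_mod_cast hlam.ne'
  have hge : ∀ u t : ℝ, g t * Complex.exp (S t * u) = (C1F (S t) / S t * Complex.exp (S t * (u + κ + lam : ℝ))
     - C1F (S t) / S t * Complex.exp (S t * (u + κ : ℝ)) - C1F (S t) / S t * Complex.exp (S t * (u + lam : ℝ))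
     + C1F (S t) / S t * Complex.exp (S t * u)) / lam := by
    intro u t
    simp only [g]
    rw [show S t * ((u + κ + lam : ℝ):ℂ) = κ * S t + lam * S t + S t * u by push_cast; ring,
      show S t * ((u + κ : ℝ):ℂ) = κ * S t + S t * u by push_cast; ring,
      show S t * ((u + lam : ℝ):ℂ) = lam * S t + S t * u by push_cast; ring]
    simp only [Complex.exp_add]
    ring
  have hgu : ∀ u : ℝ, ∫ t, g t * Complex.exp (S t * u) =
     (((C1p (u + κ + lam) - C1p (u + κ) - C1p (u + lam) + C1p u) / lam : ℝ) : ℂ) := by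
    intro u
    simp_rw [hge u]
    rw [integral_div, integral_add, integral_sub, integral_sub, ← hpe, ← hpe, ← hpe, ← hpe]
    · push_cast; ring
    · exact hei _
    · exact hei _
    · exact (hei _).sub (hei _)
    · exact hei _
    · exact ((hei _).sub (hei _)).sub (hei _)
    · exact hei _
  have hgi : Integrable g := by
    have h := ((((hei (0 + κ + lam)).sub (hei (0 + κ))).sub (hei (0 + lam))).add (hei 0)).div_const (lam : ℂ)
    refine h.congr (Filter.Eventually.of_forall fun t => ?_)
    have := hge 0 t
    simp only [Complex.ofReal_zero, mul_zero, Complex.exp_zero, mul_one] at this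
    rw [this]
    simp [Pi.add_apply, Pi.sub_apply]
  -- pointwise bound
  have hgb : ∀ t, ‖g t‖ ^ 2 ≤ 4 * C₂ ^ 2 * Real.exp (1 + ε) * κ ^ (1 - ε) * Real.exp ((1 + ε) * κ) *
      (1 + ‖t‖) ^ (-(1 + ε / 2)) := by
    intro t
    have hs := hSre t
    have b1 := hb₂ (S t) (by rw [hs]) (by rw [hs]; exact hσle)
    have b2 := C1_exp_sub_one_pow (s := S t) (κ := κ) (ε := ε) (by rw [hs]; positivity) hκ hε hε1
    have b3 := C1_exp_sub_one (z := lam * S t) (by simp [hs]; positivity)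
    have hre : ((lam:ℂ) * S t).re = lam * σ := by simp [hs]
    rw [hre, norm_mul, Complex.norm_real, Real.norm_of_nonneg hlam.le] at b3
    rw [hs] at b2
    have hn : 0 < ‖S t‖ := norm_pos_iff.2 (hS0 t)
    set n := ‖S t‖ with hn'
    have c1 : ‖g t‖ ≤ ‖C1F (S t)‖ * ‖Complex.exp (κ * S t) - 1‖ * Real.exp (lam * σ) := by
      simp only [g, norm_div, norm_mul, Complex.norm_real, Real.norm_of_nonneg hlam.le]
      rw [div_le_iff₀ hlam]
      calc _ ≤ ‖C1F (S t)‖ / n * ‖Complex.exp (κ * S t) - 1‖ * (Real.exp (lam * σ) * (lam * n)) := by gcongr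
        _ = _ := by field_simp
    have htn : 1 + ‖t‖ ≤ 1 + n := by
      have := Complex.abs_im_le_norm (S t)
      rw [hSim, abs_mul, abs_of_nonneg (by positivity : 0 ≤ 2 * π)] at this
      have := Real.pi_gt_three
      rw [Real.norm_eq_abs]
      nlinarith [abs_nonneg t]
    have c2 : (1 + n) ^ (-(1 + ε / 2)) ≤ (1 + ‖t‖) ^ (-(1 + ε / 2)) :=
      Real.rpow_le_rpow_of_nonpos (by positivity) htn (by linarith)
    have c3 : ((1 + n) ^ (ε / 4 - 1)) ^ 2 * (1 + n) ^ (1 - ε) = (1 + n) ^ (-(1 + ε / 2)) := by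
      rw [← Real.rpow_natCast, ← Real.rpow_mul (by positivity), ← Real.rpow_add (by positivity)]
      congr 1; push_cast; ring
    have c4 : (κ * n) ^ (1 - ε) ≤ κ ^ (1 - ε) * (1 + n) ^ (1 - ε) := by
      rw [Real.mul_rpow hκ.le hn.le]
      gcongr
      · linarith
    have c5 : Real.exp (lam * σ) ^ 2 ≤ Real.exp (1 + ε) := by
      rw [← Real.exp_nat_mul, Real.exp_le_exp, hσ]; push_cast; nlinarith
    have c6 : Real.exp (2 * κ * σ) = Real.exp ((1 + ε) * κ) := by congr 1; rw [hσ]; ring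
    rw [c6] at b2
    calc ‖g t‖ ^ 2 ≤ (‖C1F (S t)‖ * ‖Complex.exp (κ * S t) - 1‖ * Real.exp (lam * σ)) ^ 2 := by gcongr
      _ = ‖C1F (S t)‖ ^ 2 * ‖Complex.exp (κ * S t) - 1‖ ^ 2 * Real.exp (lam * σ) ^ 2 := by ring
      _ ≤ (C₂ * (1 + n) ^ (ε / 4 - 1)) ^ 2 * (4 * Real.exp ((1 + ε) * κ) * (κ ^ (1 - ε) * (1 + n) ^ (1 - ε)))
          * Real.exp (1 + ε) := by
          gcongr
          exact b2.trans (by gcongr)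
      _ = 4 * C₂ ^ 2 * Real.exp (1 + ε) * κ ^ (1 - ε) * Real.exp ((1 + ε) * κ) *
         (((1 + n) ^ (ε / 4 - 1)) ^ 2 * (1 + n) ^ (1 - ε)) := by ring
      _ ≤ _ := by rw [c3]; gcongr
  set Q := 4 * C₂ ^ 2 * Real.exp (1 + ε) * κ ^ (1 - ε) * Real.exp ((1 + ε) * κ) with hQ
  have hQ0 : 0 ≤ Q := by positivity
  have hsq : Integrable fun t => ‖g t‖ ^ 2 := by
    refine Integrable.mono' (hIb.const_mul Q) (by fun_prop) (Filter.Eventually.of_forall fun t => ?_)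
    rw [Real.norm_of_nonneg (by positivity)]; exact hgb t
  have hg2 : MemLp g 2 := (memLp_two_iff_integrable_sq_norm hgc.aestronglyMeasurable).2 hsq
  have hpl := C1_plancherel g hgi hg2
  have hR : ∫⁻ t, ‖g t‖ₑ ^ 2 ≤ ENNReal.ofReal (Q * M) := by
    rw [hM, ← integral_const_mul, ofReal_integral_eq_lintegral_ofReal (hIb.const_mul Q)
      (Filter.Eventually.of_forall fun t => by positivity)]
    refine lintegral_mono fun t => ?_
    rw [← ofReal_norm, ← ENNReal.ofReal_pow (norm_nonneg _)]
    exact ENNReal.ofReal_le_ofReal (hgb t)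
  calc _ = ∫⁻ u, ‖𝓕⁻ g u‖ₑ ^ 2 := by
        refine lintegral_congr fun u => ?_
        have : 𝓕⁻ g u = (((C1p (u + κ + lam) - C1p (u + κ) - C1p (u + lam) + C1p u) / lam : ℝ) : ℂ) * Complex.exp (-σ * u) := by
          rw [← hgu, ← integral_mul_const, Real.fourierInv_eq']
          refine integral_congr_ae (Filter.Eventually.of_forall fun t => ?_)
          simp only [smul_eq_mul]
          rw [mul_comm (Complex.exp _), mul_assoc (g t), ← Complex.exp_add]
          congr 2
          simp [S]; ring
        rw [this, ← ofReal_norm, ← ENNReal.ofReal_pow (norm_nonneg _), norm_mul, Complex.norm_exp,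
          Complex.norm_real, mul_pow, Real.norm_eq_abs, sq_abs, ← Real.exp_nat_mul]
        congr 3
        simp [hσ]; ring
    _ ≤ _ := hpl
    _ ≤ _ := hR
    _ ≤ _ := by
      refine ENNReal.ofReal_le_ofReal ?_
      rw [hQ]
      have : 0 ≤ 4 * C₂ ^ 2 * Real.exp (1 + ε) * κ ^ (1 - ε) * Real.exp ((1 + ε) * κ) := hQ0
      nlinarith


lemma C1_p_deriv : ∀ᵐ u : ℝ, 0 < u → HasDerivAt C1p (C1r u) u := by
  have hm : Monotone fun u => chebyshevPsi (Real.exp u) := C1_psi_mono.comp Real.exp_monotone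
  have hc := hm.countable_not_continuousAt
  have := hc.ae_notMem volume
  filter_upwards [this] with u hu hu0
  simp only [not_not] at hu
  have hr : ContinuousAt C1r u := by
    have h1 : ContinuousAt (fun u => chebyshevPsi (Real.exp u) - Real.exp u) u :=
      hu.sub Real.continuous_exp.continuousAt
    refine h1.congr ?_
    filter_upwards [isOpen_Ioi.mem_nhds hu0] with v hv
    rw [C1r, Set.indicator_of_mem hv]; rfl
  exact intervalIntegral.integral_hasDerivAt_right (C1r_ii 0 u)
    (C1r_meas.stronglyMeasurable.stronglyMeasurableAtFilter) hr

lemma C1_fatou (hRH : RiemannHypothesis) {ε : ℝ} (hε : 0 < ε) (hε1 : ε < 1) :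
    ∃ C : ℝ, 0 < C ∧ ∀ κ : ℝ, 0 < κ →
      ∫⁻ u in Set.Ioi (0:ℝ), ENNReal.ofReal ((C1r (u + κ) - C1r u) ^ 2
        * Real.exp (-(1 + ε) * u)) ≤ ENNReal.ofReal (C * κ ^ (1 - ε) * Real.exp ((1 + ε) * κ)) := by
  obtain ⟨C, hC, hb⟩ := C1_secdiff hRH hε hε1
  refine ⟨C, hC, fun κ hκ => ?_⟩
  set l : ℕ → ℝ := fun n => 1 / ((n:ℝ) + 1) with hl
  have hl0 : ∀ n, 0 < l n := fun n => by positivity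
  have hl1 : ∀ n, l n ≤ 1 := fun n => by
    rw [hl]; simp only; rw [div_le_one (by positivity)]; linarith [(Nat.cast_nonneg n : (0:ℝ) ≤ n)]
  have hlt : Filter.Tendsto l Filter.atTop (nhdsWithin 0 (Set.Ioi 0)) :=
    tendsto_nhdsWithin_iff.2 ⟨tendsto_one_div_add_atTop_nhds_zero_nat, Filter.Eventually.of_forall hl0⟩
  set f : ℕ → ℝ → ENNReal := fun n u => ENNReal.ofReal
    (((C1p (u + κ + l n) - C1p (u + κ) - C1p (u + l n) + C1p u) / l n) ^ 2 * Real.exp (-(1 + ε) * u)) with hf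
  have hfm : ∀ n, Measurable (f n) := fun n => by
    have := C1p_cont
    have : Continuous fun u => (((C1p (u + κ + l n) - C1p (u + κ) - C1p (u + l n) + C1p u) / l n) ^ 2 * Real.exp (-(1 + ε) * u)) := by
      fun_prop
    exact this.measurable.ennreal_ofReal
  have hd := C1_p_deriv
  have hd2 : ∀ᵐ u : ℝ, 0 < u + κ → HasDerivAt C1p (C1r (u + κ)) (u + κ) :=
    (quasiMeasurePreserving_add_right volume κ).ae hd
  have hlim : ∀ᵐ u ∂(volume.restrict (Set.Ioi (0:ℝ))), ENNReal.ofReal ((C1r (u + κ) - C1r u) ^ 2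
        * Real.exp (-(1 + ε) * u)) = Filter.liminf (fun n => f n u) Filter.atTop := by
    refine (ae_restrict_iff' measurableSet_Ioi).2 ?_
    filter_upwards [hd, hd2] with u h1 h2 hu
    have h1 := (hasDerivAt_iff_tendsto_slope_zero.1 (h1 hu)).comp
      (hlt.mono_right (nhdsWithin_mono _ (fun x hx => ne_of_gt hx)))
    have h2 := (hasDerivAt_iff_tendsto_slope_zero.1 (h2 (by have : 0 < u := hu; linarith))).comp
      (hlt.mono_right (nhdsWithin_mono _ (fun x hx => ne_of_gt hx)))
    symm
    apply Filter.Tendsto.liminf_eq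
    refine ENNReal.tendsto_ofReal ?_
    refine Filter.Tendsto.mul_const _ (Filter.Tendsto.pow ?_ 2)
    refine (h2.sub h1).congr fun n => ?_
    simp only [Function.comp, smul_eq_mul]
    field_simp
    ring
  rw [lintegral_congr_ae hlim]
  refine (lintegral_liminf_le hfm).trans ?_
  refine Filter.liminf_le_of_frequently_le' (Filter.Frequently.of_forall fun n => ?_)
  refine (setLIntegral_le_lintegral _ _).trans ?_
  exact hb κ (l n) hκ (hl0 n) (hl1 n)

lemma C1_lemS (hRH : RiemannHypothesis) {ε : ℝ} (hε : 0 < ε) (hε1 : ε < 1) :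
    ∃ C : ℝ, 0 < C ∧ ∀ δ : ℝ, 0 < δ →
      ∫⁻ x in Set.Ioi (1:ℝ), ENNReal.ofReal ((C1R (x + δ * x) - C1R x) ^ 2 * x ^ (-(2 + ε)))
       ≤ ENNReal.ofReal (C * δ ^ (1 - ε) * (1 + δ) ^ (1 + ε)) := by
  obtain ⟨C, hC, hb⟩ := C1_fatou hRH hε hε1
  refine ⟨C, hC, fun δ hδ => ?_⟩
  have hκ : 0 < Real.log (1 + δ) := Real.log_pos (by linarith)
  have hκ2 : Real.log (1 + δ) ≤ δ := by
    have := Real.log_le_sub_one_of_pos (by linarith : 0 < 1 + δ); linarith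
  have h1 := hb _ hκ
  have himg : Real.exp '' Set.Ioi 0 = Set.Ioi 1 := by
    rw [Real.image_exp_Ioi]; simp
  rw [← himg, lintegral_image_eq_lintegral_abs_deriv_mul measurableSet_Ioi
    (fun x _ => (Real.hasDerivAt_exp x).hasDerivWithinAt) Real.exp_injective.injOn]
  refine le_trans (le_of_eq ?_) (h1.trans (ENNReal.ofReal_le_ofReal ?_))
  · refine setLIntegral_congr_fun measurableSet_Ioi fun u hu => ?_
    have hu' : u + Real.log (1 + δ) ∈ Set.Ioi (0:ℝ) := by
      have : 0 < u := hu
      simp only [Set.mem_Ioi]; linarith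
    rw [← ENNReal.ofReal_mul (abs_nonneg _), C1r, C1r, Set.indicator_of_mem hu, Set.indicator_of_mem hu',
      Real.exp_add, Real.exp_log (by linarith), abs_of_pos (Real.exp_pos u)]
    congr 1
    rw [← Real.exp_mul, mul_left_comm, ← Real.exp_add]
    congr 2
    · congr 2; ring
    · ring
  · have : Real.exp ((1 + ε) * Real.log (1 + δ)) = (1 + δ) ^ (1 + ε) := by
      rw [Real.rpow_def_of_pos (by linarith), mul_comm]
    rw [this]
    gcongr


noncomputable def C1E (y w : ℝ) : ℝ := (C1R (y + w) - C1R y) ^ 2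

lemma C1E_meas : Measurable fun p : ℝ × ℝ => C1E p.1 p.2 := by
  have := C1R_meas
  unfold C1E; fun_prop

lemma C1E_nonneg (y w : ℝ) : 0 ≤ C1E y w := sq_nonneg _

lemma C1_lemU_aux {ε Y H y δ E : ℝ} (hε : 0 < ε) (hε1 : ε < 1) (hH : 0 < H) (hHY : H ≤ Y)
    (hy : 1 < y) (hyY : y < Y) (hδ : 0 < δ) (hd : y * δ < H) (hE : 0 ≤ E) :
    y * E ≤ ((2 * Y) ^ (1 + ε) * Y ^ (2 * ε) * H ^ (2 - 2 * ε)) * (δ ^ (-(2 - 2 * ε)) * (1 + δ) ^ (-(1 + ε)))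
      * (E * y ^ (-(2 + ε))) := by
  have hy0 : 0 < y := by linarith
  have hY0 : 0 < Y := by linarith
  have h1 : y = y ^ (1 + ε) * y ^ (2 * ε) * y ^ (2 - 2 * ε) * y ^ (-(2 + ε)) := by
    rw [← Real.rpow_add hy0, ← Real.rpow_add hy0, ← Real.rpow_add hy0]
    nth_rewrite 1 [← Real.rpow_one y]
    congr 1; ring
  have h2 : y ^ (1 + ε) ≤ (2 * Y) ^ (1 + ε) * (1 + δ) ^ (-(1 + ε)) := by
    rw [Real.rpow_neg (by positivity), ← div_eq_mul_inv, le_div_iff₀ (by positivity),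
      ← Real.mul_rpow hy0.le (by positivity)]
    exact Real.rpow_le_rpow (by positivity) (by nlinarith) (by linarith)
  have h3 : y ^ (2 * ε) ≤ Y ^ (2 * ε) := Real.rpow_le_rpow hy0.le hyY.le (by linarith)
  have h4 : y ^ (2 - 2 * ε) ≤ H ^ (2 - 2 * ε) * δ ^ (-(2 - 2 * ε)) := by
    rw [Real.rpow_neg hδ.le, ← div_eq_mul_inv, le_div_iff₀ (by positivity), ← Real.mul_rpow hy0.le hδ.le]
    exact Real.rpow_le_rpow (by positivity) hd.le (by linarith)
  calc y * E = (y ^ (1 + ε) * y ^ (2 * ε) * y ^ (2 - 2 * ε) * y ^ (-(2 + ε))) * E := by rw [← h1]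
    _ ≤ (((2 * Y) ^ (1 + ε) * (1 + δ) ^ (-(1 + ε))) * Y ^ (2 * ε) * (H ^ (2 - 2 * ε) * δ ^ (-(2 - 2 * ε))) * y ^ (-(2 + ε))) * E := by
      gcongr
    _ = _ := by ring

lemma C1_lemU (hRH : RiemannHypothesis) {ε : ℝ} (hε : 0 < ε) (hε1 : ε < 1) :
    ∃ C : ℝ, 0 < C ∧ ∀ Y H : ℝ, 1 ≤ Y → 0 < H → H ≤ Y →
      ∫⁻ y in Set.Ioo 1 Y, ∫⁻ w in Set.Ioo 0 H, ENNReal.ofReal (C1E y w)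
        ≤ ENNReal.ofReal (C * Y ^ (1 + 3 * ε) * H ^ (2 - ε)) := by
  obtain ⟨C, hC, hS⟩ := C1_lemS hRH hε hε1
  refine ⟨2 ^ (1 + ε) * C / ε, by positivity, fun Y H hY hH hHY => ?_⟩
  have hY0 : 0 < Y := by linarith
  set A := (2 * Y) ^ (1 + ε) * Y ^ (2 * ε) * H ^ (2 - 2 * ε) with hA
  have hA0 : 0 ≤ A := by positivity
  have hmeas : Measurable fun p : ℝ × ℝ => ENNReal.ofReal (A * (p.2 ^ (-(2 - 2 * ε)) * (1 + p.2) ^ (-(1 + ε)))) *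
     ENNReal.ofReal ((C1R (p.1 + p.2 * p.1) - C1R p.1) ^ 2 * p.1 ^ (-(2 + ε))) := by
    have := C1R_meas
    fun_prop
  have step1 : ∀ y ∈ Set.Ioo 1 Y, ∫⁻ w in Set.Ioo 0 H, ENNReal.ofReal (C1E y w) ≤
      ∫⁻ δ in Set.Ioo 0 H, ENNReal.ofReal (A * (δ ^ (-(2 - 2 * ε)) * (1 + δ) ^ (-(1 + ε)))) *
     ENNReal.ofReal ((C1R (y + δ * y) - C1R y) ^ 2 * y ^ (-(2 + ε))) := by
    intro y hy
    have hy0 : 0 < y := by linarith [hy.1]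
    have himg : (fun δ => y * δ) '' Set.Ioo 0 (H / y) = Set.Ioo 0 H := by
      rw [Set.image_mul_left_Ioo hy0]
      congr 1
      · simp
      · field_simp
    rw [← himg, lintegral_image_eq_lintegral_abs_deriv_mul measurableSet_Ioo
      (f' := fun _ => y) (fun x _ => by simpa using ((hasDerivAt_id x).const_mul y).hasDerivWithinAt)
      (mul_right_injective₀ hy0.ne').injOn, himg]
    refine le_trans ?_ (lintegral_mono_set (Set.Ioo_subset_Ioo_right (div_le_self hH.le hy.1.le)))
    · refine setLIntegral_mono_ae' measurableSet_Ioo (Filter.Eventually.of_forall fun δ hδ => ?_)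
      have hδ0 : 0 < δ := hδ.1
      rw [abs_of_pos hy0, ← ENNReal.ofReal_mul hy0.le, ← ENNReal.ofReal_mul (by positivity)]
      refine ENNReal.ofReal_le_ofReal ?_
      have := C1_lemU_aux hε hε1 hH hHY hy.1 hy.2 hδ.1 (by
        have := (lt_div_iff₀ hy0).1 hδ.2; linarith) (C1E_nonneg y (y * δ))
      rw [mul_comm δ y]
      exact this
  have hδint : IntegrableOn (fun δ : ℝ => δ ^ (ε - 1)) (Set.Ioo 0 H) := by
    have := intervalIntegral.intervalIntegrable_rpow' (a := 0) (b := H) (r := ε - 1) (by linarith)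
    rw [intervalIntegrable_iff_integrableOn_Ioo_of_le hH.le] at this
    exact this
  have hδval : ∫ δ in Set.Ioo 0 H, δ ^ (ε - 1) = H ^ ε / ε := by
    rw [← integral_Ioc_eq_integral_Ioo, ← intervalIntegral.integral_of_le hH.le,
      integral_rpow (Or.inl (by linarith))]
    simp [hε.ne']
  calc _ ≤ ∫⁻ y in Set.Ioo 1 Y, ∫⁻ δ in Set.Ioo 0 H, ENNReal.ofReal (A * (δ ^ (-(2 - 2 * ε)) * (1 + δ) ^ (-(1 + ε)))) *
     ENNReal.ofReal ((C1R (y + δ * y) - C1R y) ^ 2 * y ^ (-(2 + ε))) :=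
        setLIntegral_mono_ae' measurableSet_Ioo (Filter.Eventually.of_forall step1)
    _ = ∫⁻ δ in Set.Ioo 0 H, ∫⁻ y in Set.Ioo 1 Y, ENNReal.ofReal (A * (δ ^ (-(2 - 2 * ε)) * (1 + δ) ^ (-(1 + ε)))) *
     ENNReal.ofReal ((C1R (y + δ * y) - C1R y) ^ 2 * y ^ (-(2 + ε))) :=
        lintegral_lintegral_swap hmeas.aemeasurable
    _ ≤ ∫⁻ δ in Set.Ioo 0 H, ENNReal.ofReal (A * C * δ ^ (ε - 1)) := by
        refine setLIntegral_mono_ae' measurableSet_Ioo (Filter.Eventually.of_forall fun δ hδ => ?_)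
        have hδ0 : 0 < δ := hδ.1
        rw [lintegral_const_mul' _ _ ENNReal.ofReal_ne_top]
        refine (mul_le_mul_right ((lintegral_mono_set Set.Ioo_subset_Ioi_self).trans (hS δ hδ0)) _).trans ?_
        rw [← ENNReal.ofReal_mul (by positivity)]
        refine ENNReal.ofReal_le_ofReal (le_of_eq ?_)
        have e1 : δ ^ (-(2 - 2 * ε)) * δ ^ (1 - ε) = δ ^ (ε - 1) := by
          rw [← Real.rpow_add hδ0]; congr 1; ring
        have e2 : (1 + δ) ^ (-(1 + ε)) * (1 + δ) ^ (1 + ε) = 1 := by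
          rw [← Real.rpow_add (by positivity)]; simp
        calc _ = A * C * (δ ^ (-(2 - 2 * ε)) * δ ^ (1 - ε)) * ((1 + δ) ^ (-(1 + ε)) * (1 + δ) ^ (1 + ε)) := by ring
          _ = _ := by rw [e1, e2, mul_one]
    _ = ENNReal.ofReal (A * C * (H ^ ε / ε)) := by
        rw [← hδval, ← integral_const_mul, ofReal_integral_eq_lintegral_ofReal (hδint.const_mul _)]
        refine (ae_restrict_iff' measurableSet_Ioo).2 (Filter.Eventually.of_forall fun δ hδ => ?_)
        have := hδ.1
        simp only [Pi.zero_apply]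
        positivity
    _ ≤ _ := by
        refine ENNReal.ofReal_le_ofReal (le_of_eq ?_)
        rw [hA, Real.mul_rpow (by norm_num) hY0.le]
        have e1 : Y ^ (1 + ε) * Y ^ (2 * ε) = Y ^ (1 + 3 * ε) := by
          rw [← Real.rpow_add hY0]; congr 1; ring
        have e2 : H ^ (2 - 2 * ε) * H ^ ε = H ^ (2 - ε) := by
          rw [← Real.rpow_add hH]; congr 1; ring
        rw [← e1, ← e2]; ring


lemma C1E_bound {y w Y W : ℝ} (hy : 0 ≤ y) (hyY : y ≤ Y) (hw : 0 ≤ w) (hwW : w ≤ W) :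
    C1E y w ≤ (12 * (Y + W)) ^ 2 := by
  have h1 := C1R_abs (x := y + w) (by linarith)
  have h2 := C1R_abs hy
  rw [C1E, ← sq_abs]
  have : |C1R (y + w) - C1R y| ≤ 12 * (Y + W) := (abs_sub _ _).trans (by linarith)
  gcongr

lemma C1_lint_shift (f : ℝ → ENNReal) (a b h : ℝ) :
    ∫⁻ x in Set.Ioo a b, f (x + h) = ∫⁻ y in Set.Ioo (a + h) (b + h), f y := by
  have := (measurePreserving_add_right volume h).setLIntegral_comp_preimage_emb
    (measurableEmbedding_addRight h) f (Set.Ioo (a + h) (b + h))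
  rw [← this, Set.preimage_add_const_Ioo]; simp

lemma C1E_meas_y (w : ℝ) : Measurable fun y => C1E y w := by
  have := C1R_meas
  unfold C1E; fun_prop

lemma C1E_meas_w (y : ℝ) : Measurable fun w => C1E y w := by
  have := C1R_meas
  unfold C1E; fun_prop

lemma C1E_split (x h v : ℝ) : C1E x h ≤ 2 * C1E x v + 2 * C1E (x + h) (v - h) := by
  unfold C1E
  rw [show x + h + (v - h) = x + v by ring]
  nlinarith [sq_nonneg ((C1R (x + v) - C1R x) + (C1R (x + v) - C1R (x + h)))]

lemma C1_low_lint {h : ℝ} (hh : 0 < h) (x : ℝ) :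
    ENNReal.ofReal h * ENNReal.ofReal (C1E x h) ≤ 2 * (∫⁻ v in Set.Ioo 0 (2 * h), ENNReal.ofReal (C1E x v))
      + 2 * ∫⁻ w in Set.Ioo 0 (2 * h), ENNReal.ofReal (C1E (x + h) w) := by
  have e1 : ENNReal.ofReal h * ENNReal.ofReal (C1E x h) = ∫⁻ v in Set.Ioo h (2 * h), ENNReal.ofReal (C1E x h) := by
    rw [setLIntegral_const, Real.volume_Ioo, mul_comm]; congr 2; ring
  have m1 : Measurable fun v => ENNReal.ofReal (C1E x v) := (C1E_meas_w x).ennreal_ofReal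
  have m2 : Measurable fun v => ENNReal.ofReal (C1E (x + h) (v - h)) :=
    ((C1E_meas_w (x + h)).comp (measurable_id.sub_const h)).ennreal_ofReal
  rw [e1]
  calc _ ≤ ∫⁻ v in Set.Ioo h (2 * h), (2 * ENNReal.ofReal (C1E x v) + 2 * ENNReal.ofReal (C1E (x + h) (v - h))) := by
        refine lintegral_mono fun v => ?_
        have := C1E_split x h v
        refine (ENNReal.ofReal_le_ofReal this).trans (le_of_eq ?_)
        rw [ENNReal.ofReal_add (by have := C1E_nonneg x v; positivity) (by have := C1E_nonneg (x + h) (v - h); positivity),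
          ENNReal.ofReal_mul (by norm_num), ENNReal.ofReal_mul (by norm_num)]
        simp
    _ = 2 * (∫⁻ v in Set.Ioo h (2 * h), ENNReal.ofReal (C1E x v)) + 2 * ∫⁻ v in Set.Ioo h (2 * h), ENNReal.ofReal (C1E (x + h) (v - h)) := by
        rw [lintegral_add_left (m1.const_mul 2), lintegral_const_mul _ m1, lintegral_const_mul _ m2]
    _ ≤ _ := by
        gcongr 2 * ?_ + 2 * ?_
        · exact lintegral_mono_set (Set.Ioo_subset_Ioo_left hh.le)
        · have := C1_lint_shift (fun v => ENNReal.ofReal (C1E (x + h) (v - h))) 0 h h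
          simp only [add_sub_cancel_right, zero_add] at this
          rw [show 2 * h = h + h by ring, ← this]
          exact lintegral_mono_set (Set.Ioo_subset_Ioo_right (by linarith))

lemma C1E_intervalIntegrable {h K : ℝ} (a : ℝ) (ha : 0 ≤ a) (hh : 0 ≤ h) (hK : a ≤ K) :
    IntegrableOn (fun x => C1E x h) (Set.Ioo a K) := by
  refine Measure.integrableOn_of_bounded (M := (12 * (K + h)) ^ 2) (by simp)
    (C1E_meas_y h).aestronglyMeasurable ?_
  refine (ae_restrict_iff' measurableSet_Ioo).2 (Filter.Eventually.of_forall fun x hx => ?_)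
  rw [Real.norm_of_nonneg (C1E_nonneg _ _)]
  exact C1E_bound (by linarith [hx.1]) hx.2.le hh le_rfl

lemma C1_low (hRH : RiemannHypothesis) {ε : ℝ} (hε : 0 < ε) (hε1 : ε < 1) :
    ∃ C : ℝ, 0 < C ∧ ∀ h K : ℝ, 1 ≤ h → h ≤ K →
      ∫ x in (1:ℝ)..K, C1E x h ≤ C * K ^ (1 + 3 * ε) * h := by
  obtain ⟨C, hC, hU⟩ := C1_lemU hRH hε hε1
  refine ⟨4 * (C * 2 ^ (1 + 3 * ε) * 2 ^ (2 - ε)), by positivity, fun h K hh hK => ?_⟩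
  have h0 : 0 < h := by linarith
  have hK0 : 0 < K := by linarith
  set f : ℝ → ENNReal := fun y => ∫⁻ w in Set.Ioo 0 (2 * h), ENNReal.ofReal (C1E y w) with hf
  have hfm : Measurable f := Measurable.lintegral_prod_right' (f := fun p : ℝ × ℝ => ENNReal.ofReal (C1E p.1 p.2)) C1E_meas.ennreal_ofReal
  have hmain : ∫⁻ y in Set.Ioo 1 (2 * K), f y ≤ ENNReal.ofReal (C * (2 * K) ^ (1 + 3 * ε) * (2 * h) ^ (2 - ε)) :=
    hU (2 * K) (2 * h) (by linarith) (by linarith) (by linarith)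
  set P := C * (2 * K) ^ (1 + 3 * ε) * (2 * h) ^ (2 - ε) with hP
  have hP0 : 0 ≤ P := by positivity
  have key : ENNReal.ofReal h * ∫⁻ x in Set.Ioo 1 K, ENNReal.ofReal (C1E x h) ≤ ENNReal.ofReal (4 * P) := by
    rw [← lintegral_const_mul _ (C1E_meas_y h).ennreal_ofReal]
    calc _ ≤ ∫⁻ x in Set.Ioo 1 K, (2 * f x + 2 * f (x + h)) := lintegral_mono fun x => C1_low_lint h0 x
      _ = 2 * (∫⁻ x in Set.Ioo 1 K, f x) + 2 * ∫⁻ x in Set.Ioo 1 K, f (x + h) := by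
        have hfm2 : Measurable fun x => f (x + h) := hfm.comp (measurable_id.add_const h)
        rw [lintegral_add_left (hfm.const_mul 2), lintegral_const_mul _ hfm,
          lintegral_const_mul _ hfm2]
      _ ≤ 2 * ENNReal.ofReal P + 2 * ENNReal.ofReal P := by
        gcongr 2 * ?_ + 2 * ?_
        · exact (lintegral_mono_set (Set.Ioo_subset_Ioo_right (by linarith))).trans hmain
        · rw [C1_lint_shift]
          exact (lintegral_mono_set (Set.Ioo_subset_Ioo (by linarith) (by linarith))).trans hmain
      _ = _ := by
        rw [ENNReal.ofReal_mul (p := 4) (q := P) (by norm_num), ← add_mul]; norm_num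
  have hint := C1E_intervalIntegrable (h := h) (K := K) 1 zero_le_one h0.le (by linarith)
  rw [← ofReal_integral_eq_lintegral_ofReal hint (Filter.Eventually.of_forall fun x => C1E_nonneg _ _),
    ← ENNReal.ofReal_mul h0.le, ENNReal.ofReal_le_ofReal_iff (by positivity)] at key
  rw [intervalIntegral.integral_of_le (by linarith), integral_Ioc_eq_integral_Ioo]
  have e1 : (2 * h) ^ (2 - ε) ≤ 2 ^ (2 - ε) * (h * h) := by
    rw [Real.mul_rpow (by norm_num) h0.le]
    gcongr
    calc h ^ (2 - ε) ≤ h ^ (2:ℝ) := Real.rpow_le_rpow_of_exponent_le hh (by linarith)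
      _ = h * h := by rw [Real.rpow_two]; ring
  have e2 : 4 * P ≤ 4 * (C * 2 ^ (1 + 3 * ε) * 2 ^ (2 - ε)) * K ^ (1 + 3 * ε) * h * h := by
    rw [hP, Real.mul_rpow (by norm_num) hK0.le]
    calc _ ≤ 4 * (C * (2 ^ (1 + 3 * ε) * K ^ (1 + 3 * ε)) * (2 ^ (2 - ε) * (h * h))) := by gcongr
      _ = _ := by ring
  have := key.trans e2
  nlinarith

lemma C1_N (hRH : RiemannHypothesis) {ε : ℝ} (hε : 0 < ε) (hε1 : ε < 1) :
    ∃ C : ℝ, 0 < C ∧ ∀ h K X η : ℝ, 1 ≤ h → h ≤ X → 1 ≤ K → 0 < η → η ≤ 1 →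
      ∫⁻ x in Set.Ioo K X, ∫⁻ u in Set.Ioo 0 η, ENNReal.ofReal (C1E (x + h) (h * (Real.exp u - 1)))
        ≤ ENNReal.ofReal (C * X ^ (1 + 3 * ε) * η ^ (2 - ε) * h) := by
  obtain ⟨C, hC, hU⟩ := C1_lemU hRH hε hε1
  refine ⟨C * 2 ^ (1 + 3 * ε) * 2 ^ (2 - ε), by positivity, fun h K X η hh hX hK hη hη1 => ?_⟩
  have h0 : 0 < h := by linarith
  have hX0 : 0 < X := by linarith
  set H := 2 * η * h with hH
  have hH0 : 0 < H := by positivity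
  set f : ℝ → ENNReal := fun y => ∫⁻ w in Set.Ioo 0 H, ENNReal.ofReal (C1E y w) with hf
  have step : ∀ y, ENNReal.ofReal h * ∫⁻ u in Set.Ioo 0 η, ENNReal.ofReal (C1E y (h * (Real.exp u - 1))) ≤ f y := by
    intro y
    have hinj : Set.InjOn (fun u => h * (Real.exp u - 1)) (Set.Ioo 0 η) := by
      intro a _ b _ hab
      simp only at hab
      have := mul_left_cancel₀ h0.ne' hab
      exact Real.exp_injective (by linarith)
    have himg : (fun u => h * (Real.exp u - 1)) '' Set.Ioo 0 η ⊆ Set.Ioo 0 H := by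
      rintro _ ⟨u, ⟨hu0, hu1⟩, rfl⟩
      have e1 : 1 < Real.exp u := Real.one_lt_exp_iff.2 hu0
      have e2 := Real.abs_exp_sub_one_sub_id_le (x := u) (by rw [abs_of_pos hu0]; linarith)
      have e3 := (abs_le.1 e2).2
      have e4 : Real.exp u - 1 < 2 * η := by nlinarith
      constructor
      · have : 0 < Real.exp u - 1 := by linarith
        positivity
      · simp only [hH]; nlinarith
    calc _ = ∫⁻ u in Set.Ioo 0 η, ENNReal.ofReal h * ENNReal.ofReal (C1E y (h * (Real.exp u - 1))) := by
          rw [lintegral_const_mul' _ _ ENNReal.ofReal_ne_top]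
      _ ≤ ∫⁻ u in Set.Ioo 0 η, ENNReal.ofReal |h * Real.exp u| * ENNReal.ofReal (C1E y (h * (Real.exp u - 1))) := by
          refine setLIntegral_mono_ae' measurableSet_Ioo (Filter.Eventually.of_forall fun u hu => ?_)
          gcongr
          rw [abs_of_pos (by positivity)]
          exact le_mul_of_one_le_right h0.le (Real.one_le_exp hu.1.le)
      _ = ∫⁻ w in (fun u => h * (Real.exp u - 1)) '' Set.Ioo 0 η, ENNReal.ofReal (C1E y w) := by
          rw [lintegral_image_eq_lintegral_abs_deriv_mul measurableSet_Ioo (f' := fun u => h * Real.exp u)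
            (fun u _ => (((Real.hasDerivAt_exp u).sub_const 1).const_mul h).hasDerivWithinAt) hinj]
      _ ≤ _ := lintegral_mono_set himg
  have key : ENNReal.ofReal h * ∫⁻ x in Set.Ioo K X, ∫⁻ u in Set.Ioo 0 η, ENNReal.ofReal (C1E (x + h) (h * (Real.exp u - 1)))
      ≤ ENNReal.ofReal (C * (2 * X) ^ (1 + 3 * ε) * H ^ (2 - ε)) := by
    rw [← lintegral_const_mul' _ _ ENNReal.ofReal_ne_top]
    calc _ ≤ ∫⁻ x in Set.Ioo K X, f (x + h) := lintegral_mono fun x => step _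
      _ = ∫⁻ y in Set.Ioo (K + h) (X + h), f y := C1_lint_shift _ _ _ _
      _ ≤ ∫⁻ y in Set.Ioo 1 (2 * X), f y := lintegral_mono_set (Set.Ioo_subset_Ioo (by linarith) (by linarith))
      _ ≤ _ := hU (2 * X) H (by linarith) hH0 (by rw [hH]; nlinarith)
  have hle : C * (2 * X) ^ (1 + 3 * ε) * H ^ (2 - ε) ≤ h * (C * 2 ^ (1 + 3 * ε) * 2 ^ (2 - ε) * X ^ (1 + 3 * ε) * η ^ (2 - ε) * h) := by
    have e0 : h ^ (2 - ε) ≤ h * h :=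
      calc h ^ (2 - ε) ≤ h ^ (2:ℝ) := Real.rpow_le_rpow_of_exponent_le hh (by linarith)
        _ = h * h := by rw [Real.rpow_two]; ring
    rw [hH, Real.mul_rpow (by positivity) h0.le, Real.mul_rpow (by norm_num) hη.le, Real.mul_rpow (by norm_num) hX0.le]
    calc _ ≤ C * (2 ^ (1 + 3 * ε) * X ^ (1 + 3 * ε)) * (2 ^ (2 - ε) * η ^ (2 - ε) * (h * h)) := by gcongr
      _ = _ := by ring
  have k2 := key.trans (ENNReal.ofReal_le_ofReal hle)
  rw [ENNReal.ofReal_mul h0.le] at k2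
  exact (ENNReal.mul_le_mul_iff_right (by simpa using h0) ENNReal.ofReal_ne_top).1 k2


noncomputable def C1Psi (L x v : ℝ) : ℝ := C1E x v - v * (Real.log (x / v) + 1 - L)

lemma C1Psi_meas (L : ℝ) : Measurable fun p : ℝ × ℝ => C1Psi L p.1 p.2 := by
  have := C1E_meas
  unfold C1Psi
  refine C1E_meas.sub ?_
  fun_prop

lemma C1V_eq (X δ : ℝ) : zetaVarDelta X δ = ∫ x in (1:ℝ)..X, C1E x (δ * x) := by
  unfold zetaVarDelta C1E C1R
  congr 1; ext x; ring

lemma C1VH_eq (X h : ℝ) : zetaVarH X h = ∫ x in (1:ℝ)..X, C1E x h := by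
  unfold zetaVarH C1E C1R
  congr 1; ext x; ring

lemma C1E_ii {a b δ : ℝ} (ha : 1 ≤ a) (hab : a ≤ b) (hδ : 0 ≤ δ) :
    IntervalIntegrable (fun x => C1E x (δ * x)) volume a b := by
  rw [intervalIntegrable_iff_integrableOn_Ioc_of_le hab]
  refine Measure.integrableOn_of_bounded (M := (12 * (b + δ * b)) ^ 2) (by simp) ?_ ?_
  · have := C1R_meas
    refine Measurable.aestronglyMeasurable ?_
    unfold C1E; fun_prop
  refine (ae_restrict_iff' measurableSet_Ioc).2 (Filter.Eventually.of_forall fun x hx => ?_)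
  have hx0 : 0 ≤ x := by linarith [hx.1]
  rw [Real.norm_of_nonneg (C1E_nonneg _ _)]
  exact C1E_bound hx0 hx.2 (by positivity) (by have := hx.2; gcongr)

lemma C1_inner {L a b δ : ℝ} (ha : 1 ≤ a) (hab : a ≤ b) (hδ : 0 < δ) :
    ∫ x in Set.Icc a b, C1Psi L x (δ * x) =
      (zetaVarDelta b δ - 1 / 2 * δ * b ^ 2 * (Real.log (1 / δ) + 1 - L)) -
      (zetaVarDelta a δ - 1 / 2 * δ * a ^ 2 * (Real.log (1 / δ) + 1 - L)) := by
  rw [integral_Icc_eq_integral_Ioc, ← intervalIntegral.integral_of_le hab]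
  have e1 : ∫ x in a..b, C1Psi L x (δ * x) = ∫ x in a..b, (C1E x (δ * x) - (δ * (Real.log (1 / δ) + 1 - L)) * x) := by
    refine intervalIntegral.integral_congr fun x hx => ?_
    rw [Set.uIcc_of_le hab] at hx
    have hx0 : x ≠ 0 := by have := hx.1; intro q; linarith
    simp only [C1Psi]
    rw [show x / (δ * x) = 1 / δ by field_simp]; ring
  rw [e1, intervalIntegral.integral_sub (C1E_ii ha hab hδ.le) (by apply Continuous.intervalIntegrable; fun_prop),
    intervalIntegral.integral_const_mul, integral_id, C1V_eq, C1V_eq,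
    ← intervalIntegral.integral_add_adjacent_intervals (C1E_ii le_rfl ha hδ.le) (C1E_ii ha hab hδ.le)]
  ring

lemma C1_pow_bd {h X δ c : ℝ} (hh : 0 < h) (hX : 0 < X) (h1 : h / X ≤ δ) (h2 : δ ≤ 1) (hc : 0 < c) :
    h ^ 2 * δ ^ (c - 1) ≤ h ^ 2 + h * X * (h / X) ^ c := by
  have hq : 0 < h / X := by positivity
  have hd : 0 < δ := by linarith
  rcases le_or_gt 1 c with h3 | h3
  · have : δ ^ (c - 1) ≤ 1 := Real.rpow_le_one hd.le h2 (by linarith)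
    have h4 : 0 ≤ h * X * (h / X) ^ c := by positivity
    nlinarith [sq_nonneg h]
  · have : δ ^ (c - 1) ≤ (h / X) ^ (c - 1) := Real.rpow_le_rpow_of_nonpos hq h1 (by linarith)
    have e : h ^ 2 * (h / X) ^ (c - 1) = h * X * (h / X) ^ c := by
      rw [Real.rpow_sub_one hq.ne']; field_simp
    have := mul_le_mul_of_nonneg_left this (sq_nonneg h)
    nlinarith [sq_nonneg h]

lemma C1Psi_bound {L h K X v x : ℝ} (hh : 1 ≤ h) (hK : Real.exp 1 * h ≤ K) (hx : K ≤ x) (hxX : x ≤ X)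
    (hv : h ≤ v) (hv2 : v ≤ h * Real.exp 1) :
    |C1Psi L x v| ≤ (12 * (X + h * Real.exp 1)) ^ 2 + h * Real.exp 1 * (Real.log X + 1 + |L|) := by
  have he : 1 < Real.exp 1 := Real.one_lt_exp_iff.2 one_pos
  have hx1 : 1 ≤ x := by nlinarith
  have hv0 : 0 < v := by linarith
  have b1 := C1E_bound (y := x) (w := v) (by linarith) hxX hv0.le hv2
  have b0 := C1E_nonneg x v
  have l0 : 0 ≤ Real.log (x / v) := Real.log_nonneg (by rw [le_div_iff₀ hv0]; linarith)
  have l1 : Real.log (x / v) ≤ Real.log X := Real.log_le_log (by positivity)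
    ((div_le_self (by linarith) (by linarith)).trans hxX)
  have : |Real.log (x / v) + 1 - L| ≤ Real.log X + 1 + |L| := by
    refine (abs_sub _ _).trans ?_
    rw [abs_of_nonneg (by linarith)]; linarith
  unfold C1Psi
  refine (abs_sub _ _).trans ?_
  rw [abs_of_nonneg b0, abs_mul, abs_of_pos hv0]
  gcongr

lemma C1_M {L c D' h K X η : ℝ} (hc : 0 < c) (hD : 0 ≤ D') (hh : 1 ≤ h) (hK : Real.exp 1 * h ≤ K)
    (hKX : K ≤ X) (hη : 0 ≤ η) (hη1 : η ≤ 1)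
    (hyp : ∀ x, K ≤ x → x ≤ X → ∀ δ, 0 < δ → h ≤ δ * x → δ * x ≤ h * Real.exp 1 →
      |zetaVarDelta x δ - 1 / 2 * δ * x ^ 2 * (Real.log (1 / δ) + 1 - L)| ≤ D' * δ ^ (1 + c) * x ^ 2) :
    |∫ x in Set.Icc K X, ∫ u in Set.Icc 0 η, C1Psi L x (h * Real.exp u)| ≤
      2 * D' * (Real.exp 1) ^ 2 * (h ^ 2 + h * X * (h / X) ^ c) * Real.log X := by
  have he : 1 < Real.exp 1 := Real.one_lt_exp_iff.2 one_pos
  have hh0 : 0 < h := by linarith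
  have hK1 : 1 ≤ K := by nlinarith
  have hX0 : 0 < X := by linarith
  have heη : Real.exp η ≤ Real.exp 1 := Real.exp_le_exp.2 hη1
  set S : Set (ℝ × ℝ) := {p | (K ≤ p.1 ∧ p.1 ≤ X) ∧ (h ≤ Real.exp p.2 * p.1 ∧ Real.exp p.2 * p.1 ≤ h * Real.exp η)} with hS
  have hSm : MeasurableSet S := by
    have m : Measurable fun p : ℝ × ℝ => Real.exp p.2 * p.1 := by fun_prop
    have i1 : MeasurableSet {p : ℝ × ℝ | K ≤ p.1} := measurableSet_le measurable_const measurable_fst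
    have i2 : MeasurableSet {p : ℝ × ℝ | p.1 ≤ X} := measurableSet_le measurable_fst measurable_const
    have i3 : MeasurableSet {p : ℝ × ℝ | h ≤ Real.exp p.2 * p.1} := measurableSet_le measurable_const m
    have i4 : MeasurableSet {p : ℝ × ℝ | Real.exp p.2 * p.1 ≤ h * Real.exp η} := measurableSet_le m measurable_const
    exact (i1.inter i2).inter (i3.inter i4)
  set F : ℝ × ℝ → ℝ := fun p => C1Psi L p.1 (Real.exp p.2 * p.1) with hF
  have hFm : Measurable F := (C1Psi_meas L).comp (f := fun p : ℝ × ℝ => (p.1, Real.exp p.2 * p.1)) (by fun_prop)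
  have hτ : ∀ x τ, (x, τ) ∈ S → Real.log (h / X) ≤ τ ∧ τ ≤ 0 := by
    rintro x τ ⟨⟨h1, h2⟩, h3, h4⟩
    simp only at h1 h2 h3 h4
    have hx : 0 < x := by linarith
    constructor
    · rw [Real.log_le_iff_le_exp (by positivity), div_le_iff₀ hX0]
      have := Real.exp_pos τ
      nlinarith
    · rw [← Real.exp_le_one_iff]
      by_contra hcon
      push Not at hcon
      nlinarith
  have hGint : Integrable (S.indicator F) (volume.prod volume) := by
    rw [integrable_indicator_iff hSm]
    refine Measure.integrableOn_of_bounded (M := (12 * (X + h * Real.exp 1)) ^ 2 + h * Real.exp 1 * (Real.log X + 1 + |L|)) ?_ hFm.aestronglyMeasurable ?_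
    · have hsub : S ⊆ Set.Icc K X ×ˢ Set.Icc (Real.log (h / X)) 0 := by
        rintro ⟨x, τ⟩ hp
        exact ⟨⟨hp.1.1, hp.1.2⟩, hτ x τ hp⟩
      refine ((measure_mono hsub).trans_lt ?_).ne
      exact (isCompact_Icc.prod isCompact_Icc).measure_lt_top
    · refine (ae_restrict_iff' hSm).2 (Filter.Eventually.of_forall fun p hp => ?_)
      rw [Real.norm_eq_abs]
      exact C1Psi_bound hh hK hp.1.1 hp.1.2 hp.2.1 (hp.2.2.trans (by gcongr))
  have e1 : ∫ x in Set.Icc K X, ∫ u in Set.Icc 0 η, C1Psi L x (h * Real.exp u) = ∫ x, ∫ τ, S.indicator F (x, τ) := by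
    rw [← integral_indicator measurableSet_Icc]
    refine integral_congr_ae (Filter.Eventually.of_forall fun x => ?_)
    by_cases hx : x ∈ Set.Icc K X
    · have hx0 : 0 < x := by linarith [hx.1]
      simp only [Set.indicator_of_mem hx]
      rw [← integral_indicator measurableSet_Icc, ← integral_add_right_eq_self _ (Real.log (x / h))]
      refine integral_congr_ae (Filter.Eventually.of_forall fun τ => ?_)
      have hex : h * Real.exp (τ + Real.log (x / h)) = Real.exp τ * x := by
        rw [Real.exp_add, Real.exp_log (by positivity)]; field_simp
      have hiff : τ + Real.log (x / h) ∈ Set.Icc 0 η ↔ (x, τ) ∈ S := by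
        simp only [hS, Set.mem_ofPred_eq, ← hex, Set.mem_Icc]
        constructor
        · rintro ⟨a, b⟩
          exact ⟨⟨hx.1, hx.2⟩, le_mul_of_one_le_right hh0.le (Real.one_le_exp a), by gcongr⟩
        · rintro ⟨-, a, b⟩
          exact ⟨Real.one_le_exp_iff.1 (le_of_mul_le_mul_left (by simpa using a) hh0),
            Real.exp_le_exp.1 (le_of_mul_le_mul_left b hh0)⟩
      by_cases hm : (x, τ) ∈ S
      · simp only [Set.indicator_of_mem hm, Set.indicator_of_mem (hiff.2 hm), hex, hF]
      · simp only [Set.indicator_of_notMem hm, Set.indicator_of_notMem (fun q => hm (hiff.1 q))]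
    · simp only [Set.indicator_of_notMem hx]
      symm
      refine integral_eq_zero_of_ae (Filter.Eventually.of_forall fun τ => ?_)
      exact Set.indicator_of_notMem (fun hm => hx ⟨hm.1.1, hm.1.2⟩) _
  rw [e1, integral_integral_swap (f := fun x τ => S.indicator F (x, τ)) hGint]
  set B := 2 * D' * (Real.exp 1) ^ 2 * (h ^ 2 + h * X * (h / X) ^ c) with hB
  have hB0 : 0 ≤ B := by positivity
  have hb : ∀ τ, ‖∫ x, S.indicator F (x, τ)‖ ≤ (Set.Icc (Real.log (h / X)) 0).indicator (fun _ => B) τ := by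
    intro τ
    set δ := Real.exp τ with hδ
    have hδ0 : 0 < δ := Real.exp_pos τ
    set a := max K (h / δ) with ha
    set b := min X (h * Real.exp η / δ) with hbdef
    have hmem : ∀ x, (x, τ) ∈ S ↔ x ∈ Set.Icc a b := by
      intro x
      simp only [hS, Set.mem_ofPred_eq, Set.mem_Icc, ha, hbdef, max_le_iff, le_min_iff, ← hδ,
        div_le_iff₀ hδ0, le_div_iff₀ hδ0, mul_comm δ x]
      tauto
    have e2 : ∫ x, S.indicator F (x, τ) = ∫ x in Set.Icc a b, C1Psi L x (δ * x) := by
      rw [← integral_indicator measurableSet_Icc]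
      refine integral_congr_ae (Filter.Eventually.of_forall fun x => ?_)
      by_cases hm : (x, τ) ∈ S
      · simp only [Set.indicator_of_mem hm, Set.indicator_of_mem ((hmem x).1 hm), hF, hδ]
      · simp only [Set.indicator_of_notMem hm, Set.indicator_of_notMem (fun q => hm ((hmem x).2 q))]
    rw [e2]
    by_cases hab : a ≤ b
    · have hSa : (a, τ) ∈ S := (hmem a).2 ⟨le_rfl, hab⟩
      have hSb : (b, τ) ∈ S := (hmem b).2 ⟨hab, le_rfl⟩
      have hτ' := hτ a τ hSa
      have hδ1 : δ ≤ 1 := Real.exp_le_one_iff.2 hτ'.2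
      have hδX : h / X ≤ δ := by
        rw [hδ, ← Real.log_le_iff_le_exp (by positivity)]; exact hτ'.1
      rw [Set.indicator_of_mem (show τ ∈ Set.Icc _ _ from hτ'), C1_inner (by linarith [hSa.1.1]) hab hδ0, Real.norm_eq_abs]
      have ba := hyp a hSa.1.1 hSa.1.2 δ hδ0 hSa.2.1 (hSa.2.2.trans (by gcongr))
      have bb := hyp b hSb.1.1 hSb.1.2 δ hδ0 hSb.2.1 (hSb.2.2.trans (by gcongr))
      have hb1 : δ * b ≤ h * Real.exp 1 := hSb.2.2.trans (by gcongr)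
      have ha1 : δ * a ≤ h * Real.exp 1 := hSa.2.2.trans (by gcongr)
      have ha0 : 0 ≤ a := by linarith [hSa.1.1]
      have hb0 : 0 ≤ b := by linarith
      have hq : ∀ y, 0 ≤ y → δ * y ≤ h * Real.exp 1 → D' * δ ^ (1 + c) * y ^ 2 ≤ D' * Real.exp 1 ^ 2 * (h ^ 2 + h * X * (h / X) ^ c) := by
        intro y hy hy1
        have e3 : δ ^ (1 + c) = δ ^ 2 * δ ^ (c - 1) := by
          rw [← Real.rpow_natCast, ← Real.rpow_add hδ0]; congr 1; push_cast; ring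
        calc D' * δ ^ (1 + c) * y ^ 2 = D' * δ ^ (c - 1) * (δ * y) ^ 2 := by rw [e3]; ring
          _ ≤ D' * δ ^ (c - 1) * (h * Real.exp 1) ^ 2 := by gcongr
          _ = D' * Real.exp 1 ^ 2 * (h ^ 2 * δ ^ (c - 1)) := by ring
          _ ≤ _ := by gcongr; exact C1_pow_bd hh0 hX0 hδX hδ1 hc
      refine (abs_sub _ _).trans ?_
      have := hq a ha0 ha1
      have := hq b hb0 hb1
      rw [hB]; linarith
    · rw [Set.Icc_eq_empty hab]
      simp only [Measure.restrict_empty, integral_zero_measure, norm_zero]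
      exact Set.indicator_nonneg (fun _ _ => hB0) _
  have hci : Integrable ((Set.Icc (Real.log (h / X)) 0).indicator (fun _ => B)) volume :=
    (integrable_indicator_iff measurableSet_Icc).2 (integrableOn_const (by simp) (by simp))
  have hfin := norm_integral_le_of_norm_le hci (Filter.Eventually.of_forall hb)
  rw [Real.norm_eq_abs] at hfin
  refine hfin.trans ?_
  rw [integral_indicator measurableSet_Icc, setIntegral_const]
  have hl : Real.log (h / X) ≤ 0 := Real.log_nonpos (by positivity) (by rw [div_le_one hX0]; nlinarith)
  rw [Real.volume_real_Icc_of_le hl, Real.log_div hh0.ne' hX0.ne', smul_eq_mul, mul_comm]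
  have : 0 ≤ Real.log h := Real.log_nonneg hh
  gcongr
  linarith


lemma C1_logint {L h K X : ℝ} (hh : 0 < h) (hK : 0 < K) (hKX : K ≤ X) :
    ∫ x in Set.Icc K X, (Real.log (x / h) + 1 - L) =
      X * (Real.log (X / h) - L) - K * (Real.log (K / h) - L) := by
  rw [integral_Icc_eq_integral_Ioc, ← intervalIntegral.integral_of_le hKX]
  have hpos : ∀ x ∈ Set.uIcc K X, 0 < x := by
    intro x hx; rw [Set.uIcc_of_le hKX] at hx; linarith [hx.1]
  refine intervalIntegral.integral_eq_sub_of_hasDerivAt (f := fun x => x * (Real.log (x / h) - L)) ?_ ?_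
  · intro x hx
    have h0 := hpos x hx
    have h1 := ((hasDerivAt_id x).div_const h).log (by simp only [id]; positivity)
    have h2 := (hasDerivAt_id x).mul (h1.sub_const L)
    refine h2.congr_deriv ?_
    simp only [id]
    field_simp
    ring
  · apply ContinuousOn.intervalIntegrable
    refine ContinuousOn.sub (ContinuousOn.add (ContinuousOn.log (by fun_prop) ?_) (by fun_prop)) (by fun_prop)
    intro x hx
    have h0 := hpos x hx
    positivity

lemma C1_bint {μ : Measure (ℝ × ℝ)} [IsFiniteMeasure μ] {S : Set (ℝ × ℝ)} (hS : ∀ᵐ p ∂μ, p ∈ S)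
    {f : ℝ × ℝ → ℝ} (hf : Measurable f) (M : ℝ) (hM : ∀ p ∈ S, |f p| ≤ M) : Integrable f μ :=
  Integrable.of_bound hf.aestronglyMeasurable M (hS.mono fun p hp => hM p hp)

lemma C1_P_mem (K X η : ℝ) : ∀ᵐ p ∂((volume.restrict (Set.Icc K X)).prod (volume.restrict (Set.Icc 0 η))),
    p ∈ Set.Icc K X ×ˢ Set.Icc 0 η := by
  rw [Measure.prod_restrict]
  exact ae_restrict_mem (measurableSet_Icc.prod measurableSet_Icc)

lemma C1_P_univ {K X η : ℝ} (hKX : K ≤ X) (hη : 0 ≤ η) :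
    ((volume.restrict (Set.Icc K X)).prod (volume.restrict (Set.Icc 0 η))).real Set.univ = (X - K) * η := by
  rw [← Set.univ_prod_univ, measureReal_prod_prod]
  simp [Real.volume_real_Icc_of_le hKX, Real.volume_real_Icc_of_le hη]

lemma C1_T_pt {ℓ u : ℝ} (hu : 0 ≤ u) (hu1 : u ≤ 1) :
    |Real.exp u * (ℓ - u) - ℓ| ≤ u * (2 * |ℓ| + 3) := by
  have e2 := Real.abs_exp_sub_one_sub_id_le (x := u) (by rw [abs_of_nonneg hu]; linarith)
  have e3 := (abs_le.1 e2).2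
  have e4 : Real.exp u - 1 ≤ 2 * u := by nlinarith
  have e5 : 1 ≤ Real.exp u := Real.one_le_exp hu
  have : Real.exp u * (ℓ - u) - ℓ = (Real.exp u - 1) * ℓ - u * Real.exp u := by ring
  rw [this]
  refine (abs_sub _ _).trans ?_
  rw [abs_mul, abs_mul, abs_of_nonneg hu, abs_of_nonneg (by linarith : 0 ≤ Real.exp u - 1), abs_of_pos (Real.exp_pos u)]
  have := abs_nonneg ℓ
  nlinarith

lemma C1_T {L h K X η : ℝ} (hh : 1 ≤ h) (hK : h ≤ K) (hKX : K ≤ X) (hη : 0 ≤ η) (hη1 : η ≤ 1)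
    (hint : Integrable (fun p : ℝ × ℝ => h * Real.exp p.2 * (Real.log (p.1 / (h * Real.exp p.2)) + 1 - L))
      ((volume.restrict (Set.Icc K X)).prod (volume.restrict (Set.Icc 0 η)))) :
    |(∫ p : ℝ × ℝ, h * Real.exp p.2 * (Real.log (p.1 / (h * Real.exp p.2)) + 1 - L)
      ∂((volume.restrict (Set.Icc K X)).prod (volume.restrict (Set.Icc 0 η)))) - η * (h * X * (Real.log (X / h) - L))|
      ≤ (η ^ 2 * h * X * 5 + η * h * K) * (Real.log X + 1 + |L|) := by
  set P := (volume.restrict (Set.Icc K X)).prod (volume.restrict (Set.Icc 0 η)) with hP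
  have hh0 : 0 < h := by linarith
  have hK0 : 0 < K := by linarith
  have hX0 : 0 < X := by linarith
  have hlb : ∀ x, K ≤ x → x ≤ X → 0 ≤ Real.log (x / h) ∧ Real.log (x / h) ≤ Real.log X := by
    intro x h1 h2
    have hx0 : 0 < x := by linarith
    exact ⟨Real.log_nonneg (by rw [le_div_iff₀ hh0]; linarith),
      Real.log_le_log (by positivity) ((div_le_self hx0.le hh).trans h2)⟩
  have hL0 := abs_nonneg L
  have hlX : 0 ≤ Real.log X := (hlb X hKX le_rfl).1.trans (hlb X hKX le_rfl).2
  set Λ := Real.log X + 1 + |L| with hΛ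
  have hΛ1 : 1 ≤ Λ := by rw [hΛ]; linarith
  have hlb2 : ∀ x, K ≤ x → x ≤ X → |Real.log (x / h) + 1 - L| ≤ Λ := by
    intro x h1 h2
    obtain ⟨a, b⟩ := hlb x h1 h2
    refine (abs_sub _ _).trans ?_
    rw [abs_of_nonneg (by linarith)]; linarith
  have hm : Measurable fun p : ℝ × ℝ => h * (Real.log (p.1 / h) + 1 - L) := by fun_prop
  have hint2 : Integrable (fun p : ℝ × ℝ => h * (Real.log (p.1 / h) + 1 - L)) P := by
    refine C1_bint (C1_P_mem K X η) hm (h * Λ) ?_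
    rintro ⟨x, u⟩ ⟨⟨h1, h2⟩, -⟩
    rw [abs_mul, abs_of_pos hh0]
    gcongr
    exact hlb2 x h1 h2
  have e1 : ∫ p : ℝ × ℝ, h * (Real.log (p.1 / h) + 1 - L) ∂P = η * (h * (X * (Real.log (X / h) - L) - K * (Real.log (K / h) - L))) := by
    rw [hP, integral_prod _ hint2]
    simp only [integral_const, measureReal_restrict_apply_univ, Real.volume_real_Icc_of_le hη, smul_eq_mul, sub_zero]
    rw [integral_const_mul, integral_const_mul, C1_logint hh0 hK0 hKX]
  have e2 : |(∫ p : ℝ × ℝ, h * Real.exp p.2 * (Real.log (p.1 / (h * Real.exp p.2)) + 1 - L) ∂P)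
      - ∫ p : ℝ × ℝ, h * (Real.log (p.1 / h) + 1 - L) ∂P| ≤ (h * (η * (5 * Λ))) * ((X - K) * η) := by
    rw [← integral_sub hint hint2, ← Real.norm_eq_abs, ← C1_P_univ hKX hη]
    refine norm_integral_le_of_norm_le_const ((C1_P_mem K X η).mono ?_)
    rintro ⟨x, u⟩ ⟨⟨h1, h2⟩, h3, h4⟩
    simp only at h1 h2 h3 h4 ⊢
    have hx0 : 0 < x := by linarith
    have e3 : Real.log (x / (h * Real.exp u)) = Real.log (x / h) - u := by
      rw [← div_div, Real.log_div (by positivity) (by positivity), Real.log_exp]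
    rw [Real.norm_eq_abs, e3, show h * Real.exp u * (Real.log (x / h) - u + 1 - L) - h * (Real.log (x / h) + 1 - L)
      = h * (Real.exp u * ((Real.log (x / h) + 1 - L) - u) - (Real.log (x / h) + 1 - L)) by ring, abs_mul, abs_of_pos hh0]
    gcongr
    refine (C1_T_pt h3 (by linarith)).trans ?_
    have := hlb2 x h1 h2
    gcongr
    linarith
  have e3 : |K * (Real.log (K / h) - L)| ≤ K * Λ := by
    rw [abs_mul, abs_of_pos hK0]
    gcongr
    obtain ⟨a, b⟩ := hlb K le_rfl hKX
    refine (abs_sub _ _).trans ?_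
    rw [abs_of_nonneg a]; linarith
  rw [e1] at e2
  have e4 : |η * (h * (X * (Real.log (X / h) - L) - K * (Real.log (K / h) - L))) - η * (h * X * (Real.log (X / h) - L))| ≤ η * h * (K * Λ) := by
    rw [show η * (h * (X * (Real.log (X / h) - L) - K * (Real.log (K / h) - L))) - η * (h * X * (Real.log (X / h) - L)) =
      -(η * h * (K * (Real.log (K / h) - L))) by ring, abs_neg, abs_mul, abs_of_nonneg (by positivity : 0 ≤ η * h)]
    gcongr
  refine (abs_sub_le _ _ _).trans ((add_le_add e2 e4).trans ?_)
  have : (h * (η * (5 * Λ))) * ((X - K) * η) ≤ (h * (η * (5 * Λ))) * (X * η) := by gcongr; linarith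
  nlinarith

lemma C1_cmp {x h u s : ℝ} (hs : 0 < s) :
    |C1E x h - C1E x (h * Real.exp u)| ≤ (1 + 1 / s) * C1E (x + h) (h * (Real.exp u - 1)) + s * C1E x (h * Real.exp u) := by
  unfold C1E
  rw [show x + h + h * (Real.exp u - 1) = x + h * Real.exp u by ring]
  set a := C1R (x + h * Real.exp u) - C1R x with ha
  set b := C1R (x + h) - C1R x with hb
  have hd : C1R (x + h * Real.exp u) - C1R (x + h) = a - b := by rw [ha, hb]; ring
  rw [hd]
  have k : (1 + 1 / s) * (a - b) ^ 2 + s * a ^ 2 - 2 * |a * (a - b)| - (a - b) ^ 2 = (1 / s) * (|a - b| - s * |a|) ^ 2 := by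
    rw [abs_mul, ← sq_abs (a - b), ← sq_abs a]; field_simp; ring
  have k2 : 0 ≤ (1 / s) * (|a - b| - s * |a|) ^ 2 := by positivity
  have k3 : b ^ 2 - a ^ 2 = (a - b) ^ 2 - 2 * (a * (a - b)) := by ring
  rw [k3, abs_le]
  have k4 := neg_abs_le (a * (a - b))
  have k5 := le_abs_self (a * (a - b))
  have := sq_nonneg (a - b)
  constructor <;> linarith


lemma C1_core1 {L c D' h K X η s Nb : ℝ} (hc : 0 < c) (hD : 0 ≤ D') (hh : 1 ≤ h) (hK : Real.exp 1 * h ≤ K)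
    (hKX : K ≤ X) (hη : 0 < η) (hη1 : η ≤ 1) (hs : 0 < s) (hNb : 0 ≤ Nb)
    (hN : ∫⁻ x in Set.Ioo K X, ∫⁻ u in Set.Ioo 0 η, ENNReal.ofReal (C1E (x + h) (h * (Real.exp u - 1))) ≤ ENNReal.ofReal Nb)
    (hyp : ∀ x, K ≤ x → x ≤ X → ∀ δ, 0 < δ → h ≤ δ * x → δ * x ≤ h * Real.exp 1 →
      |zetaVarDelta x δ - 1 / 2 * δ * x ^ 2 * (Real.log (1 / δ) + 1 - L)| ≤ D' * δ ^ (1 + c) * x ^ 2) :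
    η * |(∫ x in Set.Icc K X, C1E x h) - h * X * (Real.log (X / h) - L)| ≤
      (1 + 1 / s) * Nb + (1 + s) * (2 * D' * (Real.exp 1) ^ 2 * (h ^ 2 + h * X * (h / X) ^ c) * Real.log X
       + (η ^ 2 * h * X * 5 + η * h * K) * (Real.log X + 1 + |L|)) + s * (η * h * X * (Real.log X + 1 + |L|)) := by
  have he : 1 < Real.exp 1 := Real.one_lt_exp_iff.2 one_pos
  have hh0 : 0 < h := by linarith
  have hhK : h ≤ K := by nlinarith
  have hX0 : 0 < X := by linarith
  set P := (volume.restrict (Set.Icc K X)).prod (volume.restrict (Set.Icc (0:ℝ) η)) with hP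
  set EM := 2 * D' * (Real.exp 1) ^ 2 * (h ^ 2 + h * X * (h / X) ^ c) * Real.log X with hEM
  set Λ := Real.log X + 1 + |L| with hΛ
  set ET := (η ^ 2 * h * X * 5 + η * h * K) * Λ with hET
  set m := h * X * (Real.log (X / h) - L) with hm
  have hmem := C1_P_mem K X η
  have hv : ∀ u, 0 ≤ u → u ≤ η → h ≤ h * Real.exp u ∧ h * Real.exp u ≤ h * Real.exp 1 := by
    intro u h1 h2
    exact ⟨le_mul_of_one_le_right hh0.le (Real.one_le_exp h1), by gcongr; linarith⟩
  have m0 : Measurable fun p : ℝ × ℝ => C1E p.1 h := (C1E_meas_y h).comp measurable_fst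
  have m1 : Measurable fun p : ℝ × ℝ => C1E p.1 (h * Real.exp p.2) :=
    C1E_meas.comp (f := fun p : ℝ × ℝ => (p.1, h * Real.exp p.2)) (by fun_prop)
  have m2 : Measurable fun p : ℝ × ℝ => C1E (p.1 + h) (h * (Real.exp p.2 - 1)) :=
    C1E_meas.comp (f := fun p : ℝ × ℝ => (p.1 + h, h * (Real.exp p.2 - 1))) (by fun_prop)
  have m3 : Measurable fun p : ℝ × ℝ => C1Psi L p.1 (h * Real.exp p.2) :=
    (C1Psi_meas L).comp (f := fun p : ℝ × ℝ => (p.1, h * Real.exp p.2)) (by fun_prop)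
  have i0 : Integrable (fun p : ℝ × ℝ => C1E p.1 h) P := by
    refine C1_bint hmem m0 ((12 * (X + h)) ^ 2) ?_
    rintro ⟨x, u⟩ ⟨⟨h1, h2⟩, h3, h4⟩
    rw [abs_of_nonneg (C1E_nonneg _ _)]
    exact C1E_bound (by simp only at h1; linarith) h2 hh0.le le_rfl
  have i1 : Integrable (fun p : ℝ × ℝ => C1E p.1 (h * Real.exp p.2)) P := by
    refine C1_bint hmem m1 ((12 * (X + h * Real.exp 1)) ^ 2) ?_
    rintro ⟨x, u⟩ ⟨⟨h1, h2⟩, h3, h4⟩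
    rw [abs_of_nonneg (C1E_nonneg _ _)]
    exact C1E_bound (by simp only at h1; linarith) h2 (by positivity) (hv u h3 h4).2
  have i2 : Integrable (fun p : ℝ × ℝ => C1E (p.1 + h) (h * (Real.exp p.2 - 1))) P := by
    refine C1_bint hmem m2 ((12 * ((X + h) + h * Real.exp 1)) ^ 2) ?_
    rintro ⟨x, u⟩ ⟨⟨h1, h2⟩, h3, h4⟩
    simp only at h1 h2 h3 h4 ⊢
    rw [abs_of_nonneg (C1E_nonneg _ _)]
    have := hv u h3 h4
    exact C1E_bound (by linarith) (by linarith) (by linarith) (by linarith)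
  have i3 : Integrable (fun p : ℝ × ℝ => C1Psi L p.1 (h * Real.exp p.2)) P := by
    refine C1_bint hmem m3 ((12 * (X + h * Real.exp 1)) ^ 2 + h * Real.exp 1 * (Real.log X + 1 + |L|)) ?_
    rintro ⟨x, u⟩ ⟨⟨h1, h2⟩, h3, h4⟩
    exact C1Psi_bound hh hK h1 h2 (hv u h3 h4).1 (hv u h3 h4).2
  have eT : (fun p : ℝ × ℝ => h * Real.exp p.2 * (Real.log (p.1 / (h * Real.exp p.2)) + 1 - L)) =
      fun p => C1E p.1 (h * Real.exp p.2) - C1Psi L p.1 (h * Real.exp p.2) := by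
    ext p; unfold C1Psi; ring
  have i4 := i1.sub i3
  have hTint : Integrable (fun p : ℝ × ℝ => h * Real.exp p.2 * (Real.log (p.1 / (h * Real.exp p.2)) + 1 - L)) P := by
    rw [eT]; exact i4
  have bT := C1_T hh hhK hKX hη.le hη1 hTint
  rw [← hP, eT, integral_sub i1 i3, ← hΛ, ← hET, ← hm] at bT
  have bM := C1_M (η := η) hc hD hh hK hKX hη.le hη1 hyp
  have eM : ∫ x in Set.Icc K X, ∫ u in Set.Icc 0 η, C1Psi L x (h * Real.exp u) = ∫ p : ℝ × ℝ, C1Psi L p.1 (h * Real.exp p.2) ∂P := by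
    rw [hP, integral_prod _ i3]
  rw [eM, ← hEM] at bM
  have e0 : ∫ p : ℝ × ℝ, C1E p.1 h ∂P = η * ∫ x in Set.Icc K X, C1E x h := by
    rw [hP, integral_prod _ i0]
    simp only [integral_const, measureReal_restrict_apply_univ, Real.volume_real_Icc_of_le hη.le, smul_eq_mul, sub_zero]
    rw [integral_const_mul]
  have eN : ∫ p : ℝ × ℝ, C1E (p.1 + h) (h * (Real.exp p.2 - 1)) ∂P ≤ Nb := by
    rw [← ENNReal.ofReal_le_ofReal_iff hNb,
      ofReal_integral_eq_lintegral_ofReal i2 (Filter.Eventually.of_forall fun p => C1E_nonneg _ _), hP,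
      lintegral_prod _ m2.ennreal_ofReal.aemeasurable]
    rw [Measure.restrict_congr_set (Ioo_ae_eq_Icc (a := K) (b := X)).symm, Measure.restrict_congr_set (Ioo_ae_eq_Icc (a := 0) (b := η)).symm]
    exact hN
  set N := ∫ p : ℝ × ℝ, C1E (p.1 + h) (h * (Real.exp p.2 - 1)) ∂P with hNdef
  set J := ∫ p : ℝ × ℝ, C1E p.1 (h * Real.exp p.2) ∂P with hJ
  set Q := ∫ p : ℝ × ℝ, C1Psi L p.1 (h * Real.exp p.2) ∂P with hQ
  have bJ : |J - η * m| ≤ EM + ET := by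
    have : J - η * m = Q + (J - Q - η * m) := by ring
    rw [this]
    exact (abs_add_le _ _).trans (add_le_add bM bT)
  have bm : η * m ≤ η * h * X * Λ := by
    rw [hm, ← mul_assoc, ← mul_assoc]
    gcongr
    have := Real.log_le_log (by positivity) (div_le_self hX0.le hh)
    have := neg_abs_le L
    linarith
  have hJle : J ≤ EM + ET + η * h * X * Λ := by linarith [(abs_le.1 bJ).2]
  have bC : |(∫ p : ℝ × ℝ, C1E p.1 h ∂P) - J| ≤ (1 + 1 / s) * N + s * J := by
    rw [hJ, ← integral_sub i0 i1, hNdef, ← integral_const_mul, ← integral_const_mul, ← integral_add (i2.const_mul _) (i1.const_mul _)]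
    rw [← Real.norm_eq_abs]
    refine (norm_integral_le_of_norm_le ((i2.const_mul _).add (i1.const_mul _)) (Filter.Eventually.of_forall fun p => ?_))
    exact C1_cmp hs
  rw [e0] at bC
  have e5 : η * |(∫ x in Set.Icc K X, C1E x h) - m| = |(η * (∫ x in Set.Icc K X, C1E x h) - J) + (J - η * m)| := by
    rw [← abs_of_pos hη, ← abs_mul, abs_of_pos hη]; congr 1; ring
  rw [e5]
  refine (abs_add_le _ _).trans ((add_le_add bC bJ).trans ?_)
  have k1 : (1 + 1 / s) * N ≤ (1 + 1 / s) * Nb := by gcongr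
  have k2 : s * J ≤ s * (EM + ET + η * h * X * Λ) := by gcongr
  linarith


set_option maxHeartbeats 1000000 in
lemma C1_core (hRH : RiemannHypothesis) {ε : ℝ} (hε : 0 < ε) (hε1 : ε < 1) (L : ℝ) {c D' κ : ℝ}
    (hc : 0 < c) (hD : 0 ≤ D') (hκ : 1 ≤ κ) :
    ∃ C : ℝ, 0 < C ∧ ∀ h K X s : ℝ, 1 ≤ h → Real.exp 1 * h ≤ K → K ≤ X → 0 < s → s ≤ 1 →
      (h / X) ^ c ≤ s ^ 3 → K ≤ κ * s ^ 3 * X → 1 / X ≤ s ^ 3 →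
      (∀ x, K ≤ x → x ≤ X → ∀ δ, 0 < δ → h ≤ δ * x → δ * x ≤ h * Real.exp 1 →
      |zetaVarDelta x δ - 1 / 2 * δ * x ^ 2 * (Real.log (1 / δ) + 1 - L)| ≤ D' * δ ^ (1 + c) * x ^ 2) →
      |zetaVarH X h - h * X * (Real.log (X / h) - L)| ≤ C * (h * X ^ (1 + 4 * ε) * s) := by
  obtain ⟨CN, hCN, hN⟩ := C1_N hRH hε hε1
  obtain ⟨Cl, hCl, hlow⟩ := C1_low hRH hε hε1
  set CΛ := 1 / ε + 1 + |L| with hCΛ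
  have hCΛ0 : 0 < CΛ := by positivity
  set A := 2 * D' * (Real.exp 1) ^ 2 * (κ + 1) + (5 + κ) with hA
  have hA0 : 0 ≤ A := by positivity
  refine ⟨Cl * κ + (2 * CN + (2 * A + 1) * CΛ), by positivity, ?_⟩
  intro h K X s hh hK hKX hs hs1 hcs hKs hXs hyp
  have he : 1 < Real.exp 1 := Real.one_lt_exp_iff.2 one_pos
  have hh0 : 0 < h := by linarith
  have hhK : h ≤ K := by nlinarith
  have hX1 : 1 ≤ X := by linarith
  have hX0 : 0 < X := by linarith
  have hK0 : 0 < K := by linarith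
  set W := h * X ^ (1 + 4 * ε) with hW
  have hW0 : 0 < W := by positivity
  set Λ := Real.log X + 1 + |L| with hΛ
  have hlX : 0 ≤ Real.log X := Real.log_nonneg hX1
  have hΛle : Λ ≤ CΛ * X ^ ε := by
    have a1 := Real.log_le_rpow_div hX0.le hε
    have a2 : 1 ≤ X ^ ε := Real.one_le_rpow hX1 hε.le
    have a3 := abs_nonneg L
    have a4 : CΛ * X ^ ε = X ^ ε / ε + X ^ ε + |L| * X ^ ε := by rw [hCΛ]; ring
    rw [a4, hΛ]
    nlinarith
  have hΛ0 : 0 ≤ Λ := by positivity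
  have hΛW : h * X * Λ ≤ CΛ * W := by
    calc h * X * Λ ≤ h * X * (CΛ * X ^ ε) := by gcongr
      _ = CΛ * (h * X ^ (1 + ε)) := by rw [Real.rpow_add hX0, Real.rpow_one]; ring
      _ ≤ _ := by rw [hW]; gcongr; linarith
  have hη : 0 < s ^ 2 := by positivity
  have hη1 : s ^ 2 ≤ 1 := pow_le_one₀ hs.le hs1
  set Nb := CN * X ^ (1 + 3 * ε) * (s ^ 2) ^ (2 - ε) * h with hNb
  have hNb0 : 0 ≤ Nb := by positivity
  have core := C1_core1 hc hD hh hK hKX hη hη1 hs hNb0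
    (hN h K X (s ^ 2) hh (by linarith) (by linarith) hη hη1) hyp
  rw [← hΛ] at core
  have bN : (1 + 1 / s) * Nb ≤ 2 * CN * W * s ^ 3 := by
    have t1 : (s ^ 2) ^ (2 - ε) ≤ s ^ 4 * X ^ ε := by
      have u1 : (s ^ 2) ^ (2 - ε) = s ^ 4 * s ^ (-(2 * ε)) := by
        rw [← Real.rpow_natCast, ← Real.rpow_natCast, ← Real.rpow_mul hs.le, ← Real.rpow_add hs]
        congr 1; push_cast; ring
      have u2 : s ^ (-(2 * ε)) ≤ s ^ (-(3 * ε)) := Real.rpow_le_rpow_of_exponent_ge hs hs1 (by linarith)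
      have u3 : s ^ (-(3 * ε)) = (s ^ 3) ^ (-ε) := by
        rw [← Real.rpow_natCast, ← Real.rpow_mul hs.le]; congr 1; push_cast; ring
      have u4 : (s ^ 3) ^ (-ε) ≤ (1 / X) ^ (-ε) := Real.rpow_le_rpow_of_nonpos (by positivity) hXs (by linarith)
      have u5 : (1 / X) ^ (-ε) = X ^ ε := by
        rw [one_div, Real.inv_rpow hX0.le, Real.rpow_neg hX0.le, inv_inv]
      rw [u1]
      gcongr
      linarith
    have t2 : 1 + 1 / s ≤ 2 / s := by
      rw [show (2:ℝ) / s = 1 / s + 1 / s by ring]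
      have : 1 ≤ 1 / s := by rw [le_div_iff₀ hs]; linarith
      linarith
    calc (1 + 1 / s) * Nb ≤ (2 / s) * (CN * X ^ (1 + 3 * ε) * (s ^ 4 * X ^ ε) * h) := by rw [hNb]; gcongr
      _ = 2 * CN * (h * (X ^ (1 + 3 * ε) * X ^ ε)) * s ^ 3 := by field_simp
      _ = _ := by rw [← Real.rpow_add hX0, hW]; rw [show 1 + 3 * ε + ε = 1 + 4 * ε by ring]
  have hhX : h ≤ κ * s ^ 3 * X := hhK.trans hKs
  have bM : 2 * D' * (Real.exp 1) ^ 2 * (h ^ 2 + h * X * (h / X) ^ c) * Real.log X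
       ≤ 2 * D' * (Real.exp 1) ^ 2 * (κ + 1) * (s ^ 3 * (h * X * Λ)) := by
    have v1 : h ^ 2 + h * X * (h / X) ^ c ≤ (κ + 1) * (s ^ 3 * (h * X)) := by
      have w1 : h * X * (h / X) ^ c ≤ h * X * s ^ 3 := by gcongr
      have w2 := mul_le_mul_of_nonneg_left hhX hh0.le
      nlinarith
    have v2 : Real.log X ≤ Λ := by have := abs_nonneg L; rw [hΛ]; linarith
    calc _ ≤ 2 * D' * (Real.exp 1) ^ 2 * ((κ + 1) * (s ^ 3 * (h * X))) * Λ := by gcongr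
      _ = _ := by ring
  have bT : ((s ^ 2) ^ 2 * h * X * 5 + s ^ 2 * h * K) * Λ ≤ (5 + κ) * (s ^ 3 * (h * X * Λ)) := by
    have v1 : (s ^ 2) ^ 2 ≤ s ^ 3 := by rw [← pow_mul]; exact pow_le_pow_of_le_one hs.le hs1 (by norm_num)
    have v2 : s ^ 2 * h * K ≤ 1 * h * (κ * s ^ 3 * X) := by gcongr
    calc _ ≤ (s ^ 3 * h * X * 5 + 1 * h * (κ * s ^ 3 * X)) * Λ := by gcongr
      _ = _ := by ring
  have bJ : s * (s ^ 2 * h * X * Λ) = s ^ 3 * (h * X * Λ) := by ring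
  have hY0 : 0 ≤ s ^ 3 * (h * X * Λ) := by positivity
  have bE : 2 * D' * (Real.exp 1) ^ 2 * (h ^ 2 + h * X * (h / X) ^ c) * Real.log X
      + ((s ^ 2) ^ 2 * h * X * 5 + s ^ 2 * h * K) * Λ ≤ A * (s ^ 3 * (h * X * Λ)) := by
    rw [hA, add_mul]; linarith
  have bE2 : (1 + s) * (2 * D' * (Real.exp 1) ^ 2 * (h ^ 2 + h * X * (h / X) ^ c) * Real.log X
      + ((s ^ 2) ^ 2 * h * X * 5 + s ^ 2 * h * K) * Λ) ≤ 2 * (A * (s ^ 3 * (h * X * Λ))) := by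
    refine mul_le_mul (by linarith) bE (by positivity) (by norm_num)
  have tot : s ^ 2 * |(∫ x in Set.Icc K X, C1E x h) - h * X * (Real.log (X / h) - L)| ≤
      s ^ 2 * ((2 * CN + (2 * A + 1) * CΛ) * (W * s)) := by
    have k1 : (2 * A + 1) * (s ^ 3 * (h * X * Λ)) ≤ (2 * A + 1) * (s ^ 3 * (CΛ * W)) := by gcongr
    rw [bJ] at core
    calc _ ≤ _ := core
      _ ≤ 2 * CN * W * s ^ 3 + (2 * A + 1) * (s ^ 3 * (CΛ * W)) := by linarith
      _ = _ := by ring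
  have tot2 := le_of_mul_le_mul_left tot hη
  have bl : |∫ x in (1:ℝ)..K, C1E x h| ≤ Cl * κ * (W * s) := by
    rw [abs_of_nonneg (intervalIntegral.integral_nonneg (by linarith) fun x _ => C1E_nonneg _ _)]
    refine (hlow h K hh hhK).trans ?_
    have w1 : K ^ (1 + 3 * ε) ≤ κ * s * X ^ (1 + 4 * ε) := by
      calc K ^ (1 + 3 * ε) = K * K ^ (3 * ε) := by rw [Real.rpow_add hK0, Real.rpow_one]
        _ ≤ (κ * s ^ 3 * X) * X ^ (4 * ε) := by
          gcongr
          exact (Real.rpow_le_rpow hK0.le hKX (by positivity)).trans (Real.rpow_le_rpow_of_exponent_le hX1 (by linarith))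
        _ ≤ (κ * s * X) * X ^ (4 * ε) := by
          gcongr
          exact pow_le_of_le_one hs.le hs1 (by norm_num)
        _ = _ := by rw [Real.rpow_add hX0, Real.rpow_one]; ring
    calc Cl * K ^ (1 + 3 * ε) * h ≤ Cl * (κ * s * X ^ (1 + 4 * ε)) * h := by gcongr
      _ = _ := by rw [hW]; ring
  have hsplit : zetaVarH X h = (∫ x in (1:ℝ)..K, C1E x h) + ∫ x in Set.Icc K X, C1E x h := by
    have ii : ∀ a b, 0 ≤ a → a ≤ b → IntervalIntegrable (fun x => C1E x h) volume a b := by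
      intro a b ha hab
      rw [intervalIntegrable_iff_integrableOn_Ioo_of_le hab]
      exact C1E_intervalIntegrable a ha hh0.le hab
    rw [C1VH_eq, integral_Icc_eq_integral_Ioc, ← intervalIntegral.integral_of_le hKX,
      intervalIntegral.integral_add_adjacent_intervals (ii _ _ zero_le_one (by linarith)) (ii _ _ hK0.le hKX)]
  rw [hsplit, add_sub_assoc, add_mul]
  exact (abs_add_le _ _).trans (add_le_add bl tot2)


/-- **Theorem C1 for the Riemann zeta function.** An asymptotic for `V(X,δ)` with power
saving implies an asymptotic for `Ṽ(X,h)`. -/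
theorem theoremC1_zeta (hRH : RiemannHypothesis)
    (B₁ B₂ B₃ c : ℝ) (hB₁ : 0 < B₁) (hB₁₂ : B₁ < B₂) (hB₂₃ : B₂ ≤ B₃) (hB₃ : B₃ < 1)
    (hc : 0 < c) (D X₀ : ℝ)
    (hV : ∀ X : ℝ, X₀ ≤ X → ∀ δ : ℝ, X ^ (-B₃) ≤ δ → δ ≤ X ^ (-B₁) →
      |zetaVarDelta X δ - 1 / 2 * δ * X ^ 2 *
          (Real.log (1 / δ) + 1 - Real.eulerMascheroniConstant - Real.log (2 * π))|
        ≤ D * δ ^ (1 + c) * X ^ 2) :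
    ∀ ε : ℝ, 0 < ε → ∃ C : ℝ, 0 < C ∧ ∃ X₁ : ℝ, ∀ X : ℝ, X₁ ≤ X →
      ∀ h : ℝ, X ^ (1 - B₃) ≤ h → h ≤ X ^ (1 - B₂) →
        |zetaVarH X h - h * X *
            (Real.log (X / h) - Real.eulerMascheroniConstant - Real.log (2 * π))|
          ≤ C * (h * X ^ (1 + ε) * (h / X) ^ (c / 3) +
              h * X ^ (1 + ε) * (h * X ^ (-(1 - B₁))) ^ (1 / (3 * (1 - B₁)))) := by
  intro ε hε
  set L := Real.eulerMascheroniConstant + Real.log (2 * π) with hL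
  set ε' := min ε 1 / 4 with hε'
  have hε'0 : 0 < ε' := by positivity
  have hε'1 : ε' < 1 := by have := min_le_right ε 1; rw [hε']; linarith
  have hε'4 : 4 * ε' ≤ ε := by have := min_le_left ε 1; rw [hε']; linarith
  set p := 1 - B₁ with hp
  have hp0 : 0 < p := by rw [hp]; linarith
  have hp1 : p < 1 := by rw [hp]; linarith
  have he : 1 < Real.exp 1 := Real.one_lt_exp_iff.2 one_pos
  have he0 : 0 < Real.exp 1 := Real.exp_pos 1
  have hq1 : 1 ≤ 1 / p := by rw [le_div_iff₀ hp0]; linarith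
  have hq0 : 0 < 1 / p := by positivity
  set κ := Real.exp 1 ^ (1 / p) with hκ
  have hκ1 : 1 ≤ κ := Real.one_le_rpow he.le hq0.le
  obtain ⟨C, hC, hcore⟩ := C1_core hRH hε'0 hε'1 L hc (abs_nonneg D) hκ1
  refine ⟨C, hC, ?_⟩
  have l1 : ∀ᶠ X : ℝ in Filter.atTop, max 1 X₀ ≤ X ^ (1 - B₃) :=
    (tendsto_rpow_atTop (by linarith)).eventually_ge_atTop _
  have l2 : ∀ᶠ X : ℝ in Filter.atTop, Real.exp 1 ≤ X ^ (B₂ - B₁) :=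
    (tendsto_rpow_atTop (by linarith)).eventually_ge_atTop _
  obtain ⟨X₁, hX₁⟩ := Filter.eventually_atTop.1 ((l1.and l2).and (Filter.eventually_ge_atTop 1))
  refine ⟨X₁, fun X hX h hh1 hh2 => ?_⟩
  obtain ⟨⟨g1, g2⟩, hX1⟩ := hX₁ X hX
  have hX0 : 0 < X := by linarith
  have hh : 1 ≤ h := (le_max_left _ _).trans (g1.trans hh1)
  have hhX₀ : X₀ ≤ h := (le_max_right _ _).trans (g1.trans hh1)
  have hh0 : 0 < h := by linarith
  set K := (Real.exp 1 * h) ^ (1 / p) with hK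
  have hKh : Real.exp 1 * h ≤ K := Real.self_le_rpow_of_one_le (by nlinarith) hq1
  have hehX : Real.exp 1 * h ≤ X ^ p := by
    calc Real.exp 1 * h ≤ X ^ (B₂ - B₁) * X ^ (1 - B₂) := by gcongr
      _ = X ^ p := by rw [← Real.rpow_add hX0]; congr 1; rw [hp]; ring
  have hKX : K ≤ X := by
    calc K ≤ (X ^ p) ^ (1 / p) := Real.rpow_le_rpow (by positivity) hehX hq0.le
      _ = X := by rw [← Real.rpow_mul hX0.le, mul_one_div_cancel hp0.ne', Real.rpow_one]
  have hK0 : 0 < K := by positivity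
  have hhX : h ≤ X := by nlinarith
  set X' := h ^ (1 / p) with hX'
  have hX'0 : 0 < X' := by positivity
  have hKκ : K = κ * X' := by rw [hK, Real.mul_rpow he0.le hh0.le]
  have hX'1 : 1 ≤ X' := Real.one_le_rpow hh hq0.le
  have hX'X : X' ≤ X := by nlinarith
  set t1 := (h / X) ^ (c / 3) with ht1
  set t2 := (h * X ^ (-p)) ^ (1 / (3 * p)) with ht2
  have ht1p : 0 < t1 := by positivity
  have ht2p : 0 < t2 := by positivity
  have c1 : t1 ^ 3 = (h / X) ^ c := by
    rw [ht1, ← Real.rpow_natCast, ← Real.rpow_mul (by positivity)]; congr 1; push_cast; ring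
  have c2 : t2 ^ 3 = X' / X := by
    rw [ht2, ← Real.rpow_natCast, ← Real.rpow_mul (by positivity),
      show 1 / (3 * p) * ((3 : ℕ) : ℝ) = 1 / p by push_cast; field_simp,
      Real.mul_rpow hh0.le (by positivity), ← Real.rpow_mul hX0.le,
      show -p * (1 / p) = -1 by field_simp, Real.rpow_neg_one]
    rfl
  have d1 : t1 ≤ 1 := Real.rpow_le_one (by positivity) (by rw [div_le_one hX0]; exact hhX) (by positivity)
  have d2 : t2 ≤ 1 := by
    have : t2 ^ 3 ≤ 1 := by rw [c2, div_le_one hX0]; exact hX'X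
    by_contra hcon
    push Not at hcon
    have := one_lt_pow₀ hcon (n := 3) (by norm_num)
    linarith
  set s := max t1 t2 with hs
  have s1 : t1 ^ 3 ≤ s ^ 3 := pow_le_pow_left₀ ht1p.le (le_max_left _ _) 3
  have s2 : t2 ^ 3 ≤ s ^ 3 := pow_le_pow_left₀ ht2p.le (le_max_right _ _) 3
  rw [c1] at s1
  rw [c2] at s2
  have hfin := hcore h K X s hh hKh hKX (ht1p.trans_le (le_max_left _ _)) (max_le d1 d2) s1
    (by
      rw [div_le_iff₀ hX0] at s2
      rw [hKκ, mul_assoc]; gcongr)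
    ((div_le_div_of_nonneg_right hX'1 hX0.le).trans s2)
    (by
      intro x hx1 hx2 δ hδ hd1 hd2
      have hx0 : 0 < x := by linarith
      have hxX₀ : X₀ ≤ x := by nlinarith
      have y1 : x ^ (-B₃) ≤ δ := by
        have z1 : x ^ (1 - B₃) ≤ δ * x :=
          (Real.rpow_le_rpow hx0.le hx2 (by linarith)).trans (hh1.trans hd1)
        have z2 : x ^ (-B₃) = x ^ (1 - B₃) / x := by
          rw [← Real.rpow_sub_one hx0.ne']; congr 1; ring
        rw [z2, div_le_iff₀ hx0]; exact z1
      have y2 : δ ≤ x ^ (-B₁) := by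
        have z1 : Real.exp 1 * h ≤ x ^ p := by
          calc Real.exp 1 * h = K ^ p := by
                rw [hK, ← Real.rpow_mul (by positivity), one_div_mul_cancel hp0.ne', Real.rpow_one]
            _ ≤ x ^ p := Real.rpow_le_rpow hK0.le hx1 hp0.le
        have z2 : x ^ (-B₁) = x ^ p / x := by
          rw [← Real.rpow_sub_one hx0.ne']; congr 1; rw [hp]; ring
        rw [z2, le_div_iff₀ hx0]; linarith
      have := hV x hxX₀ δ y1 y2
      rw [hL, ← sub_sub]
      refine this.trans ?_
      gcongr
      exact le_abs_self D)
  rw [hL, ← sub_sub] at hfin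
  refine hfin.trans ?_
  have f1 : s ≤ t1 + t2 := max_le (by linarith) (by linarith)
  have f2 : X ^ (1 + 4 * ε') ≤ X ^ (1 + ε) := Real.rpow_le_rpow_of_exponent_le hX1 (by linarith)
  have f3 : 0 ≤ s := ht1p.le.trans (le_max_left _ _)
  rw [← mul_add]
  gcongr
end
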